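/- Suppose α = 3/2 (so that β ∈ [3/4,1)). Then there exists a constant C > 0, depending only on φ, ψ, β, λ, a, b and x (but not on n or d), such that for all integers n ≥ 1 and d ≥ 3, d_W(W̃_{n,⌊dx⌋}, Z̃_n) ≤ C n^{3/2} / ln d. -/

import Mathlib

/-!
The Wishart matrix `c (Y Yᵀ - |κ| I)` is quadratic in a Gaussian vector, so Gaussian integration by
parts gives it an explicit Stein kernel: the random matrix `B = c² r⁻¹ (I ⊗ Y δ Yᵀ)` times the
covariance of the GOE matrix `Z`. Interpolating along the rotations `sin θ • X + cos θ • Z` bounds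
the Wasserstein distance by `π / 2` times the mean norm of `(B - I) Z`, and Wick's formula expresses
the second moment of that norm through `tr δ²` and `tr δ⁴` alone.

At the critical exponent `α = 3/2` the correlations satisfy `δ_{kl} ≈ (3/8) |k - l|^(-1/2)`, whose
squares form a harmonic series. Hence `tr δ² = 2 (3/8)² D log D + O(D)`, which fixes the limiting
variance, whereas bounding cycles of length four by paths gives `tr δ⁴ = O(D²)`. After division by
`d log d` both errors are of relative order `1 / log d`.
-/

open MeasureTheory ProbabilityTheory Filter

noncomputable section

/-- Hypotheses (H.1) and (H.2) on the pair `(φ, ψ)`, together with the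
parameter constraints `β ∈ (0,1)`, `λ > 0`, `α ∈ (0, 2β]`, `ν ∈ (1,2]`. -/
def SelfSimilarHyp (β lam α ν : ℝ) (φ ψ : ℝ → ℝ) : Prop :=
  β ∈ Set.Ioo (0 : ℝ) 1 ∧ 0 < lam ∧ α ∈ Set.Ioc (0 : ℝ) (2 * β) ∧
  ν ∈ Set.Ioc (1 : ℝ) 2 ∧
  -- (H.1): φ(y) = −λ(y−1)^α + ψ(y) on [1,∞)
  (∀ y : ℝ, 1 ≤ y → φ y = -lam * (y - 1) ^ α + ψ y) ∧
  -- ψ is twice differentiable on an open set containing [1,∞)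
  (∃ S : Set ℝ, IsOpen S ∧ Set.Ici (1 : ℝ) ⊆ S ∧
    ∀ y ∈ S, DifferentiableAt ℝ ψ y ∧ DifferentiableAt ℝ (deriv ψ) y) ∧
  -- bounds (a), (b) on ψ', ψ''
  (∃ C₀ : ℝ, 0 ≤ C₀ ∧
    (∀ y : ℝ, 1 < y → |deriv ψ y| ≤ C₀ * y ^ (α - 1)) ∧
    (∀ y : ℝ, 1 < y → |deriv (deriv ψ) y| ≤ C₀ * y⁻¹ * (y - 1) ^ (α - 1))) ∧
  -- (c): ψ'(1) = βψ(1) when α ≥ 1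
  (1 ≤ α → deriv ψ 1 = β * ψ 1) ∧
  -- (H.2): bounds (d), (e) on φ', φ'' for y ≥ 2
  (∃ C₁ : ℝ, 0 < C₁ ∧ ∀ y : ℝ, 2 ≤ y →
    ((α < 1 → |deriv φ y| ≤ C₁ * (y - 1) ^ (-ν) ∧
        |deriv (deriv φ) y| ≤ C₁ * (y - 1) ^ (-ν - 1)) ∧
     (1 ≤ α → |deriv φ y| ≤ C₁ * (y - 1) ^ (α - 2) ∧
        |deriv (deriv φ) y| ≤ C₁ * (y - 1) ^ (α - 3))))

/-- The covariance function `R(s,t) = (s∧t)^{2β} φ((s∨t)/(s∧t))` for `s,t > 0`,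
and `R(s,t) = 0` if `s = 0` or `t = 0`. -/
def covR (β : ℝ) (φ : ℝ → ℝ) (s t : ℝ) : ℝ :=
  if s = 0 ∨ t = 0 then 0 else (min s t) ^ (2 * β) * φ (max s t / min s t)

/-- `Δ(k,l) = R(k+1,l+1) − R(k,l+1) − R(k+1,l) + R(k,l)`. -/
def covΔ (β : ℝ) (φ : ℝ → ℝ) (k l : ℕ) : ℝ :=
  covR β φ (k + 1) (l + 1) - covR β φ k (l + 1) - covR β φ (k + 1) l + covR β φ k l

/-- `δ_{kl} = Δ(k,l)/√(Δ(k,k)Δ(l,l))`. -/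
def covδ (β : ℝ) (φ : ℝ → ℝ) (k l : ℕ) : ℝ :=
  covΔ β φ k l / Real.sqrt (covΔ β φ k k * covΔ β φ l l)

/-- For `m ∈ ℤ`, `a_α(m) = (1/2)(|m+1|^α + |m−1|^α − 2|m|^α)`. -/
def aFun (α : ℝ) (m : ℤ) : ℝ :=
  (|(m : ℝ) + 1| ^ α + |(m : ℝ) - 1| ^ α - 2 * |(m : ℝ)| ^ α) / 2

attribute [local instance] Matrix.frobeniusNormedAddCommGroup

/-- The Wasserstein distance between the laws of `U` (under `P₁`) and `V` (under `P₂`):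
the supremum of `|E[g(U)] − E[g(V)]|` over `1`-Lipschitz `g : E → ℝ`. -/
def wassersteinDist {Ω₁ Ω₂ : Type*} [MeasurableSpace Ω₁] [MeasurableSpace Ω₂]
    {E : Type*} [NormedAddCommGroup E]
    (P₁ : Measure Ω₁) (P₂ : Measure Ω₂) (U : Ω₁ → E) (V : Ω₂ → E) : ℝ :=
  sSup {r : ℝ | ∃ g : E → ℝ, LipschitzWith 1 g ∧
    r = |(∫ ω, g (U ω) ∂P₁) - (∫ ω, g (V ω) ∂P₂)|}

/-- A family of real random variables is centered jointly Gaussian if every finite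
real-linear combination of its members has a centered Gaussian law. -/
def IsCenteredGaussianFamily {Ω ι : Type*} [MeasurableSpace Ω] (P : Measure Ω)
    (X : ι → Ω → ℝ) : Prop :=
  ∀ (s : Finset ι) (c : ι → ℝ), ∃ v : NNReal,
    P.map (fun ω => ∑ i ∈ s, c i * X i ω) = gaussianReal 0 v

section GaussianIntegrationByParts

lemma hasDerivAt_gaussianPDFReal (m : ℝ) (v : NNReal) (x : ℝ) :
    HasDerivAt (gaussianPDFReal m v) (-((x - m) / v) * gaussianPDFReal m v x) x := by
  have hexponent : HasDerivAt (fun x : ℝ => -(x - m) ^ 2 / (2 * (v : ℝ))) (-((x - m) / v)) x := by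
    refine ((((hasDerivAt_id x).sub_const m).pow 2).neg.div_const (2 * (v : ℝ))).congr_deriv ?_
    simp only [id_eq, Nat.add_one_sub_one, pow_one, mul_one, Nat.cast_ofNat]
    ring
  rw [gaussianPDFReal_def]
  exact (hexponent.exp.const_mul (√(2 * Real.pi * v))⁻¹).congr_deriv (by ring)

lemma integrable_mul_gaussianPDFReal {m : ℝ} {v : NNReal} (hv : v ≠ 0) {f : ℝ → ℝ}
    (hf : Integrable f (gaussianReal m v)) : Integrable (fun x => f x * gaussianPDFReal m v x) := by
  rw [gaussianReal_of_var_ne_zero m hv, integrable_withDensity_iff (measurable_gaussianPDF m v)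
    (ae_of_all _ fun _ => gaussianPDF_lt_top)] at hf
  simpa only [toReal_gaussianPDF] using hf

lemma integral_id_mul_gaussianReal {v : NNReal} {f f' : ℝ → ℝ} (hf : ∀ x, HasDerivAt f (f' x) x)
    (hxf : Integrable (fun x => x * f x) (gaussianReal 0 v))
    (hf' : Integrable f' (gaussianReal 0 v)) (hf_int : Integrable f (gaussianReal 0 v)) :
    ∫ x, x * f x ∂(gaussianReal 0 v) = v * ∫ x, f' x ∂(gaussianReal 0 v) := by
  rcases eq_or_ne v 0 with rfl | hv
  · simp
  have hv' : (v : ℝ) ≠ 0 := by exact_mod_cast hv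
  have hpdf : ∀ x, HasDerivAt (fun x => -(v : ℝ) * gaussianPDFReal 0 v x)
      (x * gaussianPDFReal 0 v x) x := fun x =>
    ((hasDerivAt_gaussianPDFReal 0 v x).const_mul _).congr_deriv (by field_simp; ring)
  have hparts := integral_mul_deriv_eq_deriv_mul_of_integrable
    (fun x _ => hf x) (fun x _ => hpdf x)
    ((integrable_mul_gaussianPDFReal hv hxf).congr (ae_of_all _ fun x => by
      simp only [Pi.mul_apply]; ring))
    (((integrable_mul_gaussianPDFReal hv hf').const_mul (-(v : ℝ))).congr (ae_of_all _ fun x => by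
      simp only [Pi.mul_apply]; ring))
    (((integrable_mul_gaussianPDFReal hv hf_int).const_mul (-(v : ℝ))).congr
      (ae_of_all _ fun x => by simp only [Pi.mul_apply]; ring))
  rw [integral_gaussianReal_eq_integral_smul hv, integral_gaussianReal_eq_integral_smul hv]
  calc ∫ x, gaussianPDFReal 0 v x • (x * f x)
      = ∫ x, f x * (x * gaussianPDFReal 0 v x) := by
        refine integral_congr_ae (ae_of_all _ fun x => ?_)
        simp only [smul_eq_mul]; ring
    _ = -∫ x, f' x * (-(v : ℝ) * gaussianPDFReal 0 v x) := hparts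
    _ = v * ∫ x, gaussianPDFReal 0 v x • f' x := by
        rw [← integral_neg, ← integral_const_mul]
        refine integral_congr_ae (ae_of_all _ fun x => ?_)
        simp only [smul_eq_mul]; ring

variable {Ω : Type*} [MeasurableSpace Ω] {μ : Measure Ω} [IsProbabilityMeasure μ]

lemma integral_mul_of_indepFun_gaussianReal {E : Type*} [MeasurableSpace E] {X : Ω → ℝ} {R : Ω → E}
    (hR : AEMeasurable R μ) (hind : IndepFun X R μ)
    {v : NNReal} (hlaw : HasLaw X (gaussianReal 0 v) μ) {f f' : ℝ × E → ℝ}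
    (hderiv : ∀ x r, HasDerivAt (fun x => f (x, r)) (f' (x, r)) x)
    (hf : Measurable f) (hf' : Measurable f')
    (hXf : Integrable (fun ω => X ω * f (X ω, R ω)) μ)
    (hf'_int : Integrable (fun ω => f' (X ω, R ω)) μ)
    (hf_int : Integrable (fun ω => f (X ω, R ω)) μ) :
    ∫ ω, X ω * f (X ω, R ω) ∂μ = v * ∫ ω, f' (X ω, R ω) ∂μ := by
  have hX : AEMeasurable X μ := hlaw.aemeasurable
  have hpair : AEMeasurable (fun ω => (X ω, R ω)) μ := hX.prodMk hR
  have := Measure.isProbabilityMeasure_map hR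
  have hmap : μ.map (fun ω => (X ω, R ω)) = (gaussianReal 0 v).prod (μ.map R) := by
    rw [(indepFun_iff_map_prod_eq_prod_map_map hX hR).1 hind, hlaw.map_eq]
  have integral_pair : ∀ g : ℝ × E → ℝ, Measurable g →
      ∫ ω, g (X ω, R ω) ∂μ = ∫ p, g p ∂((gaussianReal 0 v).prod (μ.map R)) := fun g hg => by
    rw [← hmap, integral_map hpair hg.aestronglyMeasurable]
  have integrable_pair : ∀ g : ℝ × E → ℝ, Measurable g → Integrable (fun ω => g (X ω, R ω)) μ →
      Integrable g ((gaussianReal 0 v).prod (μ.map R)) := fun g hg hi => by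
    rwa [← hmap, integrable_map_measure hg.aestronglyMeasurable hpair]
  have hxf : Measurable fun p : ℝ × E => p.1 * f p := measurable_fst.mul hf
  have hxf_prod := integrable_pair _ hxf hXf
  have hf'_prod := integrable_pair _ hf' hf'_int
  rw [integral_pair _ hxf, integral_pair _ hf', integral_prod_symm _ hxf_prod,
    integral_prod_symm _ hf'_prod, ← integral_const_mul]
  refine integral_congr_ae ?_
  filter_upwards [hxf_prod.prod_left_ae, hf'_prod.prod_left_ae,
    (integrable_pair _ hf hf_int).prod_left_ae] with r h1 h2 h3
  exact integral_id_mul_gaussianReal (fun x => hderiv x r) h1 h2 h3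

lemma covariance_eq_zero_of_variance_eq_zero {X Y : Ω → ℝ} (hX : MemLp X 2 μ)
    (hvar : Var[X; μ] = 0) : cov[X, Y; μ] = 0 := by
  have hconst := ae_eq_integral_of_variance_eq_zero hX hvar
  rw [covariance, integral_congr_ae (g := fun _ => (0 : ℝ))]
  · simp
  · filter_upwards [hconst] with ω hω
    simp [hω]

variable {ι : Type*} {X : Ω → ι → ℝ}

lemma indepFun_regression_residual [Finite ι] (hX : HasGaussianLaw X μ) (p : ι) :
    IndepFun (fun ω => X ω p) (fun ω j => X ω j - (Var[fun ω => X ω p; μ])⁻¹ *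
      cov[fun ω => X ω p, fun ω => X ω j; μ] * X ω p) μ := by
  cases nonempty_fintype ι
  set s := Var[fun ω => X ω p; μ] with hs
  set c : ι → ℝ := fun j => cov[fun ω => X ω p, fun ω => X ω j; μ]
  have hmem : ∀ i, MemLp (fun ω => X ω i) 2 μ := fun i => (hX.eval i).memLp_two
  let L : (ι → ℝ) →L[ℝ] (Unit → ℝ) × (ι → ℝ) :=
    (ContinuousLinearMap.pi fun _ => .proj p).prod
      (ContinuousLinearMap.pi fun j => .proj j - (s⁻¹ * c j) • .proj p)
  have hjoint : HasGaussianLaw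
      (fun ω => (fun _ : Unit => X ω p, fun j => X ω j - s⁻¹ * c j * X ω p)) μ := hX.map_fun L
  have huncorrelated : ∀ (_ : Unit) (j : ι),
      cov[fun ω => X ω p, fun ω => X ω j - s⁻¹ * c j * X ω p; μ] = 0 := fun _ j => by
    rw [covariance_fun_sub_right (hmem p) (hmem j) ((hmem p).const_mul _),
      covariance_const_mul_right, covariance_self (hmem p).aestronglyMeasurable.aemeasurable, ← hs]
    rcases eq_or_ne s 0 with h0 | h0
    · simp [h0, covariance_eq_zero_of_variance_eq_zero (hmem p) (hs.symm.trans h0)]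
    · field_simp
      exact sub_self _
  exact (hjoint.indepFun_of_covariance_eval huncorrelated).comp
    (φ := fun x : Unit → ℝ => x ()) (ψ := id) (measurable_pi_apply _) measurable_id

theorem integral_mul_eq_integral_fderiv_of_hasGaussianLaw [Fintype ι] (hX : HasGaussianLaw X μ)
    {p : ι} (hp : ∫ ω, X ω p ∂μ = 0) {F : (ι → ℝ) → ℝ} (hF : ContDiff ℝ 1 F)
    (hXF : Integrable (fun ω => X ω p * F (X ω)) μ) (hF_int : Integrable (fun ω => F (X ω)) μ)
    (hF' : Integrable (fun ω => fderiv ℝ F (X ω)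
      (fun j => cov[fun ω => X ω p, fun ω => X ω j; μ])) μ) :
    ∫ ω, X ω p * F (X ω) ∂μ =
      ∫ ω, fderiv ℝ F (X ω) (fun j => cov[fun ω => X ω p, fun ω => X ω j; μ]) ∂μ := by
  set s := Var[fun ω => X ω p; μ] with hs
  set c : ι → ℝ := fun j => cov[fun ω => X ω p, fun ω => X ω j; μ] with hc
  set b : ι → ℝ := s⁻¹ • c with hb
  set R : Ω → ι → ℝ := fun ω j => X ω j - s⁻¹ * c j * X ω p with hR
  have hmem : MemLp (fun ω => X ω p) 2 μ := (hX.eval p).memLp_two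
  have hsb : s • b = c := by
    rcases eq_or_ne s 0 with h0 | h0
    · ext j
      simp [h0, hc, covariance_eq_zero_of_variance_eq_zero hmem (hs.symm.trans h0)]
    · rw [hb, smul_inv_smul₀ h0]
  have hXR : ∀ ω, R ω + X ω p • b = X ω := fun ω => by
    ext j
    simp only [hR, hb, Pi.add_apply, Pi.smul_apply, smul_eq_mul]
    ring
  have hlaw : HasLaw (fun ω => X ω p) (gaussianReal 0 s.toNNReal) μ :=
    ⟨(hX.eval p).aemeasurable, by rw [(hX.eval p).map_eq_gaussianReal, hp]⟩
  have hRm : AEMeasurable R μ := aemeasurable_pi_lambda _ fun j =>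
    (hX.eval j).aemeasurable.sub ((hX.eval p).aemeasurable.const_mul _)
  have hcont : Continuous fun q : ℝ × (ι → ℝ) => q.2 + q.1 • b := by fun_prop
  have hF'cont : Continuous fun q : ℝ × (ι → ℝ) => fderiv ℝ F (q.2 + q.1 • b) b :=
    ((hF.continuous_fderiv one_ne_zero).comp hcont).clm_apply continuous_const
  have hderiv : ∀ x r, HasDerivAt (fun x : ℝ => F (r + x • b)) (fderiv ℝ F (r + x • b) b) x :=
    fun x r => by
      have hline : HasDerivAt (fun x : ℝ => r + x • b) b x := by
        simpa using ((hasDerivAt_id x).smul_const b).const_add r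
      exact ((hF.differentiable one_ne_zero _).hasFDerivAt).comp_hasDerivAt x hline
  have hparts := integral_mul_of_indepFun_gaussianReal hRm
    (indepFun_regression_residual hX p) hlaw (f := fun q => F (q.2 + q.1 • b))
    (f' := fun q => fderiv ℝ F (q.2 + q.1 • b) b) hderiv (hF.continuous.comp hcont).measurable
    hF'cont.measurable (by simpa only [hXR] using hXF)
    (by simp only [hXR]; simpa only [hb, map_smul, smul_eq_mul] using hF'.const_mul s⁻¹)
    (by simpa only [hXR] using hF_int)
  simp only [hXR] at hparts
  rw [hparts, ← integral_const_mul, Real.coe_toNNReal s (variance_nonneg _ _)]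
  simp only [← smul_eq_mul, ← map_smul, hsb]

end GaussianIntegrationByParts

section SteinKernel

variable {m : Type*} [Fintype m]

/-- `A` is a Stein kernel of the random vector `X`: Gaussian integration by parts holds for `X` with
the covariance matrix replaced by the random matrix whose `p`-th row is `A ω p`. -/
structure HasSteinKernel {Ω : Type*} [MeasurableSpace Ω] (μ : Measure Ω)
    (X : Ω → EuclideanSpace ℝ m) (A : Ω → m → EuclideanSpace ℝ m) : Prop where
  integrable : Integrable X μ
  integrable_kernel : ∀ p, Integrable (fun ω => A ω p) μ
  integral_mul_eq : ∀ (p : m) (f : EuclideanSpace ℝ m → ℝ) (L M : ℝ), ContDiff ℝ 1 f →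
    (∀ x, |f x| ≤ L) → (∀ x, ‖fderiv ℝ f x‖ ≤ M) →
    ∫ ω, X ω p * f (X ω) ∂μ = ∫ ω, fderiv ℝ f (X ω) (A ω p) ∂μ

lemma integrable_toLp {Ω : Type*} [MeasurableSpace Ω] {μ : Measure Ω} {f : Ω → m → ℝ}
    (hf : ∀ p, Integrable (fun ω => f ω p) μ) : Integrable (fun ω => WithLp.toLp 2 (f ω)) μ :=
  (PiLp.continuousLinearEquiv 2 ℝ fun _ : m => ℝ).symm.toContinuousLinearMap.integrable_comp
    (Integrable.of_eval hf)

lemma integrable_clm_apply_of_norm_le {Ω E F : Type*} [MeasurableSpace Ω] {μ : Measure Ω}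
    [NormedAddCommGroup E] [NormedSpace ℝ E] [NormedAddCommGroup F] [NormedSpace ℝ F]
    {T : Ω → E →L[ℝ] F} {X : Ω → E} {C : ℝ} (hT : AEStronglyMeasurable T μ)
    (hC : ∀ ω, ‖T ω‖ ≤ C) (hX : Integrable X μ) : Integrable (fun ω => T ω (X ω)) μ :=
  (hX.norm.const_mul C).mono'
    ((ContinuousLinearMap.apply ℝ F).flip.aestronglyMeasurable_comp₂ hT hX.1)
    (ae_of_all _ fun ω => (T ω).le_of_opNorm_le (hC ω) _)

lemma aestronglyMeasurable_smul_fst_add_smul_snd {Ω Ω' E : Type*} [MeasurableSpace Ω]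
    [MeasurableSpace Ω'] {μ : Measure Ω} {ν : Measure Ω'} [SFinite ν] [NormedAddCommGroup E]
    [NormedSpace ℝ E] {X : Ω → E} {Z : Ω' → E} (hX : AEStronglyMeasurable X μ)
    (hZ : AEStronglyMeasurable Z ν) (s t : ℝ) :
    AEStronglyMeasurable (fun ω : Ω × Ω' => s • X ω.1 + t • Z ω.2) (μ.prod ν) :=
  (hX.comp_fst.const_smul s).add (hZ.comp_snd.const_smul t)

variable {Ω Ω' : Type*} [MeasurableSpace Ω] [MeasurableSpace Ω'] {μ : Measure Ω} {ν : Measure Ω'}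
  {X : Ω → EuclideanSpace ℝ m} {A : Ω → m → EuclideanSpace ℝ m} {G : EuclideanSpace ℝ m → ℝ}
  {M : ℝ}

section SecondOrder

lemma hasFDerivAt_fderiv_affine_apply (hG : ContDiff ℝ 2 G) (s : ℝ)
    (w e x : EuclideanSpace ℝ m) :
    HasFDerivAt (fun x => fderiv ℝ G (s • x + w) e)
      (s • (fderiv ℝ (fderiv ℝ G) (s • x + w)).flip e) x := by
  have hDG : Differentiable ℝ (fderiv ℝ G) :=
    (hG.fderiv_right (m := 1) le_rfl).differentiable one_ne_zero
  have haffine : HasFDerivAt (fun x : EuclideanSpace ℝ m => s • x + w)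
      (s • ContinuousLinearMap.id ℝ (EuclideanSpace ℝ m)) x :=
    ((hasFDerivAt_id x).const_smul s).add_const w
  refine (((hDG _).hasFDerivAt.comp x haffine).clm_apply (hasFDerivAt_const e x)).congr_fderiv ?_
  ext v
  simp

lemma HasSteinKernel.integral_mul_fderiv_affine (hG : ContDiff ℝ 2 G)
    (hG₁ : ∀ x, ‖fderiv ℝ G x‖ ≤ 1) (hG₂ : ∀ x, ‖fderiv ℝ (fderiv ℝ G) x‖ ≤ M)
    (hX : HasSteinKernel μ X A) (p : m) (s : ℝ) (w e : EuclideanSpace ℝ m) :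
    ∫ ω, X ω p * fderiv ℝ G (s • X ω + w) e ∂μ =
      s * ∫ ω, fderiv ℝ (fderiv ℝ G) (s • X ω + w) (A ω p) e ∂μ := by
  have hderiv := hasFDerivAt_fderiv_affine_apply hG s w e
  have hC1 : ContDiff ℝ 1 fun x => fderiv ℝ G (s • x + w) e :=
    ((hG.fderiv_right (m := 1) le_rfl).comp (by fun_prop)).clm_apply contDiff_const
  rw [hX.integral_mul_eq p _ ‖e‖ (|s| * (M * ‖e‖)) hC1 (fun x => ?_) (fun x => ?_),
    ← integral_const_mul]
  · simp only [(hderiv _).fderiv, smul_apply, ContinuousLinearMap.flip_apply,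
      smul_eq_mul]
  · simpa using (fderiv ℝ G (s • x + w)).le_of_opNorm_le (hG₁ _) e
  · rw [(hderiv x).fderiv, norm_smul, Real.norm_eq_abs]
    gcongr
    simpa using ((fderiv ℝ (fderiv ℝ G) (s • x + w)).flip.le_opNorm e).trans
      (mul_le_mul_of_nonneg_right ((ContinuousLinearMap.opNorm_flip _).trans_le (hG₂ _))
        (norm_nonneg e))

variable [SFinite μ] [SFinite ν] {W : Ω' → EuclideanSpace ℝ m} {c : Ω' → ℝ}

lemma HasSteinKernel.integral_prod_mul_fderiv (hG : ContDiff ℝ 2 G)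
    (hG₁ : ∀ x, ‖fderiv ℝ G x‖ ≤ 1) (hG₂ : ∀ x, ‖fderiv ℝ (fderiv ℝ G) x‖ ≤ M)
    (hX : HasSteinKernel μ X A) (hW : AEStronglyMeasurable W ν) (hc : Integrable c ν) (p : m)
    (s t : ℝ) (e : EuclideanSpace ℝ m) :
    ∫ ω, c ω.2 * (X ω.1 p * fderiv ℝ G (s • X ω.1 + t • W ω.2) e) ∂μ.prod ν =
      s * ∫ ω, c ω.2 * fderiv ℝ (fderiv ℝ G) (s • X ω.1 + t • W ω.2) (A ω.1 p) e ∂μ.prod ν := by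
  have hU := aestronglyMeasurable_smul_fst_add_smul_snd hX.integrable.1 hW s t
  have hDG := ((hG.continuous_fderiv two_ne_zero).comp_aestronglyMeasurable hU)
  have hD2G := (((hG.fderiv_right (m := 1) le_rfl).continuous_fderiv
    one_ne_zero).comp_aestronglyMeasurable hU)
  have hXp : Integrable (fun ω => X ω p) μ :=
    (EuclideanSpace.proj (𝕜 := ℝ) p).integrable_comp hX.integrable
  have hleft : Integrable (fun ω : Ω × Ω' => c ω.2 * (X ω.1 p *
      fderiv ℝ G (s • X ω.1 + t • W ω.2) e)) (μ.prod ν) := by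
    refine (integrable_clm_apply_of_norm_le hDG (fun _ => hG₁ _)
      ((hXp.mul_prod hc).smul_const e)).congr (ae_of_all _ fun ω => ?_)
    simp only [map_smul, smul_eq_mul]
    ring
  have hright : Integrable (fun ω : Ω × Ω' => c ω.2 *
      fderiv ℝ (fderiv ℝ G) (s • X ω.1 + t • W ω.2) (A ω.1 p) e) (μ.prod ν) := by
    refine ((integrable_clm_apply_of_norm_le hD2G (fun _ => hG₂ _)
      (hc.smul_prod (hX.integrable_kernel p)).swap).apply_continuousLinearMap e).congr
        (ae_of_all _ fun ω => ?_)
    simp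
  rw [integral_prod_symm _ hleft, integral_prod_symm _ hright, ← integral_const_mul]
  refine integral_congr_ae (ae_of_all _ fun ω' => ?_)
  simp only [integral_const_mul]
  rw [hX.integral_mul_fderiv_affine hG hG₁ hG₂]
  ring

lemma HasSteinKernel.integral_prod_swap_mul_fderiv (hG : ContDiff ℝ 2 G)
    (hG₁ : ∀ x, ‖fderiv ℝ G x‖ ≤ 1) (hG₂ : ∀ x, ‖fderiv ℝ (fderiv ℝ G) x‖ ≤ M)
    (hX : HasSteinKernel μ X A) (hW : AEStronglyMeasurable W ν) (hc : Integrable c ν) (p : m)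
    (s t : ℝ) (e : EuclideanSpace ℝ m) :
    ∫ ω, c ω.1 * (X ω.2 p * fderiv ℝ G (t • W ω.1 + s • X ω.2) e) ∂ν.prod μ =
      s * ∫ ω, c ω.1 * fderiv ℝ (fderiv ℝ G) (t • W ω.1 + s • X ω.2) (A ω.2 p) e ∂ν.prod μ := by
  have h := hX.integral_prod_mul_fderiv hG hG₁ hG₂ hW hc p s t e
  rw [← integral_prod_swap (μ := μ) (ν := ν), ← integral_prod_swap (μ := μ) (ν := ν)] at h
  simpa only [Prod.fst_swap, Prod.snd_swap, add_comm (t • W _)] using h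

end SecondOrder

lemma integral_clm_apply_eq_sum [DecidableEq m] {T : Ω → EuclideanSpace ℝ m →L[ℝ] ℝ} {C : ℝ}
    (hT : AEStronglyMeasurable T μ) (hC : ∀ ω, ‖T ω‖ ≤ C) (hX : Integrable X μ) :
    ∫ ω, T ω (X ω) ∂μ = ∑ p, ∫ ω, X ω p * T ω (EuclideanSpace.single p 1) ∂μ := by
  rw [← integral_finsetSum]
  · refine integral_congr_ae (ae_of_all _ fun ω => ?_)
    have hsum := congrArg (T ω) ((EuclideanSpace.basisFun m ℝ).sum_repr (X ω))
    simpa using hsum.symm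
  · intro p _
    have hXp : Integrable (fun ω => X ω p) μ :=
      (EuclideanSpace.proj (𝕜 := ℝ) p).integrable_comp hX
    simpa using integrable_clm_apply_of_norm_le hT hC
      (hXp.smul_const (EuclideanSpace.single p (1 : ℝ)))

section Interpolation

variable {Z : Ω' → EuclideanSpace ℝ m}
  {S : m → EuclideanSpace ℝ m} {B : Ω → Matrix m m ℝ}

lemma integrable_mulVec_prod [SFinite μ] [SFinite ν]
    (hB : ∀ p q, Integrable (fun ω => B ω p q) μ) (hZ : Integrable Z ν) :
    Integrable (fun ω : Ω × Ω' => WithLp.toLp 2 ((B ω.1).mulVec (Z ω.2))) (μ.prod ν) := by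
  have hentry : ∀ p q, Integrable (fun ω : Ω × Ω' => B ω.1 p q * Z ω.2 q) (μ.prod ν) :=
    fun p q => (hB p q).mul_prod ((EuclideanSpace.proj (𝕜 := ℝ) q).integrable_comp hZ)
  exact integrable_toLp fun p => integrable_finsetSum _ fun q _ => hentry p q

variable [IsProbabilityMeasure μ] [IsProbabilityMeasure ν]

lemma integral_fderiv_apply_fst [DecidableEq m]
    (hX : HasSteinKernel μ X fun ω p => ∑ q, B ω p q • S q)
    (hZ : HasSteinKernel ν Z fun _ => S) (hB : ∀ p q, Integrable (fun ω => B ω p q) μ)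
    (hG : ContDiff ℝ 2 G) (hG₁ : ∀ x, ‖fderiv ℝ G x‖ ≤ 1)
    (hG₂ : ∀ x, ‖fderiv ℝ (fderiv ℝ G) x‖ ≤ M) (s t : ℝ) :
    ∫ ω, fderiv ℝ G (s • X ω.1 + t • Z ω.2) (X ω.1) ∂μ.prod ν =
      s * ∑ p, ∑ q, ∫ ω, B ω.1 p q * fderiv ℝ (fderiv ℝ G) (s • X ω.1 + t • Z ω.2) (S q)
        (EuclideanSpace.single p 1) ∂μ.prod ν := by
  have hU := aestronglyMeasurable_smul_fst_add_smul_snd hX.integrable.1 hZ.integrable.1 s t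
  have hDG := (hG.continuous_fderiv two_ne_zero).comp_aestronglyMeasurable hU
  have hD2G := ((hG.fderiv_right (m := 1) le_rfl).continuous_fderiv
    one_ne_zero).comp_aestronglyMeasurable hU
  rw [integral_clm_apply_eq_sum hDG (fun _ => hG₁ _) (hX.integrable.comp_fst ν), Finset.mul_sum]
  refine Finset.sum_congr rfl fun p _ => ?_
  have hsteinX := hX.integral_prod_mul_fderiv hG hG₁ hG₂ hZ.integrable.1
    (integrable_const (μ := ν) (1 : ℝ)) p s t (EuclideanSpace.single p 1)
  simp only [one_mul, map_sum, map_smul, sum_apply, smul_apply,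
    smul_eq_mul] at hsteinX
  rw [hsteinX, integral_finsetSum]
  intro q _
  simpa using (integrable_clm_apply_of_norm_le hD2G (fun _ => hG₂ _)
    (((hB p q).comp_fst ν).smul_const (S q))).apply_continuousLinearMap (EuclideanSpace.single p 1)

lemma integral_fderiv_apply_mulVec_snd [DecidableEq m]
    (hX : HasSteinKernel μ X fun ω p => ∑ q, B ω p q • S q)
    (hZ : HasSteinKernel ν Z fun _ => S) (hB : ∀ p q, Integrable (fun ω => B ω p q) μ)
    (hG : ContDiff ℝ 2 G) (hG₁ : ∀ x, ‖fderiv ℝ G x‖ ≤ 1)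
    (hG₂ : ∀ x, ‖fderiv ℝ (fderiv ℝ G) x‖ ≤ M) (s t : ℝ) :
    ∫ ω, fderiv ℝ G (s • X ω.1 + t • Z ω.2) (WithLp.toLp 2 ((B ω.1).mulVec (Z ω.2))) ∂μ.prod ν =
      t * ∑ p, ∑ q, ∫ ω, B ω.1 p q * fderiv ℝ (fderiv ℝ G) (s • X ω.1 + t • Z ω.2) (S q)
        (EuclideanSpace.single p 1) ∂μ.prod ν := by
  have hU := aestronglyMeasurable_smul_fst_add_smul_snd hX.integrable.1 hZ.integrable.1 s t
  have hDG := (hG.continuous_fderiv two_ne_zero).comp_aestronglyMeasurable hU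
  rw [integral_clm_apply_eq_sum hDG (fun _ => hG₁ _) (integrable_mulVec_prod hB hZ.integrable),
    Finset.mul_sum]
  refine Finset.sum_congr rfl fun p _ => ?_
  simp only [Matrix.mulVec, dotProduct, Finset.sum_mul, mul_assoc]
  rw [integral_finsetSum, Finset.mul_sum]
  · exact Finset.sum_congr rfl fun q _ => hZ.integral_prod_swap_mul_fderiv hG hG₁ hG₂
      hX.integrable.1 (hB p q) q t s (EuclideanSpace.single p 1)
  · intro q _
    have hZq : Integrable (fun ω => Z ω q) ν :=
      (EuclideanSpace.proj (𝕜 := ℝ) q).integrable_comp hZ.integrable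
    simpa [mul_assoc] using integrable_clm_apply_of_norm_le hDG (fun _ => hG₁ _)
      (((hB p q).mul_prod hZq).smul_const (EuclideanSpace.single p (1 : ℝ)))

lemma integral_fderiv_rotation_eq
    (hX : HasSteinKernel μ X fun ω p => ∑ q, B ω p q • S q)
    (hZ : HasSteinKernel ν Z fun _ => S) (hB : ∀ p q, Integrable (fun ω => B ω p q) μ)
    (hG : ContDiff ℝ 2 G) (hG₁ : ∀ x, ‖fderiv ℝ G x‖ ≤ 1)
    (hG₂ : ∀ x, ‖fderiv ℝ (fderiv ℝ G) x‖ ≤ M) (θ : ℝ) :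
    ∫ ω, fderiv ℝ G (Real.sin θ • X ω.1 + Real.cos θ • Z ω.2)
        (Real.cos θ • X ω.1 - Real.sin θ • Z ω.2) ∂μ.prod ν =
      Real.sin θ * ∫ ω, fderiv ℝ G (Real.sin θ • X ω.1 + Real.cos θ • Z ω.2)
        (WithLp.toLp 2 ((B ω.1).mulVec (Z ω.2)) - Z ω.2) ∂μ.prod ν := by
  classical
  have hU := aestronglyMeasurable_smul_fst_add_smul_snd hX.integrable.1 hZ.integrable.1
    (Real.sin θ) (Real.cos θ)
  have hDG := (hG.continuous_fderiv two_ne_zero).comp_aestronglyMeasurable hU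
  have integrable_DG : ∀ {V : Ω × Ω' → EuclideanSpace ℝ m}, Integrable V (μ.prod ν) → Integrable
      (fun ω => fderiv ℝ G (Real.sin θ • X ω.1 + Real.cos θ • Z ω.2) (V ω)) (μ.prod ν) :=
    fun hV => integrable_clm_apply_of_norm_le hDG (fun _ => hG₁ _) hV
  have hIX := integrable_DG (hX.integrable.comp_fst ν)
  have hIZ := integrable_DG (hZ.integrable.comp_snd μ)
  simp only [map_sub, map_smul, smul_eq_mul]
  rw [integral_sub (hIX.const_mul _) (hIZ.const_mul _), integral_const_mul, integral_const_mul,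
    integral_sub (integrable_DG (integrable_mulVec_prod hB hZ.integrable)) hIZ,
    integral_fderiv_apply_fst hX hZ hB hG hG₁ hG₂,
    integral_fderiv_apply_mulVec_snd hX hZ hB hG hG₁ hG₂]
  ring

end Interpolation

section Rotation

lemma integrable_comp_of_lipschitzWith [IsFiniteMeasure μ] {E : Type*}
    [NormedAddCommGroup E] {g : E → ℝ} {K : NNReal}
    (hg : LipschitzWith K g) {X : Ω → E} (hX : Integrable X μ) :
    Integrable (fun ω => g (X ω)) μ := by
  refine ((hX.norm.const_mul (K : ℝ)).add (integrable_const |g 0|)).mono'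
    (hg.continuous.comp_aestronglyMeasurable hX.1) (ae_of_all _ fun ω => ?_)
  have hdist := hg.dist_le_mul (X ω) 0
  rw [Real.dist_eq, dist_zero_right] at hdist
  have htri := abs_sub_abs_le_abs_sub (g (X ω)) (g 0)
  simp only [Real.norm_eq_abs, Pi.add_apply]
  linarith

variable {E : Type*} [NormedAddCommGroup E] [NormedSpace ℝ E]

lemma norm_smul_add_smul_le {s t : ℝ} (hs : |s| ≤ 1) (ht : |t| ≤ 1) (x z : E) :
    ‖s • x + t • z‖ ≤ ‖x‖ + ‖z‖ := by
  refine (norm_add_le _ _).trans (add_le_add ?_ ?_) <;> rw [norm_smul, Real.norm_eq_abs]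
  · exact mul_le_of_le_one_left (norm_nonneg _) hs
  · exact mul_le_of_le_one_left (norm_nonneg _) ht

lemma lipschitzWith_one_of_norm_fderiv_le {G : E → ℝ} (hG : Differentiable ℝ G)
    (hG₁ : ∀ x, ‖fderiv ℝ G x‖ ≤ 1) : LipschitzWith 1 G :=
  lipschitzWith_of_nnnorm_fderiv_le (𝕜 := ℝ) hG fun x => by exact_mod_cast hG₁ x

lemma hasDerivAt_integral_rotation [IsFiniteMeasure μ] {X Z : Ω → E} (hX : Integrable X μ)
    (hZ : Integrable Z μ) {G : E → ℝ} (hG : ContDiff ℝ 1 G) (hG₁ : ∀ x, ‖fderiv ℝ G x‖ ≤ 1)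
    (θ : ℝ) :
    HasDerivAt (fun θ => ∫ ω, G (Real.sin θ • X ω + Real.cos θ • Z ω) ∂μ)
      (∫ ω, fderiv ℝ G (Real.sin θ • X ω + Real.cos θ • Z ω)
        (Real.cos θ • X ω - Real.sin θ • Z ω) ∂μ) θ := by
  have hGd : Differentiable ℝ G := hG.differentiable one_ne_zero
  have hU : ∀ θ, Integrable (fun ω => Real.sin θ • X ω + Real.cos θ • Z ω) μ := fun θ =>
    (hX.smul _).add (hZ.smul _)
  have hU' : Integrable (fun ω => Real.cos θ • X ω - Real.sin θ • Z ω) μ :=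
    (hX.smul _).sub (hZ.smul _)
  have hGU : ∀ θ, Integrable (fun ω => G (Real.sin θ • X ω + Real.cos θ • Z ω)) μ := fun θ =>
    integrable_comp_of_lipschitzWith (lipschitzWith_one_of_norm_fderiv_le hGd hG₁) (hU θ)
  have hDG : Integrable (fun ω => fderiv ℝ G (Real.sin θ • X ω + Real.cos θ • Z ω)
      (Real.cos θ • X ω - Real.sin θ • Z ω)) μ :=
    integrable_clm_apply_of_norm_le
      ((hG.continuous_fderiv one_ne_zero).comp_aestronglyMeasurable (hU θ).1) (fun _ => hG₁ _) hU'
  refine (hasDerivAt_integral_of_dominated_loc_of_deriv_le (s := Set.univ)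
    (bound := fun ω => ‖X ω‖ + ‖Z ω‖)
    (F' := fun θ ω => fderiv ℝ G (Real.sin θ • X ω + Real.cos θ • Z ω)
      (Real.cos θ • X ω - Real.sin θ • Z ω)) univ_mem (Eventually.of_forall fun θ => (hGU θ).1)
    (hGU θ) hDG.1 (ae_of_all _ fun ω θ _ => ?_) (hX.norm.add hZ.norm)
    (ae_of_all _ fun ω θ _ => ?_)).2
  · refine ((fderiv ℝ G _).le_of_opNorm_le (hG₁ _) _).trans ?_
    rw [one_mul, sub_eq_add_neg, ← neg_smul]
    exact norm_smul_add_smul_le (Real.abs_cos_le_one θ)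
      ((abs_neg _).trans_le (Real.abs_sin_le_one θ)) _ _
  · have hpath : HasDerivAt (fun θ => Real.sin θ • X ω + Real.cos θ • Z ω)
        (Real.cos θ • X ω - Real.sin θ • Z ω) θ :=
      (((Real.hasDerivAt_sin θ).smul_const (X ω)).add
        ((Real.hasDerivAt_cos θ).smul_const (Z ω))).congr_deriv (by rw [neg_smul, sub_eq_add_neg])
    exact (hGd _).hasFDerivAt.comp_hasDerivAt θ hpath

end Rotation

variable [IsProbabilityMeasure μ] [IsProbabilityMeasure ν] {Z : Ω' → EuclideanSpace ℝ m}
  {S : m → EuclideanSpace ℝ m} {B : Ω → Matrix m m ℝ}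

theorem abs_integral_sub_le_of_contDiff (hX : HasSteinKernel μ X fun ω p => ∑ q, B ω p q • S q)
    (hZ : HasSteinKernel ν Z fun _ => S) (hB : ∀ p q, Integrable (fun ω => B ω p q) μ)
    (hG : ContDiff ℝ 2 G) (hG₁ : ∀ x, ‖fderiv ℝ G x‖ ≤ 1)
    (hG₂ : ∀ x, ‖fderiv ℝ (fderiv ℝ G) x‖ ≤ M) :
    |∫ ω, G (X ω) ∂μ - ∫ ω, G (Z ω) ∂ν| ≤
      Real.pi / 2 * ∫ ω, ‖WithLp.toLp 2 ((B ω.1).mulVec (Z ω.2)) - Z ω.2‖ ∂μ.prod ν := by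
  have hderiv := hasDerivAt_integral_rotation (hX.integrable.comp_fst ν) (hZ.integrable.comp_snd μ)
    (hG.of_le one_le_two) hG₁
  have hbound : ∀ θ : ℝ, ‖∫ ω, fderiv ℝ G (Real.sin θ • X ω.1 + Real.cos θ • Z ω.2)
      (Real.cos θ • X ω.1 - Real.sin θ • Z ω.2) ∂μ.prod ν‖ ≤
      ∫ ω, ‖WithLp.toLp 2 ((B ω.1).mulVec (Z ω.2)) - Z ω.2‖ ∂μ.prod ν := fun θ => by
    rw [integral_fderiv_rotation_eq hX hZ hB hG hG₁ hG₂, norm_mul]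
    refine (mul_le_of_le_one_left (norm_nonneg _) (Real.abs_sin_le_one θ)).trans ?_
    refine norm_integral_le_of_norm_le
      ((integrable_mulVec_prod hB hZ.integrable).sub (hZ.integrable.comp_snd μ)).norm
      (ae_of_all _ fun ω => ?_)
    exact ((fderiv ℝ G _).le_of_opNorm_le (hG₁ _) _).trans_eq (one_mul _)
  have hmean := Convex.norm_image_sub_le_of_norm_hasDerivWithin_le (s := Set.univ)
    (x := 0) (y := Real.pi / 2) (fun θ _ => (hderiv θ).hasDerivWithinAt) (fun θ _ => hbound θ)
    convex_univ trivial trivial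
  simp only [Real.sin_pi_div_two, Real.cos_pi_div_two, Real.sin_zero, Real.cos_zero, one_smul,
    zero_smul, add_zero, zero_add, sub_zero, Real.norm_eq_abs,
    abs_of_pos (div_pos Real.pi_pos two_pos)] at hmean
  rw [integral_fun_fst (fun ω => G (X ω)), integral_fun_snd (fun ω => G (Z ω))] at hmean
  simpa [mul_comm] using hmean

end SteinKernel

section Mollification

open scoped Convolution

lemma lipschitzWith_convolution {E E' E'' F : Type*} [NormedAddCommGroup E] [MeasurableSpace E]
    {μ : Measure E} [NormedAddCommGroup E'] [NormedSpace ℝ E'] [NormedAddCommGroup E'']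
    [NormedSpace ℝ E''] [NormedAddCommGroup F] [NormedSpace ℝ F] {f : E → E'} {g : E → E''}
    {L : E' →L[ℝ] E'' →L[ℝ] F} (hf : Integrable f μ) (hfg : ConvolutionExists f g L μ)
    {K : NNReal} (hg : LipschitzWith K g) :
    LipschitzWith (Real.toNNReal (‖L‖ * (∫ t, ‖f t‖ ∂μ) * K)) (f ⋆[L, μ] g) := by
  refine LipschitzWith.of_dist_le' fun x y => ?_
  have hconst : ‖L‖ * (∫ t, ‖f t‖ ∂μ) * K * dist x y = ∫ t, ‖L‖ * ‖f t‖ * (K * dist x y) ∂μ := by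
    rw [integral_mul_const, integral_const_mul, mul_assoc _ (K : ℝ)]
  rw [dist_eq_norm, convolution, convolution, ← integral_sub (hfg x) (hfg y), hconst]
  refine norm_integral_le_of_norm_le ((hf.norm.const_mul _).mul_const _) (ae_of_all _ fun t => ?_)
  rw [← map_sub]
  refine (L.le_opNorm₂ _ _).trans ?_
  gcongr
  simpa [dist_eq_norm] using hg.dist_le_mul (x - t) (y - t)

lemma exists_contDiff_two_approx {E : Type*} [NormedAddCommGroup E] [InnerProductSpace ℝ E]
    [FiniteDimensional ℝ E] [MeasurableSpace E] [BorelSpace E] {g : E → ℝ}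
    (hg : LipschitzWith 1 g) {ε : ℝ} (hε : 0 < ε) :
    ∃ (G : E → ℝ) (M : ℝ), ContDiff ℝ 2 G ∧ (∀ x, ‖fderiv ℝ G x‖ ≤ 1) ∧
      (∀ x, ‖fderiv ℝ (fderiv ℝ G) x‖ ≤ M) ∧ ∀ x, |G x - g x| ≤ ε := by
  let φ : ContDiffBump (0 : E) := ⟨ε / 2, ε, by positivity, by linarith⟩
  set ρ : E → ℝ := φ.normed volume with hρ_def
  have hρc : HasCompactSupport ρ := φ.hasCompactSupport_normed
  have hρ2 : ContDiff ℝ 2 ρ := φ.contDiff_normed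
  have hρ1 : ContDiff ℝ 1 ρ := φ.contDiff_normed
  have hDρ : Continuous (fderiv ℝ ρ) := hρ1.continuous_fderiv one_ne_zero
  have hgl : LocallyIntegrable g (volume : Measure E) := hg.continuous.locallyIntegrable
  let L := ContinuousLinearMap.lsmul ℝ ℝ (E := ℝ)
  have hlip := lipschitzWith_convolution (hρ2.continuous.integrable_of_hasCompactSupport hρc)
    (hρc.convolutionExists_left L hρ2.continuous hgl) hg
  obtain ⟨K, hlipD⟩ : ∃ K, LipschitzWith K (fderiv ℝ ρ ⋆[L.precompL E, volume] g) :=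
    ⟨_, lipschitzWith_convolution (hDρ.integrable_of_hasCompactSupport (hρc.fderiv ℝ))
      ((hρc.fderiv ℝ).convolutionExists_left (L.precompL E) hDρ hgl) hg⟩
  have hmass : ∫ t, ‖ρ t‖ = 1 := by
    simp only [hρ_def, Real.norm_of_nonneg (φ.nonneg_normed _), φ.integral_normed]
  have hD : fderiv ℝ (ρ ⋆[L, volume] g) = fderiv ℝ ρ ⋆[L.precompL E, volume] g :=
    funext fun y => (hρc.hasFDerivAt_convolution_left L hρ1 hgl y).fderiv
  refine ⟨ρ ⋆[L, volume] g, K, hρc.contDiff_convolution_left L hρ2 hgl, fun x => ?_, fun x => ?_,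
    fun x => ?_⟩
  · refine (norm_fderiv_le_of_lipschitz ℝ hlip).trans ?_
    have hL : ‖L‖ ≤ 1 := ContinuousLinearMap.opNorm_lsmul_le
    rw [hmass]
    simpa using hL
  · rw [hD]
    exact norm_fderiv_le_of_lipschitz ℝ hlipD
  · rw [← Real.dist_eq]
    refine φ.dist_normed_convolution_le hg.continuous.aestronglyMeasurable fun y hy => ?_
    simpa using (hg.dist_le_mul y x).trans (by simpa using (Metric.mem_ball.1 hy).le)

end Mollification

lemma abs_integral_comp_sub_le {Ω E : Type*} [MeasurableSpace Ω] {μ : Measure Ω}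
    [IsProbabilityMeasure μ] {X : Ω → E} {G g : E → ℝ} {ε : ℝ}
    (hGX : Integrable (fun ω => G (X ω)) μ) (hgX : Integrable (fun ω => g (X ω)) μ)
    (hGg : ∀ x, |G x - g x| ≤ ε) : |∫ ω, G (X ω) ∂μ - ∫ ω, g (X ω) ∂μ| ≤ ε := by
  rw [← integral_sub hGX hgX, ← Real.norm_eq_abs]
  exact (norm_integral_le_of_norm_le (integrable_const ε)
    (ae_of_all _ fun ω => hGg (X ω))).trans_eq (by simp)

theorem abs_integral_sub_le_of_lipschitzWith {m Ω Ω' : Type*} [Fintype m] [MeasurableSpace Ω]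
    [MeasurableSpace Ω'] {μ : Measure Ω} {ν : Measure Ω'} [IsProbabilityMeasure μ]
    [IsProbabilityMeasure ν] {X : Ω → EuclideanSpace ℝ m} {Z : Ω' → EuclideanSpace ℝ m}
    {S : m → EuclideanSpace ℝ m} {B : Ω → Matrix m m ℝ}
    (hX : HasSteinKernel μ X fun ω p => ∑ q, B ω p q • S q) (hZ : HasSteinKernel ν Z fun _ => S)
    (hB : ∀ p q, Integrable (fun ω => B ω p q) μ) {g : EuclideanSpace ℝ m → ℝ}
    (hg : LipschitzWith 1 g) :
    |∫ ω, g (X ω) ∂μ - ∫ ω, g (Z ω) ∂ν| ≤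
      Real.pi / 2 * ∫ ω, ‖WithLp.toLp 2 ((B ω.1).mulVec (Z ω.2)) - Z ω.2‖ ∂μ.prod ν := by
  refine le_of_forall_pos_le_add fun ε hε => ?_
  obtain ⟨G, M, hG, hG₁, hG₂, hGg⟩ := exists_contDiff_two_approx hg (half_pos hε)
  have hsmooth := abs_integral_sub_le_of_contDiff hX hZ hB hG hG₁ hG₂
  have hGl := lipschitzWith_one_of_norm_fderiv_le (hG.differentiable two_ne_zero) hG₁
  have hXg := abs_integral_comp_sub_le (integrable_comp_of_lipschitzWith hGl hX.integrable)
    (integrable_comp_of_lipschitzWith hg hX.integrable) hGg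
  have hZg := abs_integral_comp_sub_le (integrable_comp_of_lipschitzWith hGl hZ.integrable)
    (integrable_comp_of_lipschitzWith hg hZ.integrable) hGg
  rw [abs_le] at *
  constructor <;> linarith [hsmooth.1, hsmooth.2, hXg.1, hXg.2, hZg.1, hZg.2]

section CenteredGaussian

/-- All absolute moments of `f` are finite. These functions form an algebra containing every
Gaussian variable, so that polynomials in Gaussian variables are integrable. -/
def HasFiniteMoments {Ω : Type*} [MeasurableSpace Ω] (μ : Measure Ω) (f : Ω → ℝ) : Prop :=
  ∀ p : ENNReal, p ≠ ⊤ → MemLp f p μ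

namespace HasFiniteMoments

variable {Ω : Type*} [MeasurableSpace Ω] {μ : Measure Ω} {f g : Ω → ℝ}

lemma add (hf : HasFiniteMoments μ f) (hg : HasFiniteMoments μ g) :
    HasFiniteMoments μ fun ω => f ω + g ω :=
  fun p hp => (hf p hp).add (hg p hp)

lemma sub (hf : HasFiniteMoments μ f) (hg : HasFiniteMoments μ g) :
    HasFiniteMoments μ fun ω => f ω - g ω :=
  fun p hp => (hf p hp).sub (hg p hp)

lemma mul (hf : HasFiniteMoments μ f) (hg : HasFiniteMoments μ g) :
    HasFiniteMoments μ fun ω => f ω * g ω := by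
  intro p hp
  have htwo : 2 * p ≠ ⊤ := ENNReal.mul_ne_top (by simp) hp
  have : ENNReal.HolderTriple (2 * p) (2 * p) p := by
    constructor
    rw [ENNReal.mul_inv (by simp) (by simp), ← add_mul, ENNReal.inv_two_add_inv_two, one_mul]
  exact (hg (2 * p) htwo).mul' (hf (2 * p) htwo)

lemma const [IsFiniteMeasure μ] (c : ℝ) : HasFiniteMoments μ fun _ => c :=
  fun _ _ => memLp_const c

lemma const_mul (c : ℝ) (hf : HasFiniteMoments μ f) : HasFiniteMoments μ fun ω => c * f ω :=
  fun p hp => (hf p hp).const_mul c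

lemma sum {ι : Type*} (s : Finset ι) {f : ι → Ω → ℝ} (hf : ∀ i ∈ s, HasFiniteMoments μ (f i)) :
    HasFiniteMoments μ fun ω => ∑ i ∈ s, f i ω :=
  fun p hp => memLp_finsetSum s fun i hi => hf i hi p hp

lemma integrable (hf : HasFiniteMoments μ f) : Integrable f μ :=
  memLp_one_iff_integrable.1 (hf 1 (by simp))

variable {Ω' : Type*} [MeasurableSpace Ω'] {ν : Measure Ω'}

lemma comp_fst (hf : HasFiniteMoments μ f) (ν : Measure Ω') [IsFiniteMeasure ν] :
    HasFiniteMoments (μ.prod ν) fun ω => f ω.1 :=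
  fun p hp => (hf p hp).comp_fst ν

lemma comp_snd {g : Ω' → ℝ} (hg : HasFiniteMoments ν g) (μ : Measure Ω) [IsFiniteMeasure μ]
    [SFinite ν] : HasFiniteMoments (μ.prod ν) fun ω => g ω.2 :=
  fun p hp => (hg p hp).comp_snd μ

end HasFiniteMoments

variable {Ω ι : Type*} [MeasurableSpace Ω] {μ : Measure Ω} {X : Ω → ι → ℝ} {S : ι → ι → ℝ}

/-- `X` is a centred Gaussian vector with covariance matrix `S`. -/
structure IsCenteredGaussian (μ : Measure Ω) (X : Ω → ι → ℝ) (S : ι → ι → ℝ) : Prop where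
  hasGaussianLaw : HasGaussianLaw X μ
  integral_eq_zero : ∀ p, ∫ ω, X ω p ∂μ = 0
  integral_mul_eq : ∀ p q, ∫ ω, X ω p * X ω q ∂μ = S p q

namespace IsCenteredGaussian

lemma hasFiniteMoments (hX : IsCenteredGaussian μ X S) (p : ι) :
    HasFiniteMoments μ fun ω => X ω p :=
  fun _ hq => (hX.hasGaussianLaw.eval p).memLp hq

variable [IsProbabilityMeasure μ]

lemma covariance_eq (hX : IsCenteredGaussian μ X S) (p q : ι) :
    cov[fun ω => X ω p, fun ω => X ω q; μ] = S p q := by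
  rw [covariance_eq_sub (hX.hasFiniteMoments p 2 (by simp)) (hX.hasFiniteMoments q 2 (by simp))]
  simp only [Pi.mul_apply, hX.integral_mul_eq, hX.integral_eq_zero, mul_zero, sub_zero]

theorem integral_mul_eq_integral_fderiv [Fintype ι] (hX : IsCenteredGaussian μ X S) {p : ι}
    {F : (ι → ℝ) → ℝ} (hF : ContDiff ℝ 1 F) (hXF : Integrable (fun ω => X ω p * F (X ω)) μ)
    (hF_int : Integrable (fun ω => F (X ω)) μ)
    (hF' : Integrable (fun ω => fderiv ℝ F (X ω) (S p)) μ) :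
    ∫ ω, X ω p * F (X ω) ∂μ = ∫ ω, fderiv ℝ F (X ω) (S p) ∂μ := by
  have hS : (fun j => cov[fun ω => X ω p, fun ω => X ω j; μ]) = S p := funext (hX.covariance_eq p)
  have hibp := integral_mul_eq_integral_fderiv_of_hasGaussianLaw hX.hasGaussianLaw
    (hX.integral_eq_zero p) hF hXF hF_int (by rwa [hS])
  rwa [hS] at hibp

lemma integral_mul_mul_mul [Finite ι] (hX : IsCenteredGaussian μ X S) (p q r s : ι) :
    ∫ ω, X ω p * (X ω q * X ω r * X ω s) ∂μ = S p q * S r s + S p r * S q s + S p s * S q r := by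
  cases nonempty_fintype ι
  have hmom := hX.hasFiniteMoments
  have hderiv : ∀ x : ι → ℝ, fderiv ℝ (fun x => x q * x r * x s) x (S p) =
      S p q * (x r * x s) + S p r * (x q * x s) + S p s * (x q * x r) := fun x => by
    have hprod : HasFDerivAt (fun x : ι → ℝ => x q * x r * x s) _ x :=
      ((hasFDerivAt_apply (𝕜 := ℝ) q x).mul (hasFDerivAt_apply (𝕜 := ℝ) r x)).mul
        (hasFDerivAt_apply (𝕜 := ℝ) s x)
    rw [hprod.fderiv]
    simp only [Pi.mul_apply, add_apply, smul_apply, ContinuousLinearMap.proj_apply, smul_eq_mul]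
    ring
  have hterm_int : ∀ i a b, Integrable (fun ω => S p i * (X ω a * X ω b)) μ := fun i a b =>
    (((hmom a).mul (hmom b)).const_mul _).integrable
  rw [hX.integral_mul_eq_integral_fderiv (F := fun x => x q * x r * x s) (by fun_prop)
    ((hmom p).mul (((hmom q).mul (hmom r)).mul (hmom s))).integrable
    (((hmom q).mul (hmom r)).mul (hmom s)).integrable]
  all_goals simp only [hderiv]
  · rw [integral_add (by exact (hterm_int q r s).add (hterm_int r q s)) (hterm_int s q r),
      integral_add (hterm_int q r s) (hterm_int r q s)]
    simp only [integral_const_mul, hX.integral_mul_eq]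
  · exact ((hterm_int q r s).add (hterm_int r q s)).add (hterm_int s q r)

lemma hasSteinKernel [Fintype ι] (hX : IsCenteredGaussian μ X S) :
    HasSteinKernel μ (fun ω => WithLp.toLp 2 (X ω)) fun _ p => WithLp.toLp 2 (S p) where
  integrable := integrable_toLp fun p => (hX.hasFiniteMoments p).integrable
  integrable_kernel p := integrable_const _
  integral_mul_eq p f L M hf hL hM := by
    have hX_meas : AEStronglyMeasurable (fun ω => WithLp.toLp 2 (X ω)) μ :=
      (integrable_toLp fun p => (hX.hasFiniteMoments p).integrable).1
    have hfX := hf.continuous.comp_aestronglyMeasurable hX_meas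
    have hf'X := (hf.continuous_fderiv one_ne_zero).comp_aestronglyMeasurable hX_meas
    have hderiv : ∀ x v : ι → ℝ, fderiv ℝ (fun x => f (WithLp.toLp 2 x)) x v =
        fderiv ℝ f (WithLp.toLp 2 x) (WithLp.toLp 2 v) := fun x v => by
      have hcomp : HasFDerivAt (fun x => f (WithLp.toLp 2 x)) _ x :=
        (hf.differentiable one_ne_zero _).hasFDerivAt.comp x (PiLp.hasFDerivAt_toLp 2 x)
      rw [hcomp.fderiv]
      rfl
    rw [hX.integral_mul_eq_integral_fderiv (p := p) (F := fun x => f (WithLp.toLp 2 x))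
      (by fun_prop)]
    · simp only [hderiv]
    · exact (hX.hasFiniteMoments p).integrable.mul_bdd hfX (ae_of_all _ fun ω => hL _)
    · exact Integrable.of_bound hfX L (ae_of_all _ fun ω => hL _)
    · simp only [hderiv]
      exact integrable_clm_apply_of_norm_le hf'X (fun _ => hM _) (integrable_const _)

end IsCenteredGaussian

end CenteredGaussian

section Wishart

variable {ι κ Ω : Type*} [Fintype κ] [MeasurableSpace Ω] {μ : Measure Ω} {Y : Ω → ι × κ → ℝ}
  {δ : κ → κ → ℝ}

/-- The matrix `Y δ Yᵀ`, where `y` lists the entries of `Y`. -/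
def weightedGram (δ : κ → κ → ℝ) (y : ι × κ → ℝ) (i j : ι) : ℝ :=
  ∑ k, ∑ l, δ k l * (y (i, k) * y (j, l))

lemma hasFiniteMoments_weightedGram {S : ι × κ → ι × κ → ℝ} (hY : IsCenteredGaussian μ Y S)
    (i j : ι) : HasFiniteMoments μ fun ω => weightedGram δ (Y ω) i j :=
  HasFiniteMoments.sum _ fun _ _ => HasFiniteMoments.sum _ fun _ _ =>
    ((hY.hasFiniteMoments _).mul (hY.hasFiniteMoments _)).const_mul _

variable [DecidableEq ι]

/-- The entries of a matrix with independent rows, each with covariance `δ`, have this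
covariance. -/
def rowCov (δ : κ → κ → ℝ) (p q : ι × κ) : ℝ := if p.1 = q.1 then δ p.2 q.2 else 0

/-- The covariance `r (1_{ij=ab} + 1_{ji=ab})` of the entries of a GOE matrix. -/
def goeCov (r : ℝ) (p q : ι × ι) : ℝ :=
  r * ((if p = q then 1 else 0) + if p.swap = q then 1 else 0)

/-- The entries of the Wishart matrix `c (Y Yᵀ - |κ| I)`, where `y` lists the entries of `Y`. -/
def wishart (c : ℝ) (y : ι × κ → ℝ) (p : ι × ι) : ℝ :=
  c * ∑ k, (y (p.1, k) * y (p.2, k) - if p.1 = p.2 then 1 else 0)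

/-- The Kronecker product of the identity with `c² r⁻¹ Y δ Yᵀ`: the random factor relating the Stein
kernel of the Wishart matrix to the GOE covariance. -/
def wishartFactor (δ : κ → κ → ℝ) (c r : ℝ) (y : ι × κ → ℝ) : Matrix (ι × ι) (ι × ι) ℝ :=
  fun p q => if p.1 = q.1 then c ^ 2 * r⁻¹ * weightedGram δ y p.2 q.2 else 0

lemma hasFiniteMoments_wishart [IsProbabilityMeasure μ] {S : ι × κ → ι × κ → ℝ}
    (hY : IsCenteredGaussian μ Y S) (c : ℝ) (p : ι × ι) :
    HasFiniteMoments μ fun ω => wishart c (Y ω) p :=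
  (HasFiniteMoments.sum _ fun _ _ => ((hY.hasFiniteMoments _).mul (hY.hasFiniteMoments _)).sub
    (HasFiniteMoments.const _)).const_mul c

variable [Fintype ι]

lemma hasFDerivAt_wishart (c : ℝ) (y : ι × κ → ℝ) (p : ι × ι) :
    HasFDerivAt (fun y => wishart c y p)
      (c • ∑ k, (y (p.1, k) • ContinuousLinearMap.proj (R := ℝ) (φ := fun _ => ℝ) (p.2, k) +
        y (p.2, k) • ContinuousLinearMap.proj (R := ℝ) (φ := fun _ => ℝ) (p.1, k))) y :=
  (HasFDerivAt.fun_sum fun k _ => ((hasFDerivAt_apply (𝕜 := ℝ) (p.1, k) y).mul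
    (hasFDerivAt_apply (p.2, k) y)).sub_const _).const_mul c

lemma contDiff_toLp_wishart (c : ℝ) :
    ContDiff ℝ 1 fun y : ι × κ → ℝ => WithLp.toLp 2 (wishart (ι := ι) c y) := by
  unfold wishart
  fun_prop

lemma fderiv_toLp_wishart_apply (c : ℝ) (y w : ι × κ → ℝ) (p : ι × ι) :
    fderiv ℝ (fun y => WithLp.toLp 2 (wishart c y)) y w p =
      c * ∑ k, (y (p.1, k) * w (p.2, k) + y (p.2, k) * w (p.1, k)) := by
  have hdiff := (contDiff_toLp_wishart c).differentiable one_ne_zero y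
  have hcoord : HasFDerivAt (fun y => wishart c y p) _ y :=
    (EuclideanSpace.proj (𝕜 := ℝ) p).hasFDerivAt.comp y hdiff.hasFDerivAt
  have hw := congrArg (fun T => T w) (hcoord.unique (hasFDerivAt_wishart c y p))
  simpa using hw

lemma wishartFactor_mul_goeCov (δ : κ → κ → ℝ) {r : ℝ} (hr : r ≠ 0) (c : ℝ) (y : ι × κ → ℝ)
    (p s : ι × ι) : ∑ q, wishartFactor δ c r y p q * goeCov r q s =
      c ^ 2 * ((if p.1 = s.1 then weightedGram δ y p.2 s.2 else 0) +
        if p.1 = s.2 then weightedGram δ y p.2 s.1 else 0) := by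
  have hswap : ∀ q : ι × ι, q.swap = s ↔ q = s.swap := fun q => Prod.swap_eq_iff_eq_swap
  simp only [wishartFactor, goeCov, hswap, mul_add, Finset.sum_add_distrib, mul_ite, mul_one,
    mul_zero, Finset.sum_ite_eq', Finset.mem_univ, if_true, Prod.fst_swap, Prod.snd_swap, ite_mul,
    zero_mul]
  congr 1 <;> split_ifs <;> field_simp

lemma sum_smul_fderiv_wishart (δ : κ → κ → ℝ) {r : ℝ} (hr : r ≠ 0) (c : ℝ) (y : ι × κ → ℝ)
    (p : ι × ι) :
    ∑ k, (c * y (p.2, k)) •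
        fderiv ℝ (fun y => WithLp.toLp 2 (wishart c y)) y (rowCov δ (p.1, k)) =
      ∑ q, wishartFactor δ c r y p q • (WithLp.toLp 2 (goeCov r q) : EuclideanSpace ℝ (ι × ι)) := by
  ext s
  simp only [WithLp.ofLp_sum, WithLp.ofLp_smul, Finset.sum_apply, Pi.smul_apply, smul_eq_mul,
    fderiv_toLp_wishart_apply, wishartFactor_mul_goeCov δ hr, rowCov, weightedGram]
  split_ifs <;> simp only [mul_zero, add_zero, zero_add, Finset.sum_const_zero, Finset.mul_sum,
    ← Finset.sum_add_distrib] <;>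
    exact Finset.sum_congr rfl fun k _ => Finset.sum_congr rfl fun l _ => by ring

lemma fderiv_mul_comp_wishart_rowCov (hδ : ∀ k, δ k k = 1) {f : EuclideanSpace ℝ (ι × ι) → ℝ}
    (hf : Differentiable ℝ f) (c : ℝ) (y : ι × κ → ℝ) (p : ι × ι) (k : κ) :
    fderiv ℝ (fun y => y (p.2, k) * f (WithLp.toLp 2 (wishart c y))) y (rowCov δ (p.1, k)) =
      (if p.1 = p.2 then 1 else 0) * f (WithLp.toLp 2 (wishart c y)) +
        fderiv ℝ f (WithLp.toLp 2 (wishart c y)) (y (p.2, k) •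
          fderiv ℝ (fun y => WithLp.toLp 2 (wishart c y)) y (rowCov δ (p.1, k))) := by
  have hprod : HasFDerivAt (fun y => y (p.2, k) * f (WithLp.toLp 2 (wishart c y))) _ y :=
    (hasFDerivAt_apply (𝕜 := ℝ) (p.2, k) y).mul ((hf _).hasFDerivAt.comp
      y ((contDiff_toLp_wishart c).differentiable one_ne_zero y).hasFDerivAt)
  rw [hprod.fderiv]
  simp only [rowCov, hδ, add_apply, smul_apply, ContinuousLinearMap.comp_apply,
    ContinuousLinearMap.proj_apply, smul_eq_mul, map_smul]
  ring

lemma integrable_smul_fderiv_wishart {S : ι × κ → ι × κ → ℝ} (hY : IsCenteredGaussian μ Y S)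
    (c : ℝ) (s : ι × κ) (w : ι × κ → ℝ) :
    Integrable (fun ω => Y ω s •
      fderiv ℝ (fun y => WithLp.toLp 2 (wishart (ι := ι) c y)) (Y ω) w) μ := by
  have hmom := hY.hasFiniteMoments
  refine integrable_toLp (f := fun ω p => Y ω s *
    fderiv ℝ (fun y => WithLp.toLp 2 (wishart c y)) (Y ω) w p) fun p => ?_
  simp only [fderiv_toLp_wishart_apply, mul_comm _ (w _)]
  exact ((hmom s).mul ((HasFiniteMoments.sum _ fun k _ =>
    ((hmom _).const_mul _).add ((hmom _).const_mul _)).const_mul c)).integrable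

variable [IsProbabilityMeasure μ] {f : EuclideanSpace ℝ (ι × ι) → ℝ} {L M : ℝ}

lemma integrable_toLp_wishart {S : ι × κ → ι × κ → ℝ} (hY : IsCenteredGaussian μ Y S) (c : ℝ) :
    Integrable (fun ω => WithLp.toLp 2 (wishart (ι := ι) c (Y ω))) μ :=
  integrable_toLp fun p => (hasFiniteMoments_wishart hY c p).integrable

lemma hasFiniteMoments_comp_wishart {S : ι × κ → ι × κ → ℝ} (hY : IsCenteredGaussian μ Y S) (c : ℝ)
    (hf : Continuous f) (hL : ∀ x, |f x| ≤ L) :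
    HasFiniteMoments μ fun ω => f (WithLp.toLp 2 (wishart c (Y ω))) := fun _ _ =>
  MemLp.of_bound (hf.comp_aestronglyMeasurable (integrable_toLp_wishart hY c).1) L
    (ae_of_all _ fun _ => hL _)

lemma integrable_fderiv_comp_wishart {S : ι × κ → ι × κ → ℝ} (hY : IsCenteredGaussian μ Y S)
    (c : ℝ) (hf : ContDiff ℝ 1 f) (hM : ∀ x, ‖fderiv ℝ f x‖ ≤ M) (s : ι × κ) (w : ι × κ → ℝ) :
    Integrable (fun ω => fderiv ℝ f (WithLp.toLp 2 (wishart c (Y ω))) (Y ω s •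
      fderiv ℝ (fun y => WithLp.toLp 2 (wishart c y)) (Y ω) w)) μ :=
  integrable_clm_apply_of_norm_le ((hf.continuous_fderiv one_ne_zero).comp_aestronglyMeasurable
    (integrable_toLp_wishart hY c).1) (fun _ => hM _) (integrable_smul_fderiv_wishart hY c s w)

lemma integral_mul_mul_comp_wishart (hY : IsCenteredGaussian μ Y (rowCov δ)) (hδ : ∀ k, δ k k = 1)
    (c : ℝ) (hf : ContDiff ℝ 1 f) (hL : ∀ x, |f x| ≤ L) (hM : ∀ x, ‖fderiv ℝ f x‖ ≤ M) (p : ι × ι)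
    (k : κ) :
    ∫ ω, (Y ω (p.1, k) * Y ω (p.2, k) - if p.1 = p.2 then 1 else 0) *
        f (WithLp.toLp 2 (wishart c (Y ω))) ∂μ =
      ∫ ω, fderiv ℝ f (WithLp.toLp 2 (wishart c (Y ω))) (Y ω (p.2, k) •
        fderiv ℝ (fun y => WithLp.toLp 2 (wishart c y)) (Y ω) (rowCov δ (p.1, k))) ∂μ := by
  have hfX := hasFiniteMoments_comp_wishart hY c hf.continuous hL
  have hF : ContDiff ℝ 1 fun y => y (p.2, k) * f (WithLp.toLp 2 (wishart c y)) :=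
    (contDiff_apply ℝ ℝ (p.2, k)).mul (hf.comp (contDiff_toLp_wishart c))
  have hderiv := fun y => fderiv_mul_comp_wishart_rowCov hδ (hf.differentiable one_ne_zero) c y p k
  have hfX_ite := (hfX.const_mul (if p.1 = p.2 then 1 else 0)).integrable
  have hf'X := integrable_fderiv_comp_wishart hY c hf hM (p.2, k) (rowCov δ (p.1, k))
  have hFX := (hY.hasFiniteMoments (p.2, k)).mul hfX
  have hYFX := ((hY.hasFiniteMoments (p.1, k)).mul hFX).integrable
  have hibp := hY.integral_mul_eq_integral_fderiv hF hYFX hFX.integrable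
    ((hfX_ite.add hf'X).congr (ae_of_all _ fun ω => (hderiv _).symm))
  simp only [hderiv] at hibp
  rw [integral_add hfX_ite hf'X, ← sub_eq_iff_eq_add', ← integral_sub hYFX hfX_ite] at hibp
  rw [← hibp]
  exact integral_congr_ae (ae_of_all _ fun ω => by ring)

theorem hasSteinKernel_wishart (hY : IsCenteredGaussian μ Y (rowCov δ)) (hδ : ∀ k, δ k k = 1)
    (c : ℝ) {r : ℝ} (hr : r ≠ 0) :
    HasSteinKernel μ (fun ω => WithLp.toLp 2 (wishart (ι := ι) c (Y ω))) fun ω p =>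
      ∑ q, wishartFactor δ c r (Y ω) p q • WithLp.toLp 2 (goeCov r q) where
  integrable := integrable_toLp_wishart hY c
  integrable_kernel p := by
    simp only [← sum_smul_fderiv_wishart δ hr, mul_smul]
    exact integrable_finsetSum _ fun k _ => (integrable_smul_fderiv_wishart hY c _ _).smul c
  integral_mul_eq p f L M hf hL hM := by
    have hfX := hasFiniteMoments_comp_wishart hY c hf.continuous hL
    have hYY : ∀ k, Integrable (fun ω => (Y ω (p.1, k) * Y ω (p.2, k) -
        if p.1 = p.2 then 1 else 0) * f (WithLp.toLp 2 (wishart c (Y ω)))) μ := fun k =>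
      ((((hY.hasFiniteMoments _).mul (hY.hasFiniteMoments _)).sub (.const _)).mul hfX).integrable
    calc ∫ ω, wishart c (Y ω) p * f (WithLp.toLp 2 (wishart c (Y ω))) ∂μ
        = c * ∑ k, ∫ ω, (Y ω (p.1, k) * Y ω (p.2, k) - if p.1 = p.2 then 1 else 0) *
            f (WithLp.toLp 2 (wishart c (Y ω))) ∂μ := by
          rw [← integral_finsetSum _ fun k _ => hYY k, ← integral_const_mul]
          simp only [← Finset.sum_mul, ← mul_assoc]
          rfl
      _ = c * ∑ k, ∫ ω, fderiv ℝ f (WithLp.toLp 2 (wishart c (Y ω))) (Y ω (p.2, k) •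
            fderiv ℝ (fun y => WithLp.toLp 2 (wishart c y)) (Y ω) (rowCov δ (p.1, k))) ∂μ := by
          simp only [integral_mul_mul_comp_wishart hY hδ c hf hL hM]
      _ = ∫ ω, fderiv ℝ f (WithLp.toLp 2 (wishart c (Y ω)))
            (∑ q, wishartFactor δ c r (Y ω) p q • WithLp.toLp 2 (goeCov r q)) ∂μ := by
          rw [← integral_finsetSum _ fun k _ => integrable_fderiv_comp_wishart hY c hf hM _ _,
            ← integral_const_mul]
          simp only [← sum_smul_fderiv_wishart δ hr, mul_smul, ← Finset.smul_sum, map_smul, map_sum,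
            smul_eq_mul]

end Wishart

section SecondMoments

variable {ι κ Ω Ω' : Type*} [Fintype κ] [MeasurableSpace Ω] [MeasurableSpace Ω'] {μ : Measure Ω}
  {ν : Measure Ω'}

/-- The squared Hilbert–Schmidt norm `tr (δ δᵀ)`. -/
def corrSq (δ : κ → κ → ℝ) : ℝ := ∑ k, ∑ l, δ k l ^ 2

/-- The sum of `δ` over closed walks of length four, equal to `tr (δ⁴)` for symmetric `δ`. -/
def corrFour (δ : κ → κ → ℝ) : ℝ :=
  ∑ k, ∑ l, ∑ k', ∑ l', δ k l * δ k' l' * (δ k k' * δ l l')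

lemma integral_sq_sum {σ : Type*} [Fintype σ] {f : σ → Ω → ℝ}
    (hf : ∀ a b, Integrable (fun ω => f a ω * f b ω) μ) :
    ∫ ω, (∑ a, f a ω) ^ 2 ∂μ = ∑ a, ∑ b, ∫ ω, f a ω * f b ω ∂μ := by
  simp only [sq, Finset.sum_mul_sum]
  rw [integral_finsetSum _ fun a _ => integrable_finsetSum _ fun b _ => hf a b]
  exact Finset.sum_congr rfl fun a _ => integral_finsetSum _ fun b _ => hf a b

variable [DecidableEq ι] {Y : Ω → ι × κ → ℝ} {δ : κ → κ → ℝ}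

lemma integral_weightedGram (hY : IsCenteredGaussian μ Y (rowCov δ)) (i j : ι) :
    ∫ ω, weightedGram δ (Y ω) i j ∂μ = if i = j then corrSq δ else 0 := by
  have hterm_int : ∀ k l, Integrable (fun ω => δ k l * (Y ω (i, k) * Y ω (j, l))) μ := fun k l =>
    (((hY.hasFiniteMoments _).mul (hY.hasFiniteMoments _)).const_mul _).integrable
  simp only [weightedGram, corrSq]
  rw [integral_finsetSum _ fun k _ => integrable_finsetSum _ fun l _ => hterm_int k l]
  simp only [integral_finsetSum _ fun l _ => hterm_int _ l, integral_const_mul, hY.integral_mul_eq,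
    rowCov]
  split_ifs <;> simp only [sq, mul_zero, Finset.sum_const_zero]

variable [IsProbabilityMeasure μ]

/-- The deviation `c² r⁻¹ Y δ Yᵀ - I`. -/
def gramDeviation (δ : κ → κ → ℝ) (c r : ℝ) (y : ι × κ → ℝ) (i j : ι) : ℝ :=
  c ^ 2 * r⁻¹ * weightedGram δ y i j - if i = j then 1 else 0

lemma hasFiniteMoments_gramDeviation {S : ι × κ → ι × κ → ℝ} (hY : IsCenteredGaussian μ Y S)
    (c r : ℝ) (i j : ι) : HasFiniteMoments μ fun ω => gramDeviation δ c r (Y ω) i j :=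
  ((hasFiniteMoments_weightedGram hY i j).const_mul _).sub (.const _)

variable [IsProbabilityMeasure ν] {r : ℝ} {Z : Ω' → ι × ι → ℝ}

lemma hasFiniteMoments_gramDeviation_mul {S : ι × κ → ι × κ → ℝ} (hY : IsCenteredGaussian μ Y S)
    (hZ : IsCenteredGaussian ν Z (goeCov r)) (c : ℝ) (i j q : ι) :
    HasFiniteMoments (μ.prod ν) fun ω => gramDeviation δ c r (Y ω.1) j q * Z ω.2 (i, q) :=
  ((hasFiniteMoments_gramDeviation hY c r j q).comp_fst ν).mul ((hZ.hasFiniteMoments _).comp_snd μ)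

variable [Fintype ι]

lemma integral_weightedGram_sq (hY : IsCenteredGaussian μ Y (rowCov δ))
    (hδ : ∀ k l, δ k l = δ l k) (i j : ι) :
    ∫ ω, weightedGram δ (Y ω) i j ^ 2 ∂μ =
      corrFour δ + if i = j then corrSq δ ^ 2 + corrFour δ else 0 := by
  have hmom := hY.hasFiniteMoments
  have hwick : ∀ s t : κ × κ, ∫ ω, δ s.1 s.2 * (Y ω (i, s.1) * Y ω (j, s.2)) *
      (δ t.1 t.2 * (Y ω (i, t.1) * Y ω (j, t.2))) ∂μ =
        δ s.1 s.2 * δ t.1 t.2 * (δ s.1 t.1 * δ s.2 t.2) +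
          if i = j then δ s.1 s.2 ^ 2 * δ t.1 t.2 ^ 2 +
            δ s.1 s.2 * δ t.2 t.1 * (δ s.1 t.2 * δ s.2 t.1) else 0 := fun s t => by
    have hw := hY.integral_mul_mul_mul (i, s.1) (j, s.2) (i, t.1) (j, t.2)
    calc _ = ∫ ω, δ s.1 s.2 * δ t.1 t.2 *
          (Y ω (i, s.1) * (Y ω (j, s.2) * Y ω (i, t.1) * Y ω (j, t.2))) ∂μ :=
          integral_congr_ae (ae_of_all _ fun ω => by ring)
      _ = _ := by
        rw [integral_const_mul, hw]
        simp only [rowCov, if_true, eq_comm (a := j), hδ t.2 t.1]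
        split_ifs <;> ring
  have hsum : ∀ ω, weightedGram δ (Y ω) i j =
      ∑ s : κ × κ, δ s.1 s.2 * (Y ω (i, s.1) * Y ω (j, s.2)) := fun ω =>
    (Fintype.sum_prod_type' fun k l => δ k l * (Y ω (i, k) * Y ω (j, l))).symm
  simp only [hsum]
  rw [integral_sq_sum fun s t => ((((hmom _).mul (hmom _)).const_mul _).mul
    (((hmom _).mul (hmom _)).const_mul _)).integrable]
  simp only [hwick, Finset.sum_add_distrib, corrFour, corrSq, Fintype.sum_prod_type]
  congr 1
  split_ifs
  · simp only [Finset.sum_add_distrib, sq (∑ _, _), Finset.sum_mul, Finset.mul_sum]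
    congr 1 <;> refine Finset.sum_congr rfl fun k _ => Finset.sum_congr rfl fun l _ => ?_
    · exact Finset.sum_congr rfl fun _ _ => Finset.sum_congr rfl fun _ _ => mul_comm _ _
    · exact Finset.sum_comm
  · simp only [Finset.sum_const_zero]

lemma sum_integral_gramDeviation_sq (hY : IsCenteredGaussian μ Y (rowCov δ))
    (hδ : ∀ k l, δ k l = δ l k) (c r : ℝ) :
    ∑ i, ∑ j, ∫ ω, gramDeviation δ c r (Y ω) i j ^ 2 ∂μ =
      (c ^ 2 * r⁻¹) ^ 2 * (Fintype.card ι * (Fintype.card ι + 1) * corrFour δ) +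
        Fintype.card ι * (c ^ 2 * r⁻¹ * corrSq δ - 1) ^ 2 := by
  have hentry : ∀ i j, ∫ ω, gramDeviation δ c r (Y ω) i j ^ 2 ∂μ =
      (c ^ 2 * r⁻¹) ^ 2 * corrFour δ + if i = j then
        (c ^ 2 * r⁻¹) ^ 2 * corrFour δ + (c ^ 2 * r⁻¹ * corrSq δ - 1) ^ 2 else 0 := fun i j => by
    set a := c ^ 2 * r⁻¹
    set b : ℝ := if i = j then 1 else 0
    have hG := hasFiniteMoments_weightedGram (δ := δ) hY i j
    have hsq := ((hG.mul hG).const_mul (a ^ 2)).integrable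
    have hlin := (hG.const_mul (2 * a * b)).integrable
    calc ∫ ω, gramDeviation δ c r (Y ω) i j ^ 2 ∂μ
        = ∫ ω, (a ^ 2 * (weightedGram δ (Y ω) i j * weightedGram δ (Y ω) i j) -
            2 * a * b * weightedGram δ (Y ω) i j + b ^ 2) ∂μ :=
          integral_congr_ae (ae_of_all _ fun ω => by simp only [gramDeviation]; ring)
      _ = a ^ 2 * ∫ ω, weightedGram δ (Y ω) i j ^ 2 ∂μ -
            2 * a * b * ∫ ω, weightedGram δ (Y ω) i j ∂μ + b ^ 2 := by
          rw [integral_add (by exact hsq.sub hlin) (integrable_const _), integral_sub hsq hlin]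
          simp only [integral_const_mul, integral_const, probReal_univ, one_smul, sq]
      _ = _ := by
          rw [integral_weightedGram_sq hY hδ, integral_weightedGram hY]
          simp only [b]
          split_ifs <;> ring
  simp only [hentry, Finset.sum_add_distrib, Finset.sum_ite_eq, Finset.mem_univ, if_true,
    Finset.sum_const, Finset.card_univ, nsmul_eq_mul]
  ring

lemma integral_sq_sum_gramDeviation_mul {S : ι × κ → ι × κ → ℝ} (hY : IsCenteredGaussian μ Y S)
    (hZ : IsCenteredGaussian ν Z (goeCov r)) (c : ℝ) (i j : ι) :
    ∫ ω, (∑ q, gramDeviation δ c r (Y ω.1) j q * Z ω.2 (i, q)) ^ 2 ∂μ.prod ν =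
      r * (∑ q, ∫ ω, gramDeviation δ c r (Y ω) j q ^ 2 ∂μ +
        ∫ ω, gramDeviation δ c r (Y ω) j i ^ 2 ∂μ) := by
  have hfactor : ∀ (ω : Ω × Ω') q q', gramDeviation δ c r (Y ω.1) j q * Z ω.2 (i, q) *
      (gramDeviation δ c r (Y ω.1) j q' * Z ω.2 (i, q')) =
        gramDeviation δ c r (Y ω.1) j q * gramDeviation δ c r (Y ω.1) j q' *
          (Z ω.2 (i, q) * Z ω.2 (i, q')) := fun _ _ _ => mul_mul_mul_comm _ _ _ _
  rw [integral_sq_sum fun q q' => ((hasFiniteMoments_gramDeviation_mul hY hZ c i j q).mul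
    (hasFiniteMoments_gramDeviation_mul hY hZ c i j q')).integrable]
  simp only [hfactor]
  have hprod : ∀ q q', ∫ ω : Ω × Ω', gramDeviation δ c r (Y ω.1) j q *
      gramDeviation δ c r (Y ω.1) j q' * (Z ω.2 (i, q) * Z ω.2 (i, q')) ∂μ.prod ν =
        (∫ ω, gramDeviation δ c r (Y ω) j q * gramDeviation δ c r (Y ω) j q' ∂μ) *
          goeCov r (i, q) (i, q') := fun q q' => by
    rw [← hZ.integral_mul_eq]
    exact integral_prod_mul
      (fun ω => gramDeviation δ c r (Y ω) j q * gramDeviation δ c r (Y ω) j q')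
      fun ω => Z ω (i, q) * Z ω (i, q')
  simp only [hprod, goeCov, Prod.mk.injEq, true_and, Prod.swap_prod_mk, and_comm (b := i = _),
    ite_and, mul_add, mul_ite, mul_one, mul_zero, Finset.sum_add_distrib, Finset.sum_ite_eq,
    Finset.sum_ite_eq', Finset.mem_univ, if_true, ← sq, ← Finset.sum_mul]
  ring

lemma norm_wishartFactor_mulVec_sub (δ : κ → κ → ℝ) (c r : ℝ) (y : ι × κ → ℝ) (z : ι × ι → ℝ) :
    ‖WithLp.toLp 2 ((wishartFactor δ c r y).mulVec z) - WithLp.toLp 2 z‖ =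
      √(∑ i, ∑ j, (∑ q, gramDeviation δ c r y j q * z (i, q)) ^ 2) := by
  have hmulVec : ∀ i j, (wishartFactor δ c r y).mulVec z (i, j) =
      ∑ q, c ^ 2 * r⁻¹ * weightedGram δ y j q * z (i, q) := fun i j => by
    simp only [Matrix.mulVec, dotProduct, wishartFactor, ite_mul, zero_mul]
    rw [Fintype.sum_prod_type, Finset.sum_comm]
    simp only [Finset.sum_ite_eq, Finset.mem_univ, if_true]
  rw [EuclideanSpace.norm_eq, Fintype.sum_prod_type]
  simp only [WithLp.ofLp_sub, Pi.sub_apply, hmulVec, Real.norm_eq_abs, sq_abs, gramDeviation,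
    sub_mul, Finset.sum_sub_distrib, ite_mul, zero_mul, one_mul, Finset.sum_ite_eq,
    Finset.mem_univ, if_true]

lemma integral_sqrt_le {f : Ω → ℝ} (hf : Integrable f μ) (hnonneg : ∀ ω, 0 ≤ f ω) :
    ∫ ω, √(f ω) ∂μ ≤ √(∫ ω, f ω ∂μ) := by
  have hsq : ∀ ω, √(f ω) ^ 2 = f ω := fun ω => Real.sq_sqrt (hnonneg ω)
  have hmemLp : MemLp (fun ω => √(f ω)) 2 μ :=
    (memLp_two_iff_integrable_sq
      (Real.continuous_sqrt.comp_aestronglyMeasurable hf.1)).2 (by simpa only [hsq] using hf)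
  have hvar := variance_nonneg (fun ω => √(f ω)) μ
  rw [variance_eq_sub hmemLp] at hvar
  simp only [Pi.pow_apply, hsq] at hvar
  exact Real.le_sqrt_of_sq_le (sub_nonneg.1 hvar)

lemma integral_norm_wishartFactor_mulVec_sub_le (hY : IsCenteredGaussian μ Y (rowCov δ))
    (hδ : ∀ k l, δ k l = δ l k) (hZ : IsCenteredGaussian ν Z (goeCov r)) (c : ℝ) :
    ∫ ω, ‖WithLp.toLp 2 ((wishartFactor δ c r (Y ω.1)).mulVec (Z ω.2)) -
        WithLp.toLp 2 (Z ω.2)‖ ∂μ.prod ν ≤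
      √(r * (Fintype.card ι + 1) *
        ((c ^ 2 * r⁻¹) ^ 2 * (Fintype.card ι * (Fintype.card ι + 1) * corrFour δ) +
          Fintype.card ι * (c ^ 2 * r⁻¹ * corrSq δ - 1) ^ 2)) := by
  have hmom : ∀ i j, HasFiniteMoments (μ.prod ν) fun ω =>
      ∑ q, gramDeviation δ c r (Y ω.1) j q * Z ω.2 (i, q) := fun i j =>
    .sum _ fun q _ => hasFiniteMoments_gramDeviation_mul hY hZ c i j q
  have hterm_int : ∀ i j, Integrable (fun ω =>
      (∑ q, gramDeviation δ c r (Y ω.1) j q * Z ω.2 (i, q)) ^ 2) (μ.prod ν) := fun i j => by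
    simpa only [sq] using ((hmom i j).mul (hmom i j)).integrable
  simp only [norm_wishartFactor_mulVec_sub]
  refine (integral_sqrt_le (integrable_finsetSum _ fun i _ => integrable_finsetSum _ fun j _ =>
    hterm_int i j) fun ω => by positivity).trans (le_of_eq (congrArg _ ?_))
  rw [integral_finsetSum _ fun i _ => integrable_finsetSum _ fun j _ => hterm_int i j,
    ← sum_integral_gramDeviation_sq hY hδ]
  simp only [integral_finsetSum _ fun j _ => hterm_int _ j, integral_sq_sum_gramDeviation_mul hY hZ,
    ← Finset.mul_sum, Finset.sum_add_distrib, Finset.sum_const, Finset.card_univ, nsmul_eq_mul]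
  rw [Finset.sum_comm (f := fun i j => ∫ ω, gramDeviation δ c r (Y ω) j i ^ 2 ∂μ)]
  ring

theorem abs_integral_wishart_sub_le (hY : IsCenteredGaussian μ Y (rowCov δ))
    (hdiag : ∀ k, δ k k = 1) (hδ : ∀ k l, δ k l = δ l k) (hr : r ≠ 0)
    (hZ : IsCenteredGaussian ν Z (goeCov r)) (c : ℝ) {g : EuclideanSpace ℝ (ι × ι) → ℝ}
    (hg : LipschitzWith 1 g) :
    |∫ ω, g (WithLp.toLp 2 (wishart c (Y ω))) ∂μ - ∫ ω, g (WithLp.toLp 2 (Z ω)) ∂ν| ≤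
      Real.pi / 2 * √(r * (Fintype.card ι + 1) *
        ((c ^ 2 * r⁻¹) ^ 2 * (Fintype.card ι * (Fintype.card ι + 1) * corrFour δ) +
          Fintype.card ι * (c ^ 2 * r⁻¹ * corrSq δ - 1) ^ 2)) := by
  have hfactor : ∀ p q, Integrable (fun ω => wishartFactor δ c r (Y ω) p q) μ := fun p q => by
    unfold wishartFactor
    split_ifs
    · exact ((hasFiniteMoments_weightedGram hY _ _).const_mul _).integrable
    · exact integrable_const _
  refine (abs_integral_sub_le_of_lipschitzWith (hasSteinKernel_wishart hY hdiag c hr)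
    hZ.hasSteinKernel hfactor hg).trans ?_
  exact mul_le_mul_of_nonneg_left (integral_norm_wishartFactor_mulVec_sub_le hY hδ hZ c)
    (by positivity)

end SecondMoments

section GaussianFamilies

variable {Ω : Type*} [MeasurableSpace Ω] {μ : Measure Ω}

lemma integral_eq_zero_of_map_eq_gaussianReal {f : Ω → ℝ} (hf : Measurable f) {v : NNReal}
    (h : μ.map f = gaussianReal 0 v) : ∫ ω, f ω ∂μ = 0 := by
  rw [← integral_map (f := fun x : ℝ => x) hf.aemeasurable (by fun_prop), h,
    integral_id_gaussianReal]

lemma integral_mul_self_of_map_eq_gaussianReal {f : Ω → ℝ} (hf : Measurable f) {v : NNReal}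
    (h : μ.map f = gaussianReal 0 v) : ∫ ω, f ω * f ω ∂μ = v := by
  have hvar := variance_fun_id_gaussianReal (μ := 0) (v := v)
  rw [variance_eq_integral (by fun_prop)] at hvar
  rw [← integral_map (f := fun x : ℝ => x * x) hf.aemeasurable (by fun_prop), h]
  simpa only [integral_id_gaussianReal, sub_zero, sq] using hvar

namespace IsCenteredGaussianFamily

variable {ι : Type*} {X : ι → Ω → ℝ}

lemma comp_injective (hX : IsCenteredGaussianFamily μ X) {κ : Type*} {e : κ → ι}
    (he : Function.Injective e) : IsCenteredGaussianFamily μ fun k => X (e k) := fun s c => by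
  obtain ⟨v, hv⟩ := hX (s.map ⟨e, he⟩) (Function.extend e c 0)
  simp only [Finset.sum_map, Function.Embedding.coeFn_mk, he.extend_apply] at hv
  exact ⟨v, hv⟩

lemma integral_eq_zero (hX : IsCenteredGaussianFamily μ X) (hmeas : ∀ p, Measurable (X p)) (p : ι) :
    ∫ ω, X p ω ∂μ = 0 := by
  obtain ⟨v, hv⟩ := hX {p} 1
  simp only [Finset.sum_singleton, Pi.one_apply, one_mul] at hv
  exact integral_eq_zero_of_map_eq_gaussianReal (hmeas p) hv

lemma hasGaussianLaw [Finite ι] (hX : IsCenteredGaussianFamily μ X)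
    (hmeas : ∀ p, Measurable (X p)) : HasGaussianLaw (fun ω p => X p ω) μ := by
  classical
  cases nonempty_fintype ι
  refine ⟨isGaussian_of_map_eq_gaussianReal fun L => ?_⟩
  obtain ⟨v, hv⟩ := hX Finset.univ fun p => L fun q => if p = q then 1 else 0
  refine ⟨0, v, ?_⟩
  rw [Measure.map_map L.continuous.measurable (measurable_pi_lambda _ hmeas), ← hv]
  congr 1
  ext ω
  have hL := L.toLinearMap.pi_apply_eq_sum_univ fun p => X p ω
  simp only [ContinuousLinearMap.coe_coe, smul_eq_mul, mul_comm (X _ ω)] at hL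
  exact hL

lemma isCenteredGaussian [Finite ι] (hX : IsCenteredGaussianFamily μ X)
    (hmeas : ∀ p, Measurable (X p)) {S : ι → ι → ℝ} (hS : ∀ p q, ∫ ω, X p ω * X q ω ∂μ = S p q) :
    IsCenteredGaussian μ (fun ω p => X p ω) S :=
  ⟨hX.hasGaussianLaw hmeas, hX.integral_eq_zero hmeas, hS⟩

end IsCenteredGaussianFamily

end GaussianFamilies

section GOE

variable {ι : Type*} [LinearOrder ι]

/-- The representative above the diagonal of a matrix position, up to transposition. -/
def upperEntry (p : ι × ι) : {p : ι × ι // p.1 ≤ p.2} := ⟨(min p.1 p.2, max p.1 p.2), min_le_max⟩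

lemma upperEntry_eq_upperEntry_iff {p q : ι × ι} :
    upperEntry p = upperEntry q ↔ p = q ∨ p.swap = q := by
  obtain ⟨a, b⟩ := p
  obtain ⟨c, d⟩ := q
  simp only [upperEntry, Subtype.mk.injEq, Prod.mk.injEq, Prod.swap_prod_mk]
  rcases le_total a b with hab | hab <;> rcases le_total c d with hcd | hcd <;>
    simp only [hab, hcd, min_eq_left, min_eq_right, max_eq_left, max_eq_right] <;> grind

lemma apply_upperEntry {A : Matrix ι ι ℝ} (hA : ∀ i j, A i j = A j i) (p : ι × ι) :
    A (upperEntry p).1.1 (upperEntry p).1.2 = A p.1 p.2 := by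
  rcases le_total p.1 p.2 with h | h
  · simp only [upperEntry, min_eq_left h, max_eq_right h]
  · simp only [upperEntry, min_eq_right h, max_eq_left h, hA p.1 p.2]

variable {Ω : Type*} [MeasurableSpace Ω] {μ : Measure Ω} {r : ℝ} {Z : Ω → Matrix ι ι ℝ}

lemma integral_mul_self_goe (hr : 0 ≤ r) (hmeas : ∀ i j, Measurable fun ω => Z ω i j)
    (hdiag : ∀ i, μ.map (fun ω => Z ω i i) = gaussianReal 0 (2 * r).toNNReal)
    (hoff : ∀ i j, i ≠ j → μ.map (fun ω => Z ω i j) = gaussianReal 0 r.toNNReal) (p : ι × ι) :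
    ∫ ω, Z ω p.1 p.2 * Z ω p.1 p.2 ∂μ = goeCov r p p := by
  obtain ⟨i, j⟩ := p
  rcases eq_or_ne i j with rfl | hij
  · rw [integral_mul_self_of_map_eq_gaussianReal (hmeas i i) (hdiag i),
      Real.coe_toNNReal _ (by positivity)]
    simp only [goeCov, Prod.swap_prod_mk, if_true]
    ring
  · rw [integral_mul_self_of_map_eq_gaussianReal (hmeas i j) (hoff i j hij),
      Real.coe_toNNReal _ hr]
    simp only [goeCov, Prod.swap_prod_mk, Prod.mk.injEq, hij, hij.symm, and_self, if_true, if_false,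
      add_zero, mul_one]

lemma isCenteredGaussian_goe [Finite ι] (hr : 0 ≤ r)
    (hmeas : ∀ i j, Measurable fun ω => Z ω i j) (hsymm : ∀ ω i j, Z ω i j = Z ω j i)
    (hdiag : ∀ i, μ.map (fun ω => Z ω i i) = gaussianReal 0 (2 * r).toNNReal)
    (hoff : ∀ i j, i ≠ j → μ.map (fun ω => Z ω i j) = gaussianReal 0 r.toNNReal)
    (hindep : iIndepFun (fun (p : {p : ι × ι // p.1 ≤ p.2}) ω => Z ω p.1.1 p.1.2) μ) :
    IsCenteredGaussian μ (fun ω p => Z ω p.1 p.2) (goeCov r) := by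
  cases nonempty_fintype ι
  have hlaw : ∀ i j, ∃ v, μ.map (fun ω => Z ω i j) = gaussianReal 0 v := fun i j => by
    rcases eq_or_ne i j with rfl | hij
    exacts [⟨_, hdiag i⟩, ⟨_, hoff i j hij⟩]
  have hmean : ∀ i j, ∫ ω, Z ω i j ∂μ = 0 := fun i j =>
    (hlaw i j).elim fun _ => integral_eq_zero_of_map_eq_gaussianReal (hmeas i j)
  have hupper : HasGaussianLaw (fun ω (p : {p : ι × ι // p.1 ≤ p.2}) => Z ω p.1.1 p.1.2) μ :=
    hindep.hasGaussianLaw fun p => (hlaw p.1.1 p.1.2).elim fun _ hv => ⟨hv ▸ inferInstance⟩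
  let extend : ({p : ι × ι // p.1 ≤ p.2} → ℝ) →L[ℝ] (ι × ι → ℝ) :=
    ContinuousLinearMap.pi fun p => ContinuousLinearMap.proj (upperEntry p)
  refine ⟨?_, fun p => hmean _ _, fun p q => ?_⟩
  · simpa only [extend, ContinuousLinearMap.coe_pi', ContinuousLinearMap.proj_apply,
      apply_upperEntry (hsymm _)] using hupper.map_fun extend
  · by_cases hpq : p = q ∨ p.swap = q
    · have hZ : ∀ ω, Z ω q.1 q.2 = Z ω p.1 p.2 := fun ω => by
        rcases hpq with rfl | rfl
        exacts [rfl, hsymm ω _ _]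
      have hcov : goeCov r p q = goeCov r p p := by
        rcases hpq with rfl | rfl
        · rfl
        · simp only [goeCov, if_true, eq_comm (a := p), add_comm]
      simp only [hZ, hcov, integral_mul_self_goe hr hmeas hdiag hoff]
    · have hne := mt upperEntry_eq_upperEntry_iff.1 hpq
      have hmul := (hindep.indepFun hne).integral_fun_mul_eq_mul_integral
        (hmeas _ _).aestronglyMeasurable (hmeas _ _).aestronglyMeasurable
      simp only [apply_upperEntry (hsymm _), hmean, mul_zero] at hmul
      rw [not_or] at hpq
      simp only [hmul, goeCov, hpq, if_false, add_zero, mul_zero]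

end GOE

section Wasserstein

variable {Ω Ω' : Type*} [MeasurableSpace Ω] [MeasurableSpace Ω'] {μ : Measure Ω} {ν : Measure Ω'}

lemma wassersteinDist_comp_le {E F : Type*} [NormedAddCommGroup E] [NormedAddCommGroup F]
    {U : Ω → E} {V : Ω' → E} {f : E → F} (hf : LipschitzWith 1 f) {C : ℝ}
    (h : ∀ g : E → ℝ, LipschitzWith 1 g → |∫ ω, g (U ω) ∂μ - ∫ ω, g (V ω) ∂ν| ≤ C) :
    wassersteinDist μ ν (fun ω => f (U ω)) (fun ω => f (V ω)) ≤ C := by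
  refine Real.sSup_le ?_ ((abs_nonneg _).trans (h 0 (LipschitzWith.const' 0)))
  rintro _ ⟨g, hg, rfl⟩
  exact h (g ∘ f) (by simpa only [one_mul] using hg.comp hf)

variable {ι : Type*} [Fintype ι]

/-- The isometry from Euclidean vectors indexed by pairs to matrices with the Hilbert–Schmidt
norm. -/
def matrixOfEuclidean (v : EuclideanSpace ℝ (ι × ι)) : Matrix ι ι ℝ := Matrix.of fun i j => v (i, j)

lemma lipschitzWith_matrixOfEuclidean :
    LipschitzWith 1 (matrixOfEuclidean : EuclideanSpace ℝ (ι × ι) → Matrix ι ι ℝ) := by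
  refine LipschitzWith.of_dist_le_mul fun u v => le_of_eq ?_
  rw [dist_eq_norm, dist_eq_norm, Matrix.frobenius_norm_def, EuclideanSpace.norm_eq,
    Real.sqrt_eq_rpow, Fintype.sum_prod_type]
  simp [matrixOfEuclidean]

theorem wassersteinDist_wishart_le [LinearOrder ι] [IsProbabilityMeasure μ] [IsProbabilityMeasure ν]
    {τ : Type*} {s : Finset τ} {δ : τ → τ → ℝ} (hone : ∀ k, δ k k = 1)
    (hδ : ∀ k l, δ k l = δ l k) {Y : ι → τ → Ω → ℝ} (hYmeas : ∀ i k, Measurable (Y i k))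
    (hY : IsCenteredGaussianFamily μ fun p : ι × τ => Y p.1 p.2)
    (hcov : ∀ i j, ∀ k ∈ s, ∀ l ∈ s, ∫ ω, Y i k ω * Y j l ω ∂μ = if i = j then δ k l else 0)
    {r : ℝ} (hr : 0 < r) {Z : Ω' → Matrix ι ι ℝ}
    (hZ : IsCenteredGaussian ν (fun ω p => Z ω p.1 p.2) (goeCov r)) (c : ℝ) :
    wassersteinDist μ ν (fun ω => Matrix.of fun i j =>
        c * ∑ k ∈ s, (Y i k ω * Y j k ω - if i = j then 1 else 0)) Z ≤
      Real.pi / 2 * √(r * (Fintype.card ι + 1) *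
        ((c ^ 2 * r⁻¹) ^ 2 * (Fintype.card ι * (Fintype.card ι + 1) *
            corrFour fun k l : s => δ k l) +
          Fintype.card ι * (c ^ 2 * r⁻¹ * corrSq (fun k l : s => δ k l) - 1) ^ 2)) := by
  have hYs : IsCenteredGaussian μ (fun ω (p : ι × s) => Y p.1 p.2 ω)
      (rowCov fun k l : s => δ k l) :=
    (hY.comp_injective (Function.injective_id.prodMap Subtype.val_injective)).isCenteredGaussian
      (fun _ => hYmeas _ _) fun p q => hcov _ _ _ p.2.2 _ q.2.2
  have hwishart : ∀ ω, (Matrix.of fun i j => c * ∑ k ∈ s, (Y i k ω * Y j k ω -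
      if i = j then 1 else 0)) = matrixOfEuclidean
        (WithLp.toLp 2 (wishart c fun p : ι × s => Y p.1 p.2 ω)) := fun ω => by
    ext i j
    simp only [matrixOfEuclidean, wishart, Matrix.of_apply, ← Finset.sum_coe_sort s]
  simp only [hwishart]
  exact wassersteinDist_comp_le lipschitzWith_matrixOfEuclidean fun g hg =>
    abs_integral_wishart_sub_le hYs (fun _ => hone _) (fun _ _ => hδ _ _) hr.ne' hZ c hg

end Wasserstein

section Correlation

variable {Ω : Type*} [MeasurableSpace Ω] {μ : Measure Ω}

lemma abs_integral_mul_le_one {f g : Ω → ℝ} (hf : ∫ ω, f ω * f ω ∂μ = 1)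
    (hg : ∫ ω, g ω * g ω ∂μ = 1) : |∫ ω, f ω * g ω ∂μ| ≤ 1 := by
  have hf_int : Integrable (fun ω => f ω * f ω) μ := .of_integral_ne_zero (by simp [hf])
  have hg_int : Integrable (fun ω => g ω * g ω) μ := .of_integral_ne_zero (by simp [hg])
  have hbound := norm_integral_le_of_norm_le ((hf_int.add hg_int).div_const 2)
    (ae_of_all μ fun ω => show ‖f ω * g ω‖ ≤ (f ω * f ω + g ω * g ω) / 2 by
      rw [Real.norm_eq_abs, abs_le]
      constructor <;> nlinarith only [sq_nonneg (f ω + g ω), sq_nonneg (f ω - g ω)])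
  rw [integral_div, integral_add' hf_int hg_int, hf, hg, Real.norm_eq_abs] at hbound
  linarith only [hbound]

end Correlation

section MeanValue

lemma abs_sub_le_mul_sub_of_hasDerivAt {F F' : ℝ → ℝ} {a b M : ℝ} (hab : a < b)
    (hF : ∀ y ∈ Set.Icc a b, HasDerivAt F (F' y) y) (hM : ∀ y ∈ Set.Ioo a b, |F' y| ≤ M) :
    |F b - F a| ≤ M * (b - a) := by
  obtain ⟨c, hc, hslope⟩ := exists_hasDerivAt_eq_slope F F' hab
    (fun z hz => (hF z hz).continuousAt.continuousWithinAt)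
    fun z hz => hF z (Set.Ioo_subset_Icc_self hz)
  rw [eq_div_iff (sub_pos.2 hab).ne'] at hslope
  rw [← hslope, abs_mul, abs_of_pos (sub_pos.2 hab)]
  exact mul_le_mul_of_nonneg_right (hM c hc) (sub_pos.2 hab).le

lemma abs_le_mul_sq_of_hasDerivAt {F F' F'' : ℝ → ℝ} {a b M : ℝ} (hab : a < b)
    (hF : ∀ y ∈ Set.Icc a b, HasDerivAt F (F' y) y)
    (hF' : ∀ y ∈ Set.Icc a b, HasDerivAt F' (F'' y) y)
    (hM : ∀ y ∈ Set.Ioo a b, |F'' y| ≤ M) (hFa : F a = 0) (hF'a : F' a = 0) :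
    |F b| ≤ M * (b - a) ^ 2 := by
  have hfirst : ∀ y ∈ Set.Ioo a b, |F' y| ≤ M * (b - a) := fun y hy => by
    have hsub : Set.Icc a y ⊆ Set.Icc a b := Set.Icc_subset_Icc_right hy.2.le
    have hM0 : 0 ≤ M := (abs_nonneg _).trans (hM y hy)
    calc |F' y| = |F' y - F' a| := by rw [hF'a, sub_zero]
      _ ≤ M * (y - a) := abs_sub_le_mul_sub_of_hasDerivAt hy.1 (fun z hz => hF' z (hsub hz))
          fun z hz => hM z ⟨hz.1, hz.2.trans hy.2⟩
      _ ≤ M * (b - a) := by gcongr; exact hy.2.le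
  have hzero := abs_sub_le_mul_sub_of_hasDerivAt hab hF hfirst
  rwa [hFa, sub_zero, mul_assoc, ← sq] at hzero

end MeanValue

section Profile

variable {β lam α ν C : ℝ} {φ ψ : ℝ → ℝ}

/-- The two expansions of the profile `φ` that control the increments of the process: off the
diagonal, of the mixed derivative `∂ₛ∂ₜ R(s,t) = s^(2β-2) ((2β-1) φ'(y) - y φ''(y))` with
`y = t / s`; on the diagonal, of the variogram `R(1,1) + R(y,y) - 2 R(1,y)`. -/
structure HasIncrementExpansion (β lam α C : ℝ) (φ : ℝ → ℝ) : Prop where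
  differentiableAt : ∀ y, 1 < y → DifferentiableAt ℝ φ y
  differentiableAt_deriv : ∀ y, 1 < y → DifferentiableAt ℝ (deriv φ) y
  abs_mixedDeriv_sub_le : ∀ y, 1 < y →
    |(2 * β - 1) * deriv φ y - y * deriv (deriv φ) y - lam * α * (α - 1) * (y - 1) ^ (α - 2)| ≤
      C * y ^ (α - 2)
  abs_variogram_sub_le : ∀ y, 1 < y → y ≤ 2 →
    |φ 1 * (y ^ (2 * β) + 1) - 2 * φ y - 2 * lam * (y - 1) ^ α| ≤ C * (y - 1) ^ 2

namespace SelfSimilarHyp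

lemma hasDerivAt (hyp : SelfSimilarHyp β lam α ν φ ψ) {y : ℝ} (hy : 1 < y) :
    HasDerivAt φ (-lam * (α * (y - 1) ^ (α - 1)) + deriv ψ y) y := by
  obtain ⟨-, -, -, -, hφ, ⟨S, -, hS, hψ⟩, -⟩ := hyp
  have hpow := ((hasDerivAt_id y).sub_const 1).rpow_const (p := α) (Or.inl (sub_pos.2 hy).ne')
  rw [one_mul] at hpow
  refine ((hpow.const_mul (-lam)).add (hψ y (hS hy.le)).1.hasDerivAt).congr_of_eventuallyEq ?_
  filter_upwards [lt_mem_nhds hy] with z hz using hφ z hz.le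

lemma hasDerivAt_deriv (hyp : SelfSimilarHyp β lam α ν φ ψ) {y : ℝ} (hy : 1 < y) :
    HasDerivAt (deriv φ)
      (-lam * (α * ((α - 1) * (y - 1) ^ (α - 2))) + deriv (deriv ψ) y) y := by
  have hpow := ((hasDerivAt_id y).sub_const 1).rpow_const (p := α - 1) (Or.inl (sub_pos.2 hy).ne')
  rw [one_mul, sub_sub, one_add_one_eq_two] at hpow
  have hderiv : ∀ᶠ z in nhds y, deriv φ z = -lam * (α * (z - 1) ^ (α - 1)) + deriv ψ z := by
    filter_upwards [lt_mem_nhds hy] with z hz using (hyp.hasDerivAt hz).deriv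
  obtain ⟨-, -, -, -, -, ⟨S, -, hS, hψ⟩, -⟩ := hyp
  exact (((hpow.const_mul α).const_mul (-lam)).add
    (hψ y (hS hy.le)).2.hasDerivAt).congr_of_eventuallyEq hderiv

lemma exists_abs_mixedDeriv_sub_le_near (hyp : SelfSimilarHyp β lam α ν φ ψ) (hα : 1 ≤ α) :
    ∃ C, 0 ≤ C ∧ ∀ y, 1 < y → y ≤ 2 →
      |(2 * β - 1) * deriv φ y - y * deriv (deriv φ) y - lam * α * (α - 1) * (y - 1) ^ (α - 2)| ≤
        C := by
  have hderiv := @hasDerivAt _ _ _ _ _ _ hyp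
  have hderiv2 := @hasDerivAt_deriv _ _ _ _ _ _ hyp
  obtain ⟨hβ, hlam, hαβ, -, -, -, ⟨C₀, hC₀, hψ', hψ''⟩, -⟩ := hyp
  have hα2 : α ≤ 2 := by linarith [hαβ.2, hβ.2]
  refine ⟨2 * lam + 2 * lam + (2 * C₀ + C₀), by positivity, fun y hy hy2 => ?_⟩
  have hy0 : 0 < y - 1 := sub_pos.2 hy
  have hpow : (y - 1) ^ (α - 1) = (y - 1) ^ (α - 2) * (y - 1) := by
    rw [← Real.rpow_add_one hy0.ne']; ring_nf
  have hpow_le : (y - 1) ^ (α - 1) ≤ 1 :=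
    Real.rpow_le_one hy0.le (by linarith) (by linarith)
  have hβ1 : |2 * β - 1| ≤ 1 := by rw [abs_le]; constructor <;> linarith [hβ.1, hβ.2]
  have hα1 : |α - 1| ≤ 1 := by rw [abs_le]; constructor <;> linarith
  have hsing : ∀ c : ℝ, |c| ≤ 1 → |c * (lam * α * (y - 1) ^ (α - 1))| ≤ 2 * lam := fun c hc => by
    rw [abs_mul, abs_of_nonneg (a := lam * _ * _) (by positivity)]
    calc |c| * (lam * α * (y - 1) ^ (α - 1)) ≤ 1 * (lam * 2 * 1) := by gcongr
      _ = 2 * lam := by ring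
  have hfirst : |(2 * β - 1) * deriv ψ y| ≤ 2 * C₀ := by
    rw [abs_mul]
    calc |2 * β - 1| * |deriv ψ y| ≤ 1 * (C₀ * y ^ (1 : ℝ)) := by
          gcongr
          refine (hψ' y hy).trans ?_
          gcongr
          · exact hy.le
          · linarith
      _ ≤ 2 * C₀ := by rw [Real.rpow_one]; nlinarith only [hC₀, hy2]
  have hsecond : |y * deriv (deriv ψ) y| ≤ C₀ := by
    rw [abs_mul, abs_of_pos (by linarith)]
    calc y * |deriv (deriv ψ) y| ≤ y * (C₀ * y⁻¹ * (y - 1) ^ (α - 1)) := by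
          gcongr; exact hψ'' y hy
      _ = C₀ * (y - 1) ^ (α - 1) := by field_simp
      _ ≤ C₀ * 1 := by gcongr
      _ = C₀ := mul_one _
  calc _ = |-((2 * β - 1) * (lam * α * (y - 1) ^ (α - 1))) +
        (α - 1) * (lam * α * (y - 1) ^ (α - 1)) +
          ((2 * β - 1) * deriv ψ y - y * deriv (deriv ψ) y)| := by
        rw [(hderiv hy).deriv, (hderiv2 hy).deriv, hpow]; ring_nf
    _ ≤ _ := (abs_add_le _ _).trans (add_le_add ((abs_add_le _ _).trans (add_le_add
        ((abs_neg _).trans_le (hsing _ hβ1)) (hsing _ hα1)))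
        ((abs_sub _ _).trans (add_le_add hfirst hsecond)))

lemma exists_abs_mixedDeriv_sub_le_far (hyp : SelfSimilarHyp β lam α ν φ ψ) (hα : 1 ≤ α) :
    ∃ C, 0 ≤ C ∧ ∀ y, 2 ≤ y →
      |(2 * β - 1) * deriv φ y - y * deriv (deriv φ) y - lam * α * (α - 1) * (y - 1) ^ (α - 2)| ≤
        C * (y - 1) ^ (α - 2) := by
  obtain ⟨hβ, hlam, hαβ, -, -, -, -, -, C₁, hC₁, hφ⟩ := hyp
  have hα2 : α ≤ 2 := by linarith [hαβ.2, hβ.2]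
  refine ⟨C₁ + 2 * C₁ + 2 * lam, by positivity, fun y hy => ?_⟩
  obtain ⟨hφ', hφ''⟩ := (hφ y hy).2 hα
  have hy0 : 0 < y - 1 := by linarith
  have hpow : (y - 1) ^ (α - 2) = (y - 1) ^ (α - 3) * (y - 1) := by
    rw [← Real.rpow_add_one hy0.ne']; ring_nf
  have hfirst : |(2 * β - 1) * deriv φ y| ≤ C₁ * (y - 1) ^ (α - 2) := by
    have hβ1 : |2 * β - 1| ≤ 1 := by rw [abs_le]; constructor <;> linarith [hβ.1, hβ.2]
    rw [abs_mul]
    exact (mul_le_of_le_one_left (abs_nonneg _) hβ1).trans hφ'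
  have hsecond : |y * deriv (deriv φ) y| ≤ 2 * C₁ * (y - 1) ^ (α - 2) := by
    rw [abs_mul, abs_of_pos (by linarith), hpow]
    calc y * |deriv (deriv φ) y| ≤ 2 * (y - 1) * (C₁ * (y - 1) ^ (α - 3)) := by
          gcongr
          linarith
      _ = _ := by ring
  have hmain : |lam * α * (α - 1) * (y - 1) ^ (α - 2)| ≤ 2 * lam * (y - 1) ^ (α - 2) := by
    have : 0 ≤ α - 1 := sub_nonneg.2 hα
    rw [abs_of_nonneg (by positivity)]
    calc lam * α * (α - 1) * (y - 1) ^ (α - 2) ≤ lam * 2 * 1 * (y - 1) ^ (α - 2) := by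
          gcongr
          linarith
      _ = _ := by ring
  rw [add_mul, add_mul]
  exact (abs_sub _ _).trans (add_le_add ((abs_sub _ _).trans (add_le_add hfirst hsecond)) hmain)

lemma exists_abs_mixedDeriv_sub_le (hyp : SelfSimilarHyp β lam α ν φ ψ) (hα : 1 ≤ α) :
    ∃ C, 0 ≤ C ∧ ∀ y, 1 < y →
      |(2 * β - 1) * deriv φ y - y * deriv (deriv φ) y - lam * α * (α - 1) * (y - 1) ^ (α - 2)| ≤
        C * y ^ (α - 2) := by
  obtain ⟨A, hA, hnear⟩ := hyp.exists_abs_mixedDeriv_sub_le_near hα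
  obtain ⟨B, hB, hfar⟩ := hyp.exists_abs_mixedDeriv_sub_le_far hα
  have hα2 : α ≤ 2 := by linarith [hyp.1.2, hyp.2.2.1.2]
  have hhalf : (1 / 2 : ℝ) ≤ 2 ^ (α - 2) := by
    calc (1 / 2 : ℝ) = 2 ^ (-1 : ℝ) := by rw [Real.rpow_neg_one, one_div]
      _ ≤ 2 ^ (α - 2) := Real.rpow_le_rpow_of_exponent_le one_le_two (by linarith)
  refine ⟨2 * A + 2 * B, by positivity, fun y hy => ?_⟩
  have hy0 : 0 < y := by linarith
  have hpow : 0 < y ^ (α - 2) := by positivity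
  rcases le_total y 2 with hy2 | hy2
  · have hone : 1 / 2 ≤ y ^ (α - 2) :=
      hhalf.trans (Real.rpow_le_rpow_of_nonpos hy0 hy2 (by linarith))
    refine (hnear y hy hy2).trans ?_
    nlinarith only [hA, hB, hone]
  · have hshift : 1 / 2 * (y - 1) ^ (α - 2) ≤ y ^ (α - 2) := by
      calc 1 / 2 * (y - 1) ^ (α - 2) ≤ 2 ^ (α - 2) * (y - 1) ^ (α - 2) := by gcongr
        _ = (2 * (y - 1)) ^ (α - 2) := (Real.mul_rpow zero_le_two (by linarith)).symm
        _ ≤ y ^ (α - 2) := Real.rpow_le_rpow_of_nonpos hy0 (by linarith) (by linarith)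
    refine (hfar y hy2).trans ?_
    nlinarith only [hA, hB, hshift, hpow]

lemma exists_abs_variogram_sub_le (hyp : SelfSimilarHyp β lam α ν φ ψ) (hα : 1 ≤ α) :
    ∃ C, 0 ≤ C ∧ ∀ y, 1 < y → y ≤ 2 →
      |φ 1 * (y ^ (2 * β) + 1) - 2 * φ y - 2 * lam * (y - 1) ^ α| ≤ C * (y - 1) ^ 2 := by
  obtain ⟨hβ, -, hαβ, -, hφ, ⟨S, -, hS, hψ⟩, ⟨C₀, hC₀, -, hψ''⟩, hψ1, -⟩ := hyp
  have hφ1 : φ 1 = ψ 1 := by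
    rw [hφ 1 le_rfl, sub_self, Real.zero_rpow (by linarith), mul_zero, zero_add]
  have hpow : ∀ p y : ℝ, 1 ≤ y → HasDerivAt (fun y => y ^ p) (p * y ^ (p - 1)) y := fun p y hy =>
    Real.hasDerivAt_rpow_const (Or.inl (by linarith))
  refine ⟨|ψ 1| * 2 + 2 * C₀, by positivity, fun y hy hy2 => ?_⟩
  have hφy : φ 1 * (y ^ (2 * β) + 1) - 2 * φ y - 2 * lam * (y - 1) ^ α =
      ψ 1 * (y ^ (2 * β) + 1) - 2 * ψ y := by rw [hφ1, hφ y hy.le]; ring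
  rw [hφy]
  refine abs_le_mul_sq_of_hasDerivAt (F := fun y => ψ 1 * (y ^ (2 * β) + 1) - 2 * ψ y) hy
    (fun z hz => (((hpow _ z hz.1).add_const 1).const_mul (ψ 1)).sub
      ((hψ z (hS hz.1)).1.hasDerivAt.const_mul 2))
    (fun z hz => (((hpow _ z hz.1).const_mul (2 * β)).const_mul (ψ 1)).sub
      ((hψ z (hS hz.1)).2.hasDerivAt.const_mul 2)) (fun z hz => ?_) ?_ ?_
  · have hz0 : 0 < z := by linarith [hz.1]
    have hpow_le : z ^ (2 * β - 1 - 1) ≤ 1 :=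
      Real.rpow_le_one_of_one_le_of_nonpos hz.1.le (by linarith [hβ.2])
    have hsmooth : |2 * β * ((2 * β - 1) * z ^ (2 * β - 1 - 1))| ≤ 2 := by
      have hβ1 : 0 ≤ 2 * β - 1 := by linarith [hαβ.2]
      rw [abs_of_nonneg (by have := hβ.1; positivity)]
      calc 2 * β * ((2 * β - 1) * z ^ (2 * β - 1 - 1)) ≤ 2 * (1 * 1) := by
            gcongr <;> linarith [hβ.2]
        _ = 2 := by norm_num
    have hψ''z : |deriv (deriv ψ) z| ≤ C₀ := by
      calc |deriv (deriv ψ) z| ≤ C₀ * z⁻¹ * (z - 1) ^ (α - 1) := hψ'' z hz.1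
        _ ≤ C₀ * 1 * 1 := by
          have hz1 : 0 < z - 1 := sub_pos.2 hz.1
          gcongr
          · exact inv_le_one_of_one_le₀ hz.1.le
          · exact Real.rpow_le_one hz1.le (by linarith [hz.2]) (by linarith)
        _ = C₀ := by ring
    refine (abs_sub _ _).trans (add_le_add ?_ ?_)
    · rw [abs_mul]; gcongr
    · rw [abs_mul, abs_two]; gcongr
  · simp only [Real.one_rpow]; ring
  · rw [hψ1 hα, Real.one_rpow]; ring

theorem exists_hasIncrementExpansion (hyp : SelfSimilarHyp β lam α ν φ ψ) (hα : 1 ≤ α) :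
    ∃ C, 0 ≤ C ∧ HasIncrementExpansion β lam α C φ := by
  obtain ⟨A, hA, hmixed⟩ := hyp.exists_abs_mixedDeriv_sub_le hα
  obtain ⟨B, hB, hvariogram⟩ := hyp.exists_abs_variogram_sub_le hα
  refine ⟨A + B, add_nonneg hA hB, fun y hy => (hyp.hasDerivAt hy).differentiableAt,
    fun y hy => (hyp.hasDerivAt_deriv hy).differentiableAt, fun y hy => ?_, fun y hy hy2 => ?_⟩
  · exact (hmixed y hy).trans (by gcongr; linarith)
  · exact (hvariogram y hy hy2).trans (by gcongr; linarith)

end SelfSimilarHyp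

end Profile

section Increments

variable {β lam α C : ℝ} {φ : ℝ → ℝ}

lemma covR_of_le {s t : ℝ} (hs : 0 < s) (hst : s ≤ t) :
    covR β φ s t = s ^ (2 * β) * φ (t / s) := by
  rw [covR, if_neg (by simp only [hs.ne', (hs.trans_le hst).ne', or_self, not_false_eq_true]),
    min_eq_left hst, max_eq_right hst]

lemma covR_comm (s t : ℝ) : covR β φ s t = covR β φ t s := by
  simp only [covR, min_comm s t, max_comm s t, or_comm (a := s = 0)]

lemma covΔ_comm (k l : ℕ) : covΔ β φ k l = covΔ β φ l k := by
  simp only [covΔ]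
  rw [covR_comm ((k : ℝ) + 1) (l + 1), covR_comm (k : ℝ) (l + 1), covR_comm ((k : ℝ) + 1) l,
    covR_comm (k : ℝ) l]
  ring

lemma covδ_comm (k l : ℕ) : covδ β φ k l = covδ β φ l k := by
  rw [covδ, covδ, covΔ_comm, mul_comm]

lemma covδ_self {k : ℕ} (hk : 0 < covΔ β φ k k) : covδ β φ k k = 1 := by
  rw [covδ, Real.sqrt_mul_self hk.le, div_self hk.ne']

lemma hasDerivAt_rpow_mul_comp_div {s t : ℝ} (hs : 0 < s) (hφ : DifferentiableAt ℝ φ (t / s)) :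
    HasDerivAt (fun s => s ^ (2 * β) * φ (t / s))
      (2 * β * s ^ (2 * β - 1) * φ (t / s) - s ^ (2 * β - 2) * t * deriv φ (t / s)) s := by
  have hdiv : HasDerivAt (fun s => t / s) (-t / s ^ 2) s :=
    ((hasDerivAt_const s t).div (hasDerivAt_id s) hs.ne').congr_deriv (by
      simp only [id, zero_mul, mul_one, zero_sub])
  refine ((Real.hasDerivAt_rpow_const (p := 2 * β) (Or.inl hs.ne')).mul
    (hφ.hasDerivAt.comp s hdiv)).congr_deriv ?_
  have hpow : s ^ (2 * β) = s ^ (2 * β - 2) * s ^ 2 := by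
    rw [← Real.rpow_natCast, ← Real.rpow_add hs]; norm_num
  simp only [Function.comp_apply, hpow]
  field_simp
  ring

lemma hasDerivAt_rpow_mul_comp_div_sub {s t : ℝ} (hs : 0 < s)
    (hφ : DifferentiableAt ℝ φ (t / s)) (hφ' : DifferentiableAt ℝ (deriv φ) (t / s)) :
    HasDerivAt
      (fun t => 2 * β * s ^ (2 * β - 1) * φ (t / s) - s ^ (2 * β - 2) * t * deriv φ (t / s))
      (s ^ (2 * β - 2) * ((2 * β - 1) * deriv φ (t / s) - t / s * deriv (deriv φ) (t / s))) t := by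
  have hdiv : HasDerivAt (fun t => t / s) (1 / s) t := (hasDerivAt_id t).div_const s
  refine (((hφ.hasDerivAt.comp t hdiv).const_mul (2 * β * s ^ (2 * β - 1))).sub
    (((hasDerivAt_id t).const_mul (s ^ (2 * β - 2))).mul
      (hφ'.hasDerivAt.comp t hdiv))).congr_deriv ?_
  have hpow : s ^ (2 * β - 1) = s ^ (2 * β - 2) * s := by
    rw [← Real.rpow_add_one hs.ne']; ring_nf
  simp only [Function.comp_apply, id_eq, hpow]
  field_simp
  ring

lemma exists_covΔ_eq_mixedDeriv (hφ : ∀ y, 1 < y → DifferentiableAt ℝ φ y)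
    (hφ' : ∀ y, 1 < y → DifferentiableAt ℝ (deriv φ) y) {k l : ℕ} (hk : 1 ≤ k) (hkl : k + 2 ≤ l) :
    ∃ s ∈ Set.Ioo (k : ℝ) (k + 1), ∃ t ∈ Set.Ioo (l : ℝ) (l + 1), covΔ β φ k l =
      s ^ (2 * β - 2) * ((2 * β - 1) * deriv φ (t / s) - t / s * deriv (deriv φ) (t / s)) := by
  have hk0 : (0 : ℝ) < k := by exact_mod_cast hk
  have hklR : (k : ℝ) + 2 ≤ l := by exact_mod_cast hkl
  have hratio : ∀ {s t : ℝ}, (k : ℝ) ≤ s → s ≤ k + 1 → (l : ℝ) ≤ t → 0 < s ∧ 1 < t / s := by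
    intro s t hs hs' ht
    have hs0 : 0 < s := by linarith
    exact ⟨hs0, (one_lt_div hs0).2 (by linarith)⟩
  have hderiv : ∀ s ∈ Set.Icc (k : ℝ) (k + 1), HasDerivAt
      (fun s : ℝ => s ^ (2 * β) * φ ((l + 1) / s) - s ^ (2 * β) * φ (l / s)) _ s := fun s hs =>
    (hasDerivAt_rpow_mul_comp_div (hratio hs.1 hs.2 le_rfl).1
      (hφ _ (hratio hs.1 hs.2 (by linarith)).2)).sub
      (hasDerivAt_rpow_mul_comp_div (hratio hs.1 hs.2 le_rfl).1
        (hφ _ (hratio hs.1 hs.2 le_rfl).2))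
  obtain ⟨s, hs, hslope⟩ := exists_hasDerivAt_eq_slope _ _ (lt_add_one (k : ℝ))
    (fun s hs => (hderiv s hs).continuousAt.continuousWithinAt)
    fun s hs => hderiv s (Set.Ioo_subset_Icc_self hs)
  have hderiv2 : ∀ t ∈ Set.Icc (l : ℝ) (l + 1), HasDerivAt _ _ t := fun t ht =>
    hasDerivAt_rpow_mul_comp_div_sub (β := β) (hratio hs.1.le hs.2.le ht.1).1
      (hφ _ (hratio hs.1.le hs.2.le ht.1).2) (hφ' _ (hratio hs.1.le hs.2.le ht.1).2)
  obtain ⟨t, ht, hslope2⟩ := exists_hasDerivAt_eq_slope _ _ (lt_add_one (l : ℝ))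
    (fun t ht => (hderiv2 t ht).continuousAt.continuousWithinAt)
    fun t ht => hderiv2 t (Set.Ioo_subset_Icc_self ht)
  refine ⟨s, hs, t, ht, ?_⟩
  simp only [add_sub_cancel_left, div_one] at hslope hslope2
  rw [hslope2, hslope, covΔ, covR_of_le (by linarith) (by linarith),
    covR_of_le (by linarith) (by linarith), covR_of_le (by linarith) (by linarith),
    covR_of_le (by linarith) (by linarith)]
  ring

/-- The variance of the `k`-th increment of the process divided by its leading order
`2 λ k^(2β-α)`. -/
def varianceRatio (β lam α : ℝ) (φ : ℝ → ℝ) (k : ℕ) : ℝ :=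
  covΔ β φ k k / (2 * lam * (k : ℝ) ^ (2 * β - α))

lemma covΔ_self_eq {k : ℕ} (hk : 1 ≤ k) :
    covΔ β φ k k = (k : ℝ) ^ (2 * β) *
      (φ 1 * ((1 + (k : ℝ)⁻¹) ^ (2 * β) + 1) - 2 * φ (1 + (k : ℝ)⁻¹)) := by
  have hk0 : (0 : ℝ) < k := by exact_mod_cast hk
  have hratio : ((k : ℝ) + 1) / k = 1 + (k : ℝ)⁻¹ := by field_simp
  have hsucc : ((k : ℝ) + 1) ^ (2 * β) = (k : ℝ) ^ (2 * β) * (1 + (k : ℝ)⁻¹) ^ (2 * β) := by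
    rw [← Real.mul_rpow hk0.le (by positivity), ← hratio]; field_simp
  rw [covΔ, covR_of_le (by linarith) le_rfl, covR_of_le hk0 (by linarith),
    covR_comm ((k : ℝ) + 1), covR_of_le hk0 (by linarith), covR_of_le hk0 le_rfl,
    div_self (by linarith), div_self hk0.ne', hratio, hsucc]
  ring

namespace HasIncrementExpansion

lemma exists_abs_covΔ_sub_le (hφ : HasIncrementExpansion β lam α C φ) {k l : ℕ} (hk : 1 ≤ k)
    (hkl : k + 2 ≤ l) :
    ∃ s ∈ Set.Ioo (k : ℝ) (k + 1), ∃ t ∈ Set.Ioo (l : ℝ) (l + 1),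
      |covΔ β φ k l - lam * α * (α - 1) * s ^ (2 * β - α) * (t - s) ^ (α - 2)| ≤
        C * s ^ (2 * β - α) * t ^ (α - 2) := by
  obtain ⟨s, hs, t, ht, heq⟩ :=
    exists_covΔ_eq_mixedDeriv (β := β) hφ.differentiableAt hφ.differentiableAt_deriv hk hkl
  refine ⟨s, hs, t, ht, ?_⟩
  have hs0 : 0 < s := k.cast_nonneg.trans_lt hs.1
  have hst : s < t := by
    have : (k : ℝ) + 2 ≤ l := by exact_mod_cast hkl
    linarith [hs.2, ht.1]
  have hscale : ∀ y, 0 ≤ y → s ^ (2 * β - 2) * (y / s) ^ (α - 2) =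
      s ^ (2 * β - α) * y ^ (α - 2) := fun y hy => by
    rw [Real.div_rpow hy hs0.le, show 2 * β - 2 = (2 * β - α) + (α - 2) by ring,
      Real.rpow_add hs0]
    field_simp
  have hdist : t / s - 1 = (t - s) / s := by rw [sub_div, div_self hs0.ne']
  have hmixed := hφ.abs_mixedDeriv_sub_le (t / s) ((one_lt_div hs0).2 hst)
  calc _ = s ^ (2 * β - 2) * |(2 * β - 1) * deriv φ (t / s) - t / s * deriv (deriv φ) (t / s) -
        lam * α * (α - 1) * (t / s - 1) ^ (α - 2)| := by
        rw [heq, mul_assoc (lam * α * (α - 1)), ← hscale _ (sub_nonneg.2 hst.le), ← hdist,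
          ← abs_of_pos (Real.rpow_pos_of_pos hs0 (2 * β - 2)), ← abs_mul,
          abs_of_pos (Real.rpow_pos_of_pos hs0 (2 * β - 2))]
        ring_nf
    _ ≤ s ^ (2 * β - 2) * (C * (t / s) ^ (α - 2)) := by gcongr
    _ = _ := by rw [mul_assoc C, ← hscale t (hs0.trans hst).le]; ring

lemma abs_varianceRatio_sub_one_le (hφ : HasIncrementExpansion β lam α C φ) (hlam : 0 < lam)
    {k : ℕ} (hk : 1 ≤ k) :
    |varianceRatio β lam α φ k - 1| ≤ C / (2 * lam) * (k : ℝ) ^ (α - 2) := by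
  have hk0 : (0 : ℝ) < k := by exact_mod_cast hk
  have hk1 : (k : ℝ)⁻¹ ≤ 1 := inv_le_one_of_one_le₀ (by exact_mod_cast hk)
  have hvariogram := hφ.abs_variogram_sub_le (1 + (k : ℝ)⁻¹) (by simp only [lt_add_iff_pos_right,
    inv_pos, hk0]) (by linarith)
  rw [add_sub_cancel_left] at hvariogram
  have hcancel : (k : ℝ) ^ α * (k : ℝ)⁻¹ ^ α = 1 := by
    rw [← Real.mul_rpow hk0.le (by positivity), mul_inv_cancel₀ hk0.ne', Real.one_rpow]
  have hsplit : (k : ℝ) ^ (2 * β) = (k : ℝ) ^ (2 * β - α) * (k : ℝ) ^ α := by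
    rw [← Real.rpow_add hk0, sub_add_cancel]
  have heq : varianceRatio β lam α φ k - 1 = (k : ℝ) ^ α / (2 * lam) *
      (φ 1 * ((1 + (k : ℝ)⁻¹) ^ (2 * β) + 1) - 2 * φ (1 + (k : ℝ)⁻¹) -
        2 * lam * (k : ℝ)⁻¹ ^ α) := by
    rw [varianceRatio, covΔ_self_eq hk, hsplit]
    field_simp
    simp only [one_div]
    linear_combination (2 * lam) * hcancel
  rw [heq, abs_mul, abs_of_pos (by positivity)]
  calc (k : ℝ) ^ α / (2 * lam) * _ ≤ (k : ℝ) ^ α / (2 * lam) * (C * (k : ℝ)⁻¹ ^ 2) := by gcongr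
    _ = _ := by
      rw [Real.rpow_sub hk0, Real.rpow_two, inv_pow]
      ring

lemma exists_inv_sqrt_varianceRatio_le (hφ : HasIncrementExpansion β lam α C φ) (hlam : 0 < lam)
    (hα : α < 2) (hpos : ∀ k, 0 < covΔ β φ k k) :
    ∃ B, 0 < B ∧ ∀ k : ℕ, (√(varianceRatio β lam α φ k))⁻¹ ≤ B := by
  have hzero : Tendsto (fun k : ℕ => C / (2 * lam) * (k : ℝ) ^ (α - 2)) atTop (nhds 0) := by
    have := ((tendsto_rpow_neg_atTop (sub_pos.2 hα)).comp tendsto_natCast_atTop_atTop).const_mul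
      (C / (2 * lam))
    simpa only [Function.comp_apply, neg_sub, mul_zero] using this
  have hone : Tendsto (varianceRatio β lam α φ) atTop (nhds 1) := by
    rw [tendsto_iff_norm_sub_tendsto_zero]
    refine squeeze_zero' (Eventually.of_forall fun _ => norm_nonneg _) ?_ hzero
    filter_upwards [eventually_ge_atTop 1] with k hk
      using hφ.abs_varianceRatio_sub_one_le hlam hk
  have hinv : Tendsto (fun k => (√(varianceRatio β lam α φ k))⁻¹) atTop (nhds 1) := by
    have := (hone.sqrt).inv₀ (by norm_num)
    rwa [Real.sqrt_one, inv_one] at this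
  obtain ⟨B, hB⟩ := hinv.bddAbove_range
  have hle : ∀ k, (√(varianceRatio β lam α φ k))⁻¹ ≤ B := fun k => hB ⟨k, rfl⟩
  refine ⟨B, lt_of_lt_of_le ?_ (hle 1), hle⟩
  have := hpos 1
  rw [varianceRatio]
  positivity

end HasIncrementExpansion

end Increments

section PowerEstimates

lemma abs_rpow_sub_one_le {x p : ℝ} (hx : 0 < x) (hp0 : 0 ≤ p) (hp1 : p ≤ 1) :
    |x ^ p - 1| ≤ |x - 1| := by
  rcases le_total x 1 with h1 | h1
  · have hle : x ^ p ≤ 1 := Real.rpow_le_one hx.le h1 hp0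
    have hge : x ≤ x ^ p := by
      simpa only [Real.rpow_one] using Real.rpow_le_rpow_of_exponent_ge hx h1 hp1
    rw [abs_of_nonpos (by linarith), abs_of_nonpos (by linarith)]
    linarith
  · have hge : 1 ≤ x ^ p := Real.one_le_rpow h1 hp0
    have hle : x ^ p ≤ x := by
      simpa only [Real.rpow_one] using Real.rpow_le_rpow_of_exponent_le h1 hp1
    rw [abs_of_nonneg (by linarith), abs_of_nonneg (by linarith)]
    linarith

lemma abs_div_sqrt_mul_sub_one_le {k l s : ℝ} (hk : 0 < k) (hkl : k ≤ l)
    (hs : s ∈ Set.Ioo k (k + 1)) : |s / √(k * l) - 1| ≤ (l - k) / l + k⁻¹ := by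
  have hl : 0 < l := hk.trans_le hkl
  have hroot_ge : k ≤ √(k * l) := Real.le_sqrt_of_sq_le (by nlinarith)
  have hroot_le : √(k * l) ≤ l := (Real.sqrt_le_left hl.le).2 (by nlinarith)
  have hlower : k / l ≤ s / √(k * l) := by
    have := hs.1.le
    gcongr
    linarith
  have hupper : s / √(k * l) ≤ 1 + k⁻¹ := by
    calc s / √(k * l) ≤ (k + 1) / k := by
          have := hs.2.le
          gcongr
      _ = 1 + k⁻¹ := by rw [add_div, div_self hk.ne', one_div]
  have hsub : (l - k) / l = 1 - k / l := by rw [sub_div, div_self hl.ne']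
  have hinv : 0 < k⁻¹ := inv_pos.2 hk
  have hdiv : k / l ≤ 1 := (div_le_one hl).2 hkl
  rw [hsub, abs_le]
  constructor <;> linarith

variable {γ : ℝ}

lemma abs_rpow_sub_rpow_le {u m : ℝ} (hγ : -1 ≤ γ) (hγ0 : γ ≤ 0) (hm : 2 ≤ m)
    (hu : |u - m| ≤ 1) : |u ^ γ - m ^ γ| ≤ 4 * m ^ (γ - 1) := by
  have hm0 : 0 < m := by linarith
  have hbound : ∀ z ∈ Set.Ici (m / 2), ‖γ * z ^ (γ - 1)‖ ≤ 4 * m ^ (γ - 1) := fun z hz => by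
    have hz0 : 0 < z := (half_pos hm0).trans_le hz
    have htwo : (2 : ℝ) ^ (-(γ - 1)) ≤ 2 ^ (2 : ℝ) :=
      Real.rpow_le_rpow_of_exponent_le one_le_two (by linarith)
    rw [Real.norm_eq_abs, abs_mul, abs_of_nonneg (Real.rpow_nonneg hz0.le _)]
    calc |γ| * z ^ (γ - 1) ≤ 1 * (m / 2) ^ (γ - 1) :=
          mul_le_mul (abs_le.2 ⟨hγ, hγ0.trans zero_le_one⟩)
            (Real.rpow_le_rpow_of_nonpos (half_pos hm0) hz (by linarith))
            (Real.rpow_nonneg hz0.le _) zero_le_one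
      _ = 2 ^ (-(γ - 1)) * m ^ (γ - 1) := by
          rw [one_mul, Real.div_rpow hm0.le zero_le_two, Real.rpow_neg zero_le_two]
          ring
      _ ≤ 2 ^ (2 : ℝ) * m ^ (γ - 1) := by gcongr
      _ = 4 * m ^ (γ - 1) := by norm_num
  have hmvt := (convex_Ici (m / 2)).norm_image_sub_le_of_norm_hasDerivWithin_le
    (f := fun z : ℝ => z ^ γ) (x := m) (y := u) (fun z hz => (Real.hasDerivAt_rpow_const
      (Or.inl ((half_pos hm0).trans_le hz).ne')).hasDerivWithinAt) hbound
    (Set.mem_Ici.2 (by linarith))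
    (Set.mem_Ici.2 (by linarith [(abs_le.1 hu).1]))
  exact hmvt.trans (mul_le_of_le_one_right (by positivity) hu)

lemma rpow_mul_rpow_le {k m : ℝ} (hγ : -1 ≤ γ) (hγ0 : γ ≤ 0) (hk : 1 ≤ k) (hm : 1 ≤ m) :
    k ^ γ * m ^ γ ≤ 2 * (k + m) ^ γ := by
  have htwo : (2 : ℝ) ^ (-γ) ≤ 2 ^ (1 : ℝ) :=
    Real.rpow_le_rpow_of_exponent_le one_le_two (by linarith)
  calc k ^ γ * m ^ γ = (k * m) ^ γ := (Real.mul_rpow (by linarith) (by linarith)).symm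
    _ ≤ ((k + m) / 2) ^ γ := Real.rpow_le_rpow_of_nonpos (by linarith) (by nlinarith) hγ0
    _ = 2 ^ (-γ) * (k + m) ^ γ := by
        rw [Real.div_rpow (by linarith) zero_le_two, Real.rpow_neg zero_le_two]; ring
    _ ≤ 2 ^ (1 : ℝ) * (k + m) ^ γ := by gcongr
    _ = 2 * (k + m) ^ γ := by rw [Real.rpow_one]

lemma div_add_inv_mul_rpow_le {k m : ℝ} (hγ : -1 ≤ γ) (hγ0 : γ ≤ 0) (hk : 1 ≤ k) (hm : 1 ≤ m) :
    (m / (k + m) + k⁻¹) * m ^ γ ≤ 3 * (k + m) ^ γ := by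
  have hm0 : 0 < m := by linarith
  have hfirst : m / (k + m) * m ^ γ ≤ (k + m) ^ γ := by
    rw [div_mul_eq_mul_div, div_le_iff₀ (by positivity), mul_comm m, ← Real.rpow_add_one hm0.ne',
      ← Real.rpow_add_one (by positivity)]
    exact Real.rpow_le_rpow hm0.le (by linarith) (by linarith)
  have hinv : k⁻¹ ≤ k ^ γ := by
    rw [← Real.rpow_neg_one]
    exact Real.rpow_le_rpow_of_exponent_le hk hγ
  calc (m / (k + m) + k⁻¹) * m ^ γ = m / (k + m) * m ^ γ + k⁻¹ * m ^ γ := add_mul _ _ _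
    _ ≤ (k + m) ^ γ + k ^ γ * m ^ γ := by gcongr
    _ ≤ (k + m) ^ γ + 2 * (k + m) ^ γ :=
        add_le_add_right (rpow_mul_rpow_le hγ hγ0 hk hm) _
    _ = 3 * (k + m) ^ γ := by ring

lemma abs_inv_sqrt_sub_one_le {v : ℝ} (hv : 0 < v) : |(√v)⁻¹ - 1| ≤ (√v)⁻¹ * |v - 1| := by
  have hroot : 0 < √v := Real.sqrt_pos.2 hv
  have heq : (√v)⁻¹ - 1 = (√v)⁻¹ * -(√v - 1) := by field_simp; ring
  rw [heq, abs_mul, abs_neg, abs_of_pos (inv_pos.2 hroot)]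
  refine mul_le_mul_of_nonneg_left ?_ (inv_pos.2 hroot).le
  calc |√v - 1| ≤ |√v - 1| * (√v + 1) := le_mul_of_one_le_right (abs_nonneg _) (by linarith)
    _ = |v - 1| := by
      rw [← abs_of_pos (a := √v + 1) (by positivity), ← abs_mul]
      congr 1
      linear_combination Real.mul_self_sqrt hv.le

end PowerEstimates

section NormalisedIncrements

variable {β lam α C : ℝ} {φ : ℝ → ℝ}

/-- The factor by which `δ_{kl}` differs from `Δ(k,l) / (2 λ s^(2β-α))`, where `s` is the
intermediate point produced by the mean value theorem. -/
def normalisingWeight (β lam α : ℝ) (φ : ℝ → ℝ) (k l : ℕ) (s : ℝ) : ℝ :=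
  (s / √(k * l)) ^ (2 * β - α) *
    ((√(varianceRatio β lam α φ k))⁻¹ * (√(varianceRatio β lam α φ l))⁻¹)

lemma varianceRatio_pos (hlam : 0 < lam) {k : ℕ} (hk : 1 ≤ k) (hpos : 0 < covΔ β φ k k) :
    0 < varianceRatio β lam α φ k := by
  rw [varianceRatio]
  positivity

lemma covδ_eq_mul_normalisingWeight (hlam : 0 < lam) (hpos : ∀ k, 0 < covΔ β φ k k) {k l : ℕ}
    (hk : 1 ≤ k) (hl : 1 ≤ l) {s : ℝ} (hs : 0 < s) :
    covδ β φ k l =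
      covΔ β φ k l / (2 * lam * s ^ (2 * β - α)) * normalisingWeight β lam α φ k l s := by
  have hk0 : (0 : ℝ) < k := by exact_mod_cast hk
  have hl0 : (0 : ℝ) < l := by exact_mod_cast hl
  have hvk := varianceRatio_pos (α := α) hlam hk (hpos k)
  have hvl := varianceRatio_pos (α := α) hlam hl (hpos l)
  have hcov : ∀ {k : ℕ}, (0 : ℝ) < k →
      covΔ β φ k k = 2 * lam * (k : ℝ) ^ (2 * β - α) * varianceRatio β lam α φ k := fun hk => by
    rw [varianceRatio, mul_div_cancel₀ _ (by positivity)]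
  have hroot : √(covΔ β φ k k * covΔ β φ l l) = 2 * lam * √(k * l) ^ (2 * β - α) *
      (√(varianceRatio β lam α φ k) * √(varianceRatio β lam α φ l)) := by
    rw [← Real.sqrt_mul hvk.le]
    refine Real.sqrt_eq_iff_mul_self_eq_of_pos (by positivity) |>.2 ?_
    have hpow : √((k : ℝ) * l) ^ (2 * β - α) * √((k : ℝ) * l) ^ (2 * β - α) =
        (k : ℝ) ^ (2 * β - α) * (l : ℝ) ^ (2 * β - α) := by
      rw [← Real.mul_rpow (Real.sqrt_nonneg _) (Real.sqrt_nonneg _),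
        Real.mul_self_sqrt (by positivity), Real.mul_rpow hk0.le hl0.le]
    rw [hcov hk0, hcov hl0]
    linear_combination (4 * lam ^ 2 * (varianceRatio β lam α φ k * varianceRatio β lam α φ l)) *
      hpow + (4 * lam ^ 2 * (√((k : ℝ) * l) ^ (2 * β - α)) ^ 2) *
        Real.mul_self_sqrt (mul_pos hvk hvl).le
  rw [covδ, hroot, normalisingWeight, Real.div_rpow hs.le (Real.sqrt_nonneg _)]
  field_simp

namespace HasIncrementExpansion

lemma exists_abs_prod_inv_sqrt_sub_one_le (hφ : HasIncrementExpansion β lam α C φ) (hC : 0 ≤ C)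
    (hlam : 0 < lam) (hα : α < 2) (hpos : ∀ k, 0 < covΔ β φ k k) :
    ∃ B, 0 < B ∧ ∀ k l : ℕ, 1 ≤ k → k ≤ l →
      (√(varianceRatio β lam α φ k))⁻¹ * (√(varianceRatio β lam α φ l))⁻¹ ≤ B ∧
      |(√(varianceRatio β lam α φ k))⁻¹ * (√(varianceRatio β lam α φ l))⁻¹ - 1| ≤
        B * (k : ℝ) ^ (α - 2) := by
  obtain ⟨B, hB, hle⟩ := hφ.exists_inv_sqrt_varianceRatio_le hlam hα hpos
  set D := B * (C / (2 * lam)) with hD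
  have hD0 : 0 ≤ D := by positivity
  have hnear : ∀ k : ℕ, 1 ≤ k →
      |(√(varianceRatio β lam α φ k))⁻¹ - 1| ≤ D * (k : ℝ) ^ (α - 2) := fun k hk => by
    have hv := varianceRatio_pos (α := α) hlam hk (hpos k)
    rw [hD, mul_assoc]
    exact (abs_inv_sqrt_sub_one_le hv).trans (mul_le_mul (hle k)
      (hφ.abs_varianceRatio_sub_one_le hlam hk) (abs_nonneg _) hB.le)
  refine ⟨B * B + (B * D + D), by positivity, fun k l hk hkl => ?_⟩
  have hk0 : (0 : ℝ) < k := by exact_mod_cast hk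
  have hprod : (√(varianceRatio β lam α φ k))⁻¹ * (√(varianceRatio β lam α φ l))⁻¹ ≤ B * B := by
    gcongr <;> exact hle _
  refine ⟨hprod.trans (le_add_of_nonneg_right (by positivity)), ?_⟩
  set a := (√(varianceRatio β lam α φ k))⁻¹
  set b := (√(varianceRatio β lam α φ l))⁻¹
  have hb_near : |b - 1| ≤ D * (k : ℝ) ^ (α - 2) := (hnear l (hk.trans hkl)).trans
    (mul_le_mul_of_nonneg_left (Real.rpow_le_rpow_of_nonpos hk0 (by exact_mod_cast hkl)
      (by linarith)) hD0)
  calc |a * b - 1| = |a * (b - 1) + (a - 1)| := by ring_nf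
    _ ≤ |a * (b - 1)| + |a - 1| := abs_add_le _ _
    _ ≤ B * (D * (k : ℝ) ^ (α - 2)) + D * (k : ℝ) ^ (α - 2) := by
      rw [abs_mul, abs_of_nonneg (a := a) (by positivity)]
      gcongr
      · exact hle k
      · exact hnear k hk
    _ = (B * D + D) * (k : ℝ) ^ (α - 2) := by ring
    _ ≤ (B * B + (B * D + D)) * (k : ℝ) ^ (α - 2) :=
      mul_le_mul_of_nonneg_right (le_add_of_nonneg_left (by positivity)) (by positivity)

lemma exists_abs_normalisingWeight_sub_one_le (hφ : HasIncrementExpansion β lam α C φ)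
    (hC : 0 ≤ C) (hlam : 0 < lam) (hα1 : 1 ≤ α) (hα : α < 2) (hαβ : α ≤ 2 * β)
    (hβ : 2 * β - α ≤ 1) (hpos : ∀ k, 0 < covΔ β φ k k) :
    ∃ W, 0 < W ∧ ∀ k l : ℕ, 1 ≤ k → k + 2 ≤ l → ∀ s ∈ Set.Ioo (k : ℝ) (k + 1),
      |normalisingWeight β lam α φ k l s| ≤ W ∧
      |normalisingWeight β lam α φ k l s - 1| * ((l : ℝ) - k) ^ (α - 2) ≤
        W * (l : ℝ) ^ (α - 2) := by
  obtain ⟨B, hB, hprod⟩ := hφ.exists_abs_prod_inv_sqrt_sub_one_le hC hlam hα hpos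
  refine ⟨5 * B, by positivity, fun k l hk hkl s hs => ?_⟩
  obtain ⟨hprod_le, hprod_near⟩ := hprod k l hk (by omega)
  have hk1 : (1 : ℝ) ≤ k := by exact_mod_cast hk
  have hklR : (k : ℝ) + 2 ≤ l := by exact_mod_cast hkl
  have hbase : 0 < s / √(k * l) := div_pos (by linarith [hs.1])
    (Real.sqrt_pos.2 (mul_pos (by linarith) (by linarith)))
  have hscale : |(s / √(k * l)) ^ (2 * β - α) - 1| ≤ ((l : ℝ) - k) / l + (k : ℝ)⁻¹ :=
    (abs_rpow_sub_one_le hbase (sub_nonneg.2 hαβ) hβ).trans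
      (abs_div_sqrt_mul_sub_one_le (by linarith) (by linarith) hs)
  have hscale_le : (s / √(k * l)) ^ (2 * β - α) ≤ 3 := by
    have hdiv : ((l : ℝ) - k) / l ≤ 1 := (div_le_one (by linarith)).2 (by linarith)
    have hinv : (k : ℝ)⁻¹ ≤ 1 := inv_le_one_of_one_le₀ hk1
    linarith [(abs_le.1 hscale).2]
  have hfar := div_add_inv_mul_rpow_le (γ := α - 2) (k := k) (m := (l : ℝ) - k) (by linarith)
    (by linarith) hk1 (by linarith)
  have hnear := rpow_mul_rpow_le (γ := α - 2) (k := k) (m := (l : ℝ) - k) (by linarith)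
    (by linarith) hk1 (by linarith)
  rw [add_sub_cancel] at hfar hnear
  have hm : 0 ≤ ((l : ℝ) - k) ^ (α - 2) := Real.rpow_nonneg (by linarith) _
  rw [normalisingWeight]
  set ρ := (s / √(k * l)) ^ (2 * β - α)
  set y := (√(varianceRatio β lam α φ k))⁻¹ * (√(varianceRatio β lam α φ l))⁻¹
  have hy0 : 0 ≤ y := by positivity
  have hρ0 : 0 ≤ ρ := by positivity
  refine ⟨?_, ?_⟩
  · rw [abs_of_nonneg (mul_nonneg hρ0 hy0)]
    calc ρ * y ≤ 3 * B := by gcongr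
      _ ≤ 5 * B := by linarith
  · calc |ρ * y - 1| * ((l : ℝ) - k) ^ (α - 2)
        = |(ρ - 1) * y + (y - 1)| * ((l : ℝ) - k) ^ (α - 2) := by ring_nf
      _ ≤ ((((l : ℝ) - k) / l + (k : ℝ)⁻¹) * B + B * (k : ℝ) ^ (α - 2)) *
          ((l : ℝ) - k) ^ (α - 2) := by
        gcongr
        refine (abs_add_le _ _).trans (add_le_add ?_ hprod_near)
        rw [abs_mul, abs_of_nonneg hy0]
        exact mul_le_mul hscale hprod_le hy0 ((abs_nonneg _).trans hscale)
      _ = B * ((((l : ℝ) - k) / l + (k : ℝ)⁻¹) * ((l : ℝ) - k) ^ (α - 2)) +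
          B * ((k : ℝ) ^ (α - 2) * ((l : ℝ) - k) ^ (α - 2)) := by ring
      _ ≤ B * (3 * (l : ℝ) ^ (α - 2)) + B * (2 * (l : ℝ) ^ (α - 2)) := by gcongr
      _ = 5 * B * (l : ℝ) ^ (α - 2) := by ring

lemma exists_abs_covΔ_div_sub_le (hφ : HasIncrementExpansion β lam α C φ) (hC : 0 ≤ C)
    (hlam : 0 < lam) (hα1 : 1 ≤ α) (hα : α < 2) :
    ∃ A, 0 < A ∧ ∀ k l : ℕ, 1 ≤ k → k + 2 ≤ l → ∃ s ∈ Set.Ioo (k : ℝ) (k + 1),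
      |covΔ β φ k l / (2 * lam * s ^ (2 * β - α)) -
          α * (α - 1) / 2 * ((l : ℝ) - k) ^ (α - 2)| ≤
        A * ((l : ℝ) ^ (α - 2) + ((l : ℝ) - k) ^ (α - 3)) := by
  refine ⟨C / (2 * lam) + 4, by positivity, fun k l hk hkl => ?_⟩
  obtain ⟨s, hs, t, ht, hst⟩ := hφ.exists_abs_covΔ_sub_le hk hkl
  refine ⟨s, hs, ?_⟩
  have hklR : (k : ℝ) + 2 ≤ l := by exact_mod_cast hkl
  have hl0 : (0 : ℝ) < l := by linarith [k.cast_nonneg (α := ℝ)]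
  have hs0 : 0 < s := k.cast_nonneg.trans_lt hs.1
  have ht_le : t ^ (α - 2) ≤ (l : ℝ) ^ (α - 2) :=
    Real.rpow_le_rpow_of_nonpos hl0 ht.1.le (by linarith)
  have hcoef : |α * (α - 1) / 2| ≤ 1 := by
    rw [abs_of_nonneg (by nlinarith)]
    nlinarith
  have hpow : |(t - s) ^ (α - 2) - ((l : ℝ) - k) ^ (α - 2)| ≤ 4 * ((l : ℝ) - k) ^ (α - 3) := by
    have := abs_rpow_sub_rpow_le (u := t - s) (m := (l : ℝ) - k) (γ := α - 2) (by linarith)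
      (by linarith) (by linarith) (abs_le.2 ⟨by linarith [hs.2, ht.1], by linarith [hs.1, ht.2]⟩)
    rwa [sub_sub, two_add_one_eq_three] at this
  have hmain : |covΔ β φ k l / (2 * lam * s ^ (2 * β - α)) -
      α * (α - 1) / 2 * (t - s) ^ (α - 2)| ≤ C / (2 * lam) * t ^ (α - 2) := by
    have heq : covΔ β φ k l / (2 * lam * s ^ (2 * β - α)) -
        α * (α - 1) / 2 * (t - s) ^ (α - 2) =
        (covΔ β φ k l - lam * α * (α - 1) * s ^ (2 * β - α) * (t - s) ^ (α - 2)) /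
          (2 * lam * s ^ (2 * β - α)) := by field_simp
    rw [heq, abs_div, abs_of_pos (by positivity : 0 < 2 * lam * s ^ (2 * β - α)),
      div_le_iff₀ (by positivity)]
    refine hst.trans_eq ?_
    field_simp
  calc _ ≤ C / (2 * lam) * t ^ (α - 2) +
        |α * (α - 1) / 2 * ((t - s) ^ (α - 2) - ((l : ℝ) - k) ^ (α - 2))| := by
        refine (abs_sub_le _ (α * (α - 1) / 2 * (t - s) ^ (α - 2)) _).trans ?_
        rw [← mul_sub]
        exact add_le_add_left hmain _
    _ ≤ C / (2 * lam) * (l : ℝ) ^ (α - 2) + 1 * (4 * ((l : ℝ) - k) ^ (α - 3)) := by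
        rw [abs_mul]; gcongr
    _ ≤ _ := by
        have hfst : 0 ≤ (l : ℝ) ^ (α - 2) := Real.rpow_nonneg hl0.le _
        have hsnd : 0 ≤ ((l : ℝ) - k) ^ (α - 3) := Real.rpow_nonneg (by linarith) _
        have hCl : 0 ≤ C / (2 * lam) := by positivity
        nlinarith

theorem exists_abs_covδ_sub_le (hφ : HasIncrementExpansion β lam α C φ) (hC : 0 ≤ C)
    (hlam : 0 < lam) (hα1 : 1 ≤ α) (hα : α < 2) (hαβ : α ≤ 2 * β) (hβ : 2 * β - α ≤ 1)
    (hpos : ∀ k, 0 < covΔ β φ k k) :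
    ∃ K, 0 < K ∧ ∀ k l : ℕ, 1 ≤ k → k + 2 ≤ l →
      |covδ β φ k l - α * (α - 1) / 2 * ((l : ℝ) - k) ^ (α - 2)| ≤
        K * ((l : ℝ) ^ (α - 2) + ((l : ℝ) - k) ^ (α - 3)) := by
  obtain ⟨A, hA, happrox⟩ := hφ.exists_abs_covΔ_div_sub_le hC hlam hα1 hα
  obtain ⟨W, hW, hweight⟩ :=
    hφ.exists_abs_normalisingWeight_sub_one_le hC hlam hα1 hα hαβ hβ hpos
  refine ⟨A * W + W, by positivity, fun k l hk hkl => ?_⟩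
  obtain ⟨s, hs, hx⟩ := happrox k l hk hkl
  obtain ⟨hw_le, hw_near⟩ := hweight k l hk hkl s hs
  have hklR : (k : ℝ) + 2 ≤ l := by exact_mod_cast hkl
  have hm : 0 ≤ ((l : ℝ) - k) ^ (α - 2) := Real.rpow_nonneg (by linarith) _
  have hm' : 0 ≤ ((l : ℝ) - k) ^ (α - 3) := Real.rpow_nonneg (by linarith) _
  have hcoef : |α * (α - 1) / 2| ≤ 1 := by
    rw [abs_of_nonneg (by nlinarith)]
    nlinarith
  rw [covδ_eq_mul_normalisingWeight hlam hpos hk (by omega) (k.cast_nonneg.trans_lt hs.1)]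
  set x := covΔ β φ k l / (2 * lam * s ^ (2 * β - α))
  set w := normalisingWeight β lam α φ k l s
  set c := α * (α - 1) / 2
  set m := ((l : ℝ) - k) ^ (α - 2)
  calc |x * w - c * m| = |(x - c * m) * w + c * ((w - 1) * m)| := by ring_nf
    _ ≤ |x - c * m| * |w| + |c| * (|w - 1| * m) := by
        refine (abs_add_le _ _).trans_eq ?_
        rw [abs_mul, abs_mul, abs_mul, abs_of_nonneg hm]
    _ ≤ A * ((l : ℝ) ^ (α - 2) + ((l : ℝ) - k) ^ (α - 3)) * W + 1 * (W * (l : ℝ) ^ (α - 2)) := by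
        gcongr
    _ ≤ (A * W + W) * ((l : ℝ) ^ (α - 2) + ((l : ℝ) - k) ^ (α - 3)) := by
        linarith [mul_nonneg hW.le hm']

end HasIncrementExpansion

end NormalisedIncrements

section FourCycles

variable {κ : Type*} [Fintype κ]

lemma sum_four_rotate (F : κ → κ → κ → κ → ℝ) :
    ∑ a, ∑ b, ∑ c, ∑ d, F b c d a = ∑ a, ∑ b, ∑ c, ∑ d, F a b c d := by
  rw [Finset.sum_comm]
  refine Finset.sum_congr rfl fun b _ => ?_
  rw [Finset.sum_comm]
  exact Finset.sum_congr rfl fun c _ => Finset.sum_comm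

lemma sum_path_le {g : κ → κ → ℝ} {S : ℝ} (hg : ∀ k l, 0 ≤ g k l) (hS : ∀ k, ∑ l, g k l ≤ S) :
    ∑ a, ∑ b, ∑ c, ∑ d, g a b * g b c * g c d ≤ Fintype.card κ * S ^ 3 := by
  have hpath : ∀ a, ∑ b, ∑ c, ∑ d, g a b * g b c * g c d ≤ S ^ 3 := fun a => by
    have hS0 : 0 ≤ S := (Finset.sum_nonneg fun l _ => hg a l).trans (hS a)
    calc ∑ b, ∑ c, ∑ d, g a b * g b c * g c d
        = ∑ b, g a b * ∑ c, g b c * ∑ d, g c d := by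
          simp only [Finset.mul_sum, mul_assoc]
      _ ≤ ∑ b, g a b * ∑ c, g b c * S := by
          gcongr with b _ c _
          · exact hg a b
          · exact hg b c
          · exact hS c
      _ = ∑ b, g a b * ((∑ c, g b c) * S) := by simp only [Finset.sum_mul]
      _ ≤ ∑ b, g a b * (S * S) := by
          gcongr with b _
          · exact hg a b
          · exact hS b
      _ = (∑ b, g a b) * (S * S) := by rw [Finset.sum_mul]
      _ ≤ S * (S * S) := by gcongr; exact hS a
      _ = S ^ 3 := by ring
  calc ∑ a, ∑ b, ∑ c, ∑ d, g a b * g b c * g c d ≤ ∑ _a : κ, S ^ 3 :=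
        Finset.sum_le_sum fun a _ => hpath a
    _ = Fintype.card κ * S ^ 3 := by
        rw [Finset.sum_const, Finset.card_univ, nsmul_eq_mul]

lemma mul_four_le_sum_pow_four (a b c d : ℝ) :
    a * b * c * d ≤ (a ^ 4 + b ^ 4 + c ^ 4 + d ^ 4) / 4 := by
  nlinarith [sq_nonneg (a * b - c * d), sq_nonneg (a ^ 2 - b ^ 2), sq_nonneg (c ^ 2 - d ^ 2)]

-- The product over the four edges of a cycle is the product of the four paths obtained by
-- deleting one edge, each to the power `1/3`; AM-GM then reduces cycles to paths.
lemma sum_cycle_le {h : κ → κ → ℝ} {S : ℝ} (hS : ∀ k, ∑ l, h k l ^ 4 ≤ S) :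
    ∑ a, ∑ b, ∑ c, ∑ d, h a b ^ 3 * h b c ^ 3 * h c d ^ 3 * h d a ^ 3 ≤
      Fintype.card κ * S ^ 3 := by
  set path : κ → κ → κ → κ → ℝ := fun a b c d => h a b ^ 4 * h b c ^ 4 * h c d ^ 4 with hpath
  have hle : ∀ a b c d, h a b ^ 3 * h b c ^ 3 * h c d ^ 3 * h d a ^ 3 ≤
      (path a b c d + path b c d a + path c d a b + path d a b c) / 4 := fun a b c d => by
    calc h a b ^ 3 * h b c ^ 3 * h c d ^ 3 * h d a ^ 3
        = (h a b * h b c * h c d) * (h b c * h c d * h d a) * (h c d * h d a * h a b) *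
          (h d a * h a b * h b c) := by ring
      _ ≤ _ := mul_four_le_sum_pow_four _ _ _ _
      _ = (path a b c d + path b c d a + path c d a b + path d a b c) / 4 := by
          simp only [hpath]; ring
  have hrot₁ := sum_four_rotate path
  have hrot₂ := (sum_four_rotate fun a b c d => path b c d a).trans hrot₁
  have hrot₃ := (sum_four_rotate fun a b c d => path c d a b).trans hrot₂
  have hsum : ∑ a, ∑ b, ∑ c, ∑ d, (path a b c d + path b c d a + path c d a b + path d a b c) / 4 =
      ∑ a, ∑ b, ∑ c, ∑ d, path a b c d := by
    simp only [← Finset.sum_div, Finset.sum_add_distrib]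
    linarith
  calc _ ≤ ∑ a, ∑ b, ∑ c, ∑ d,
        (path a b c d + path b c d a + path c d a b + path d a b c) / 4 := by
        gcongr with a _ b _ c _ d _; exact hle a b c d
    _ = ∑ a, ∑ b, ∑ c, ∑ d, path a b c d := hsum
    _ ≤ Fintype.card κ * S ^ 3 := sum_path_le (fun k l => by positivity) hS

lemma corrFour_le {δ : κ → κ → ℝ} {S : ℝ} (hδ : ∀ k l, δ k l = δ l k)
    (hS : ∀ k, ∑ l, |δ k l| ^ (4 / 3 : ℝ) ≤ S) : corrFour δ ≤ Fintype.card κ * S ^ 3 := by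
  have hcube : ∀ k l, (|δ k l| ^ (1 / 3 : ℝ)) ^ 3 = |δ k l| := fun k l => by
    rw [← Real.rpow_mul_natCast (abs_nonneg _)]; norm_num
  have hfourth : ∀ k l, (|δ k l| ^ (1 / 3 : ℝ)) ^ 4 = |δ k l| ^ (4 / 3 : ℝ) := fun k l => by
    rw [← Real.rpow_mul_natCast (abs_nonneg _)]; norm_num
  calc corrFour δ ≤ ∑ a, ∑ b, ∑ d, ∑ c, |δ a b| * |δ b c| * |δ c d| * |δ d a| := by
        unfold corrFour
        refine Finset.sum_le_sum fun a _ => Finset.sum_le_sum fun b _ =>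
          Finset.sum_le_sum fun d _ => Finset.sum_le_sum fun c _ => (le_abs_self _).trans_eq ?_
        rw [abs_mul, abs_mul, abs_mul, hδ c d, hδ d a]
        ring
    _ = ∑ a, ∑ b, ∑ c, ∑ d, |δ a b| * |δ b c| * |δ c d| * |δ d a| :=
        Finset.sum_congr rfl fun a _ => Finset.sum_congr rfl fun b _ => Finset.sum_comm
    _ ≤ Fintype.card κ * S ^ 3 := by
        have := sum_cycle_le (h := fun k l => |δ k l| ^ (1 / 3 : ℝ)) (S := S)
          (by simpa only [hfourth] using hS)
        simpa only [hcube] using this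

end FourCycles

section DecayingCorrelations

lemma sum_range_rpow_sub_one_le {q : ℝ} (hq : 0 < q) (hq1 : q ≤ 1) (N : ℕ) :
    ∑ m ∈ Finset.range N, ((m : ℝ) + 1) ^ (q - 1) ≤ (N : ℝ) ^ q / q := by
  induction N with
  | zero => rw [Finset.range_zero, Finset.sum_empty]; positivity
  | succ N ih =>
    have hN : (0 : ℝ) < (N : ℝ) + 1 := by positivity
    have hinv : ((N : ℝ) + 1)⁻¹ ≤ 1 := inv_le_one_of_one_le₀ (le_add_of_nonneg_left N.cast_nonneg)
    have hbern : (1 + -((N : ℝ) + 1)⁻¹) ^ q ≤ 1 + q * -((N : ℝ) + 1)⁻¹ :=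
      rpow_one_add_le_one_add_mul_self (neg_le_neg hinv) hq.le hq1
    have hstep : (N : ℝ) ^ q ≤ ((N : ℝ) + 1) ^ q - q * ((N : ℝ) + 1) ^ (q - 1) := by
      calc (N : ℝ) ^ q = (((N : ℝ) + 1) * (1 + -((N : ℝ) + 1)⁻¹)) ^ q := by
            congr 1; field_simp; ring
        _ = ((N : ℝ) + 1) ^ q * (1 + -((N : ℝ) + 1)⁻¹) ^ q :=
            Real.mul_rpow hN.le (by linarith)
        _ ≤ ((N : ℝ) + 1) ^ q * (1 + q * -((N : ℝ) + 1)⁻¹) := by gcongr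
        _ = ((N : ℝ) + 1) ^ q - q * ((N : ℝ) + 1) ^ (q - 1) := by
            rw [Real.rpow_sub_one hN.ne']; ring
    rw [Finset.sum_range_succ]
    push_cast
    rw [le_div_iff₀ hq] at ih ⊢
    linarith

lemma sum_Icc_dist_le {u : ℕ → ℝ} (hu : ∀ m, 0 ≤ u m) {D k : ℕ} (hk : k ∈ Finset.Icc 1 D) :
    ∑ l ∈ Finset.Icc 1 D, u (Nat.dist k l) ≤ 2 * ∑ m ∈ Finset.range D, u m := by
  have hside : ∀ s ⊆ Finset.Icc 1 D, Set.InjOn (Nat.dist k) s →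
      ∑ l ∈ s, u (Nat.dist k l) ≤ ∑ m ∈ Finset.range D, u m := fun s hs hinj => by
    rw [← Finset.sum_image hinj]
    refine Finset.sum_le_sum_of_subset_of_nonneg (fun m hm => ?_) fun m _ _ => hu m
    obtain ⟨l, hl, rfl⟩ := Finset.mem_image.1 hm
    have hlD := Finset.mem_Icc.1 (hs hl)
    rw [Finset.mem_Icc] at hk
    rw [Finset.mem_range, Nat.dist]
    omega
  rw [← Finset.sum_filter_add_sum_filter_not _ (fun l => l < k), two_mul]
  refine add_le_add (hside _ (Finset.filter_subset _ _) fun l hl l' hl' heq => ?_)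
    (hside _ (Finset.filter_subset _ _) fun l hl l' hl' heq => ?_) <;>
  · simp only [Finset.coe_filter, Set.mem_ofPred_eq, Nat.dist] at hl hl' heq
    omega

lemma corrFour_le_of_abs_le {δ : ℕ → ℕ → ℝ} {D : ℕ} {A : ℝ} (hA : 0 ≤ A)
    (hδ : ∀ k l, δ k l = δ l k) (hdecay : ∀ k ∈ Finset.Icc 1 D, ∀ l ∈ Finset.Icc 1 D,
      |δ k l| ≤ A * ((Nat.dist k l : ℝ) + 1) ^ (-1 / 2 : ℝ)) :
    corrFour (fun k l : Finset.Icc 1 D => δ k l) ≤ 216 * A ^ 4 * (D : ℝ) ^ 2 := by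
  have hrow : ∀ k : Finset.Icc 1 D, ∑ l : Finset.Icc 1 D, |δ k l| ^ (4 / 3 : ℝ) ≤
      6 * (A ^ (4 / 3 : ℝ) * (D : ℝ) ^ (1 / 3 : ℝ)) := fun k => by
    have hsum := sum_range_rpow_sub_one_le (q := 1 / 3) (by norm_num) (by norm_num) D
    have hpow : ∀ m : ℕ, (((m : ℝ) + 1) ^ (-1 / 2 : ℝ)) ^ (4 / 3 : ℝ) =
        ((m : ℝ) + 1) ^ (1 / 3 - 1 : ℝ) := fun m => by
      rw [← Real.rpow_mul (by positivity)]; norm_num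
    calc ∑ l : Finset.Icc 1 D, |δ k l| ^ (4 / 3 : ℝ)
        ≤ ∑ l : Finset.Icc 1 D, (A * ((Nat.dist k l : ℝ) + 1) ^ (-1 / 2 : ℝ)) ^ (4 / 3 : ℝ) :=
          Finset.sum_le_sum fun l _ => Real.rpow_le_rpow (abs_nonneg _) (hdecay k k.2 l l.2)
            (by norm_num)
      _ = A ^ (4 / 3 : ℝ) *
          ∑ l ∈ Finset.Icc 1 D, ((Nat.dist k l : ℝ) + 1) ^ (1 / 3 - 1 : ℝ) := by
          rw [Finset.sum_coe_sort (Finset.Icc 1 D) fun l =>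
            (A * ((Nat.dist k l : ℝ) + 1) ^ (-1 / 2 : ℝ)) ^ (4 / 3 : ℝ), Finset.mul_sum]
          refine Finset.sum_congr rfl fun l _ => ?_
          rw [Real.mul_rpow hA (by positivity), hpow]
      _ ≤ A ^ (4 / 3 : ℝ) * (2 * ((D : ℝ) ^ (1 / 3 : ℝ) / (1 / 3))) := by
          gcongr
          exact (sum_Icc_dist_le (u := fun m => ((m : ℝ) + 1) ^ (1 / 3 - 1 : ℝ))
            (fun m => by positivity) k.2).trans (by gcongr)
      _ = 6 * (A ^ (4 / 3 : ℝ) * (D : ℝ) ^ (1 / 3 : ℝ)) := by ring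
  have hA4 : (A ^ (4 / 3 : ℝ)) ^ 3 = A ^ 4 := by
    rw [← Real.rpow_mul_natCast hA]
    norm_num
  have hD1 : ((D : ℝ) ^ (1 / 3 : ℝ)) ^ 3 = D := by
    rw [← Real.rpow_mul_natCast (by positivity)]; norm_num
  refine (corrFour_le (fun k l : Finset.Icc 1 D => hδ k l) hrow).trans_eq ?_
  rw [Fintype.card_coe, Nat.card_Icc, Nat.add_sub_cancel, mul_pow, mul_pow, hA4, hD1]
  ring

end DecayingCorrelations

section FiniteSums

lemma sum_Icc_sum_Icc_of_symm {f : ℕ → ℕ → ℝ} (hf : ∀ k l, f k l = f l k) (D : ℕ) :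
    ∑ k ∈ Finset.Icc 1 D, ∑ l ∈ Finset.Icc 1 D, f k l =
      ∑ n ∈ Finset.range D, (f (n + 1) (n + 1) + 2 * ∑ m ∈ Finset.range n, f (n - m) (n + 1)) := by
  induction D with
  | zero => rw [Finset.range_zero, Finset.sum_empty, Finset.Icc_eq_empty (by omega),
      Finset.sum_empty]
  | succ D ih =>
    have hreflect : ∑ l ∈ Finset.Icc 1 D, f l (D + 1) =
        ∑ m ∈ Finset.range D, f (D - m) (D + 1) := by
      rw [← Finset.Ico_succ_right_eq_Icc, Order.succ_eq_add_one, Finset.sum_Ico_eq_sum_range,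
        Nat.add_sub_cancel, ← Finset.sum_range_reflect]
      refine Finset.sum_congr rfl fun m hm => ?_
      rw [Finset.mem_range] at hm
      congr 1
      omega
    have hlast : ∑ l ∈ Finset.Icc 1 D, f (D + 1) l = ∑ l ∈ Finset.Icc 1 D, f l (D + 1) :=
      Finset.sum_congr rfl fun l _ => hf _ _
    rw [Finset.sum_range_succ, ← ih, ← hreflect]
    simp only [Finset.sum_Icc_succ_top (Nat.le_add_left 1 D), Finset.sum_add_distrib, hlast]
    ring

lemma abs_sum_range_inv_sub_log_le (n : ℕ) :
    |∑ m ∈ Finset.range n, ((m : ℝ) + 1)⁻¹ - Real.log (n + 1)| ≤ 1 := by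
  have hcast : ((harmonic n : ℚ) : ℝ) = ∑ m ∈ Finset.range n, ((m : ℝ) + 1)⁻¹ := by
    rw [harmonic]; push_cast; rfl
  have hlower := log_add_one_le_harmonic n
  have hupper := harmonic_le_one_add_log n
  have hmono : Real.log n ≤ Real.log (n + 1) := by
    rcases n.eq_zero_or_pos with rfl | hn
    · norm_num
    · exact Real.log_le_log (by exact_mod_cast hn) (by linarith)
  rw [hcast] at hlower hupper
  push_cast at hlower
  rw [abs_le]
  constructor <;> linarith

lemma sum_range_inv_sq_le (n : ℕ) : ∑ m ∈ Finset.range n, (((m : ℝ) + 1) ^ 2)⁻¹ ≤ 2 := by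
  have hshift : ∑ m ∈ Finset.range n, (((m : ℝ) + 1) ^ 2)⁻¹ =
      ∑ i ∈ Finset.Ioo 0 (n + 1), ((i : ℝ) ^ 2)⁻¹ := by
    rw [← Finset.Ico_succ_left_eq_Ioo, Order.succ_eq_add_one, Finset.sum_Ico_eq_sum_range]
    refine Finset.sum_congr (by norm_num) fun m _ => ?_
    push_cast
    rw [add_comm]
  simpa only [hshift, Nat.cast_zero, zero_add, div_one] using sum_Ioo_inv_sq_le (α := ℝ) 0 (n + 1)

lemma abs_log_factorial_sub_le (D : ℕ) : |Real.log D.factorial - D * Real.log D| ≤ D := by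
  rcases D.eq_zero_or_pos with rfl | hD
  · norm_num
  have hD0 : (0 : ℝ) < D := by exact_mod_cast hD
  have hfact : (0 : ℝ) < D.factorial := by exact_mod_cast D.factorial_pos
  have hupper : Real.log D.factorial ≤ D * Real.log D := by
    rw [← Real.log_pow]
    exact Real.log_le_log hfact (by exact_mod_cast D.factorial_le_pow)
  have hlower : D * Real.log D - Real.log D.factorial ≤ D := by
    rw [← Real.log_pow, ← Real.log_div (by positivity) hfact.ne', Real.log_le_iff_le_exp
      (by positivity)]
    exact Real.pow_div_factorial_le_exp _ hD0.le D
  rw [abs_le]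
  constructor <;> linarith

lemma sum_range_log_add_one (D : ℕ) :
    ∑ n ∈ Finset.range D, Real.log ((n : ℝ) + 1) = Real.log D.factorial := by
  rw [← Finset.prod_range_add_one_eq_factorial, Nat.cast_prod,
    Real.log_prod fun n _ => by positivity]
  push_cast
  rfl

end FiniteSums

/-- A symmetric kernel with unit diagonal whose off-diagonal entries on `{1, …, D}` follow the
profile `c (l - k)^(-1/2)` of long-range dependence at the critical exponent, up to an error that
is one power smaller in `l - k` or comparable to `l^(-1/2)`. -/
structure HasCriticalDecay (c C : ℝ) (D : ℕ) (δ : ℕ → ℕ → ℝ) : Prop where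
  diag : ∀ k, δ k k = 1
  symm : ∀ k l, δ k l = δ l k
  abs_sub_le : ∀ k ∈ Finset.Icc 1 D, ∀ l ∈ Finset.Icc 1 D, k < l →
    |δ k l - c * ((l : ℝ) - k) ^ (-1 / 2 : ℝ)| ≤
      C * ((l : ℝ) ^ (-1 / 2 : ℝ) + ((l : ℝ) - k) ^ (-3 / 2 : ℝ))

namespace HasCriticalDecay

variable {c C : ℝ} {D : ℕ} {δ : ℕ → ℕ → ℝ}

lemma abs_le_of_lt (hδ : HasCriticalDecay c C D δ) (hc : 0 ≤ c) (hC : 0 ≤ C) {k l : ℕ}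
    (hk : k ∈ Finset.Icc 1 D) (hl : l ∈ Finset.Icc 1 D) (hkl : k < l) :
    |δ k l| ≤ (c + 2 * C) * ((l : ℝ) - k) ^ (-1 / 2 : ℝ) := by
  have hm : 1 ≤ (l : ℝ) - k := by
    have : (k : ℝ) + 1 ≤ l := by exact_mod_cast hkl
    linarith
  have hfst : (l : ℝ) ^ (-1 / 2 : ℝ) ≤ ((l : ℝ) - k) ^ (-1 / 2 : ℝ) :=
    Real.rpow_le_rpow_of_nonpos (by linarith) (by linarith [k.cast_nonneg (α := ℝ)]) (by norm_num)
  have hsnd : ((l : ℝ) - k) ^ (-3 / 2 : ℝ) ≤ ((l : ℝ) - k) ^ (-1 / 2 : ℝ) :=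
    Real.rpow_le_rpow_of_exponent_le hm (by norm_num)
  have hx : 0 ≤ c * ((l : ℝ) - k) ^ (-1 / 2 : ℝ) :=
    mul_nonneg hc (Real.rpow_nonneg (by linarith) _)
  calc |δ k l| ≤ |c * ((l : ℝ) - k) ^ (-1 / 2 : ℝ)| +
        |δ k l - c * ((l : ℝ) - k) ^ (-1 / 2 : ℝ)| := by
        simpa only [add_sub_cancel] using abs_add_le (c * ((l : ℝ) - k) ^ (-1 / 2 : ℝ))
          (δ k l - c * ((l : ℝ) - k) ^ (-1 / 2 : ℝ))
    _ ≤ c * ((l : ℝ) - k) ^ (-1 / 2 : ℝ) +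
        C * (((l : ℝ) - k) ^ (-1 / 2 : ℝ) + ((l : ℝ) - k) ^ (-1 / 2 : ℝ)) := by
        rw [abs_of_nonneg hx]
        exact add_le_add_right ((hδ.abs_sub_le k hk l hl hkl).trans
          (mul_le_mul_of_nonneg_left (add_le_add hfst hsnd) hC)) _
    _ = (c + 2 * C) * ((l : ℝ) - k) ^ (-1 / 2 : ℝ) := by ring

lemma abs_le_dist (hδ : HasCriticalDecay c C D δ) (hc : 0 ≤ c) (hC : 0 ≤ C) {k l : ℕ}
    (hk : k ∈ Finset.Icc 1 D) (hl : l ∈ Finset.Icc 1 D) :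
    |δ k l| ≤ (1 + 2 * (c + 2 * C)) * ((Nat.dist k l : ℝ) + 1) ^ (-1 / 2 : ℝ) := by
  wlog hkl : k ≤ l generalizing k l
  · rw [hδ.symm, Nat.dist_comm]
    exact this hl hk (le_of_not_ge hkl)
  rw [Nat.dist_eq_sub_of_le hkl, Nat.cast_sub hkl]
  rcases hkl.eq_or_lt with rfl | hlt
  · rw [hδ.diag, sub_self, zero_add, Real.one_rpow, abs_one]
    linarith
  have hm : 1 ≤ (l : ℝ) - k := by
    have : (k : ℝ) + 1 ≤ l := by exact_mod_cast hlt
    linarith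
  have hhalf : ((l : ℝ) - k) ^ (-1 / 2 : ℝ) ≤ 2 * ((l : ℝ) - k + 1) ^ (-1 / 2 : ℝ) := by
    simpa only [Real.one_rpow, one_mul, mul_one, add_comm (1 : ℝ)] using
      rpow_mul_rpow_le (γ := -1 / 2) (k := 1) (by norm_num) (by norm_num) le_rfl hm
  calc |δ k l| ≤ (c + 2 * C) * ((l : ℝ) - k) ^ (-1 / 2 : ℝ) :=
        hδ.abs_le_of_lt hc hC hk hl hlt
    _ ≤ (c + 2 * C) * (2 * ((l : ℝ) - k + 1) ^ (-1 / 2 : ℝ)) :=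
        mul_le_mul_of_nonneg_left hhalf (by positivity)
    _ ≤ (1 + 2 * (c + 2 * C)) * ((l : ℝ) - k + 1) ^ (-1 / 2 : ℝ) := by
        have : 0 ≤ ((l : ℝ) - k + 1) ^ (-1 / 2 : ℝ) := Real.rpow_nonneg (by linarith) _
        linarith

lemma corrFour_le (hδ : HasCriticalDecay c C D δ) (hc : 0 ≤ c) (hC : 0 ≤ C) :
    corrFour (fun k l : Finset.Icc 1 D => δ k l) ≤
      216 * (1 + 2 * (c + 2 * C)) ^ 4 * (D : ℝ) ^ 2 :=
  corrFour_le_of_abs_le (by positivity) hδ.symm fun _ hk _ hl => hδ.abs_le_dist hc hC hk hl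

lemma abs_sq_sub_le (hδ : HasCriticalDecay c C D δ) (hc : 0 ≤ c) (hC : 0 ≤ C) {k l : ℕ}
    (hk : k ∈ Finset.Icc 1 D) (hl : l ∈ Finset.Icc 1 D) (hkl : k < l) :
    |δ k l ^ 2 - c ^ 2 * ((l : ℝ) - k)⁻¹| ≤ C * (2 * c + 2 * C) *
      ((l : ℝ) ^ (-1 / 2 : ℝ) * ((l : ℝ) - k) ^ (-1 / 2 : ℝ) + (((l : ℝ) - k) ^ 2)⁻¹) := by
  have hm : 0 < (l : ℝ) - k := sub_pos.2 (by exact_mod_cast hkl)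
  have hle := hδ.abs_le_of_lt hc hC hk hl hkl
  have hnear := hδ.abs_sub_le k hk l hl hkl
  have hsq : ((l : ℝ) - k)⁻¹ = (((l : ℝ) - k) ^ (-1 / 2 : ℝ)) ^ 2 := by
    rw [← Real.rpow_neg_one, ← Real.rpow_mul_natCast hm.le]; norm_num
  have hprod : (((l : ℝ) - k) ^ 2)⁻¹ =
      ((l : ℝ) - k) ^ (-3 / 2 : ℝ) * ((l : ℝ) - k) ^ (-1 / 2 : ℝ) := by
    rw [← Real.rpow_add hm, ← Real.rpow_natCast, ← Real.rpow_neg hm.le]; norm_num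
  have hx : 0 ≤ ((l : ℝ) - k) ^ (-1 / 2 : ℝ) := Real.rpow_nonneg hm.le _
  have hy : 0 ≤ (l : ℝ) ^ (-1 / 2 : ℝ) := Real.rpow_nonneg l.cast_nonneg _
  have hw : 0 ≤ ((l : ℝ) - k) ^ (-3 / 2 : ℝ) := Real.rpow_nonneg hm.le _
  rw [hsq, hprod]
  set x := ((l : ℝ) - k) ^ (-1 / 2 : ℝ)
  have hsum : |δ k l + c * x| ≤ (2 * c + 2 * C) * x := by
    refine (abs_add_le _ _).trans ?_
    rw [abs_of_nonneg (mul_nonneg hc hx)]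
    linarith
  calc |δ k l ^ 2 - c ^ 2 * x ^ 2| = |δ k l - c * x| * |δ k l + c * x| := by
        rw [← abs_mul]; ring_nf
    _ ≤ C * ((l : ℝ) ^ (-1 / 2 : ℝ) + ((l : ℝ) - k) ^ (-3 / 2 : ℝ)) * ((2 * c + 2 * C) * x) :=
        mul_le_mul hnear hsum (abs_nonneg _) (mul_nonneg hC (add_nonneg hy hw))
    _ = _ := by ring

lemma abs_sum_sq_sub_log_le (hδ : HasCriticalDecay c C D δ) (hc : 0 ≤ c) (hC : 0 ≤ C) {n : ℕ}
    (hn : n < D) :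
    |∑ m ∈ Finset.range n, δ (n - m) (n + 1) ^ 2 - c ^ 2 * Real.log (n + 1)| ≤
      8 * C * (c + C) + c ^ 2 := by
  have hn0 : (0 : ℝ) < (n : ℝ) + 1 := by positivity
  have hterm : ∀ m ∈ Finset.range n, |δ (n - m) (n + 1) ^ 2 - c ^ 2 * ((m : ℝ) + 1)⁻¹| ≤
      C * (2 * c + 2 * C) * (((n : ℝ) + 1) ^ (-1 / 2 : ℝ) * ((m : ℝ) + 1) ^ (1 / 2 - 1 : ℝ) +
        (((m : ℝ) + 1) ^ 2)⁻¹) := fun m hm => by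
    rw [Finset.mem_range] at hm
    have hsub : ((n + 1 : ℕ) : ℝ) - ((n - m : ℕ) : ℝ) = m + 1 := by
      rw [Nat.cast_sub hm.le]; push_cast; ring
    have := hδ.abs_sq_sub_le hc hC (Finset.mem_Icc.2 ⟨by omega, by omega⟩)
      (Finset.mem_Icc.2 ⟨by omega, by omega⟩) (by omega : n - m < n + 1)
    rw [hsub] at this
    norm_num at this ⊢
    exact this
  have hcross : ((n : ℝ) + 1) ^ (-1 / 2 : ℝ) *
      ∑ m ∈ Finset.range n, ((m : ℝ) + 1) ^ (1 / 2 - 1 : ℝ) ≤ 2 := by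
    calc _ ≤ ((n : ℝ) + 1) ^ (-1 / 2 : ℝ) * (((n : ℝ) + 1) ^ (1 / 2 : ℝ) / (1 / 2)) := by
          gcongr
          refine (sum_range_rpow_sub_one_le (by norm_num) (by norm_num) n).trans ?_
          gcongr
          linarith
      _ = ((n : ℝ) + 1) ^ (-1 / 2 + 1 / 2 : ℝ) * 2 := by rw [Real.rpow_add hn0]; ring
      _ = 2 := by norm_num
  have hsum : |∑ m ∈ Finset.range n, δ (n - m) (n + 1) ^ 2 -
      c ^ 2 * ∑ m ∈ Finset.range n, ((m : ℝ) + 1)⁻¹| ≤ C * (2 * c + 2 * C) * (2 + 2) := by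
    rw [Finset.mul_sum, ← Finset.sum_sub_distrib]
    refine (Finset.abs_sum_le_sum_abs _ _).trans ((Finset.sum_le_sum hterm).trans ?_)
    rw [← Finset.mul_sum, Finset.sum_add_distrib, ← Finset.mul_sum]
    exact mul_le_mul_of_nonneg_left (add_le_add hcross (sum_range_inv_sq_le n)) (by positivity)
  refine (_root_.abs_sub_le _ (c ^ 2 * ∑ m ∈ Finset.range n, ((m : ℝ) + 1)⁻¹) _).trans ?_
  rw [← mul_sub, abs_mul, abs_of_nonneg (sq_nonneg c)]
  linarith [mul_le_mul_of_nonneg_left (abs_sum_range_inv_sub_log_le n) (sq_nonneg c)]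

lemma corrSq_eq (hδ : HasCriticalDecay c C D δ) :
    corrSq (fun k l : Finset.Icc 1 D => δ k l) =
      ∑ n ∈ Finset.range D, (1 + 2 * ∑ m ∈ Finset.range n, δ (n - m) (n + 1) ^ 2) := by
  have hsymm := sum_Icc_sum_Icc_of_symm (f := fun k l => δ k l ^ 2) (fun k l => by rw [hδ.symm]) D
  simp only [hδ.diag, one_pow] at hsymm
  rw [← hsymm, corrSq, ← Finset.sum_coe_sort (Finset.Icc 1 D) fun k =>
    ∑ l ∈ Finset.Icc 1 D, δ k l ^ 2]
  exact Finset.sum_congr rfl fun k _ => Finset.sum_coe_sort (Finset.Icc 1 D) fun l => δ k l ^ 2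

lemma abs_corrSq_sub_le (hδ : HasCriticalDecay c C D δ) (hc : 0 ≤ c) (hC : 0 ≤ C) :
    |corrSq (fun k l : Finset.Icc 1 D => δ k l) - 2 * c ^ 2 * (D * Real.log D)| ≤
      (1 + 16 * C * (c + C) + 4 * c ^ 2) * D := by
  have hrow : ∀ n ∈ Finset.range D,
      |1 + 2 * ∑ m ∈ Finset.range n, δ (n - m) (n + 1) ^ 2 - 2 * c ^ 2 * Real.log (n + 1)| ≤
        1 + 2 * (8 * C * (c + C) + c ^ 2) := fun n hn => by
    have := abs_le.1 (hδ.abs_sum_sq_sub_log_le hc hC (Finset.mem_range.1 hn))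
    rw [abs_le]
    constructor <;> linarith [this.1, this.2]
  have hrows : |corrSq (fun k l : Finset.Icc 1 D => δ k l) -
      2 * c ^ 2 * Real.log D.factorial| ≤ D * (1 + 2 * (8 * C * (c + C) + c ^ 2)) := by
    rw [hδ.corrSq_eq, ← sum_range_log_add_one, Finset.mul_sum, ← Finset.sum_sub_distrib]
    refine (Finset.abs_sum_le_sum_abs _ _).trans ((Finset.sum_le_sum hrow).trans_eq ?_)
    rw [Finset.sum_const, Finset.card_range, nsmul_eq_mul]
  refine (_root_.abs_sub_le _ (2 * c ^ 2 * Real.log D.factorial) _).trans ?_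
  rw [← mul_sub, abs_mul, abs_of_nonneg (by positivity : 0 ≤ 2 * c ^ 2)]
  linarith [mul_le_mul_of_nonneg_left (abs_log_factorial_sub_le D)
    (by positivity : 0 ≤ 2 * c ^ 2)]

end HasCriticalDecay

section Rescaling

lemma abs_floor_mul_log_floor_sub_le {u : ℝ} (hu : 0 < u) :
    |(⌊u⌋₊ : ℝ) * Real.log ⌊u⌋₊ - u * Real.log u| ≤ 1 + u := by
  have hfloor_le := Nat.floor_le hu.le
  have hlt_floor := Nat.lt_floor_add_one u
  rcases lt_or_ge u 1 with hu1 | hu1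
  · rw [Nat.floor_eq_zero.2 hu1, Nat.cast_zero, zero_mul, zero_sub, abs_neg, mul_comm]
    linarith [Real.abs_log_mul_self_lt u hu hu1.le]
  have hD : (1 : ℝ) ≤ ⌊u⌋₊ := by exact_mod_cast Nat.floor_pos.2 hu1
  set D : ℝ := (⌊u⌋₊ : ℝ)
  have hlog_le : Real.log D ≤ Real.log u := Real.log_le_log (by linarith) hfloor_le
  have hratio : D * (Real.log u - Real.log D) ≤ u - D := by
    rw [← Real.log_div (by linarith) (by linarith)]
    calc D * Real.log (u / D) ≤ D * (u / D - 1) := by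
          gcongr; exact Real.log_le_sub_one_of_pos (by positivity)
      _ = u - D := by field_simp
  have hlogu : 0 ≤ Real.log u := Real.log_nonneg hu1
  have hlogu_le : Real.log u ≤ u - 1 := Real.log_le_sub_one_of_pos hu
  have hlast : (u - D) * Real.log u ≤ 1 * Real.log u := by gcongr; linarith
  have hlast_nonneg : 0 ≤ (u - D) * Real.log u := mul_nonneg (by linarith) hlogu
  have hfirst_nonneg : 0 ≤ D * (Real.log u - Real.log D) :=
    mul_nonneg (by linarith) (by linarith)
  rw [abs_le]
  constructor <;> linarith

lemma abs_floor_mul_log_floor_sub_mul_log_le {x d : ℝ} (hx : 0 < x) (hd : 1 ≤ d) :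
    |(⌊d * x⌋₊ : ℝ) * Real.log ⌊d * x⌋₊ - x * (d * Real.log d)| ≤
      (1 + x * (1 + |Real.log x|)) * d := by
  have hd0 : 0 < d := by linarith
  refine (abs_sub_le _ (d * x * Real.log (d * x)) _).trans ?_
  have hlog : d * x * Real.log (d * x) - x * (d * Real.log d) = d * x * Real.log x := by
    rw [Real.log_mul hd0.ne' hx.ne']; ring
  rw [hlog, abs_mul, abs_of_pos (mul_pos hd0 hx)]
  linarith [abs_floor_mul_log_floor_sub_le (mul_pos hd0 hx)]

namespace HasCriticalDecay

variable {c C x d : ℝ} {δ : ℕ → ℕ → ℝ}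

lemma corrFour_floor_le (hδ : HasCriticalDecay c C ⌊d * x⌋₊ δ) (hc : 0 ≤ c) (hC : 0 ≤ C)
    (hx : 0 ≤ x) (hd : 0 ≤ d) :
    corrFour (fun k l : Finset.Icc 1 ⌊d * x⌋₊ => δ k l) ≤
      216 * (1 + 2 * (c + 2 * C)) ^ 4 * x ^ 2 * d ^ 2 := by
  calc _ ≤ 216 * (1 + 2 * (c + 2 * C)) ^ 4 * (⌊d * x⌋₊ : ℝ) ^ 2 := hδ.corrFour_le hc hC
    _ ≤ 216 * (1 + 2 * (c + 2 * C)) ^ 4 * (d * x) ^ 2 := by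
      gcongr
      exact Nat.floor_le (by positivity)
    _ = 216 * (1 + 2 * (c + 2 * C)) ^ 4 * x ^ 2 * d ^ 2 := by ring

lemma abs_corrSq_floor_sub_le (hδ : HasCriticalDecay c C ⌊d * x⌋₊ δ) (hc : 0 ≤ c) (hC : 0 ≤ C)
    (hx : 0 < x) (hd : 1 ≤ d) :
    |corrSq (fun k l : Finset.Icc 1 ⌊d * x⌋₊ => δ k l) - 2 * c ^ 2 * x * (d * Real.log d)| ≤
      ((1 + 16 * C * (c + C) + 4 * c ^ 2) * x +
        2 * c ^ 2 * (1 + x * (1 + |Real.log x|))) * d := by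
  have hfloor : (⌊d * x⌋₊ : ℝ) ≤ d * x := Nat.floor_le (by positivity)
  refine (_root_.abs_sub_le _
    (2 * c ^ 2 * ((⌊d * x⌋₊ : ℝ) * Real.log ⌊d * x⌋₊)) _).trans ?_
  rw [mul_assoc (2 * c ^ 2), ← mul_sub, abs_mul, abs_of_nonneg (by positivity : 0 ≤ 2 * c ^ 2)]
  calc _ ≤ (1 + 16 * C * (c + C) + 4 * c ^ 2) * (d * x) +
        2 * c ^ 2 * ((1 + x * (1 + |Real.log x|)) * d) :=
        add_le_add ((hδ.abs_corrSq_sub_le hc hC).trans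
            (mul_le_mul_of_nonneg_left hfloor (by positivity)))
          (mul_le_mul_of_nonneg_left (abs_floor_mul_log_floor_sub_mul_log_le hx hd)
            (by positivity))
    _ = _ := by ring

end HasCriticalDecay

end Rescaling

namespace SelfSimilarHyp

variable {β lam ν : ℝ} {φ ψ : ℝ → ℝ}

lemma exists_hasCriticalDecay (hyp : SelfSimilarHyp β lam (3 / 2) ν φ ψ)
    (hpos : ∀ k, 0 < covΔ β φ k k) :
    ∃ C, 0 ≤ C ∧ ∀ D : ℕ,
      (∀ k ∈ Finset.Icc 1 D, ∀ l ∈ Finset.Icc 1 D, |covδ β φ k l| ≤ 1) →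
        HasCriticalDecay (3 / 8) C D (covδ β φ) := by
  obtain ⟨C, hC, hφ⟩ := hyp.exists_hasIncrementExpansion (by norm_num)
  have ⟨⟨_, hβ⟩, hlam, ⟨_, hαβ⟩, _⟩ := hyp
  obtain ⟨K, hK, happrox⟩ := hφ.exists_abs_covδ_sub_le hC hlam (by norm_num) (by norm_num) hαβ
    (by linarith) hpos
  refine ⟨K + 2, by positivity, fun D hone => ⟨fun k => covδ_self (hpos k),
    covδ_comm, fun k hk l hl hkl => ?_⟩⟩
  rcases (Nat.succ_le_of_lt hkl).eq_or_lt with rfl | hlt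
  · have hgap : ((k.succ : ℕ) : ℝ) - k = 1 := by push_cast; ring
    have hpow : 0 ≤ ((k.succ : ℕ) : ℝ) ^ (-1 / 2 : ℝ) := Real.rpow_nonneg (Nat.cast_nonneg _) _
    have hentry := abs_le.1 (hone k hk _ hl)
    rw [hgap, Real.one_rpow, Real.one_rpow, abs_le]
    constructor <;> nlinarith [hentry.1, hentry.2]
  · have hm : 0 ≤ ((l : ℝ) - k) ^ (-3 / 2 : ℝ) :=
      Real.rpow_nonneg (sub_nonneg.2 (by exact_mod_cast hkl.le)) _
    have hl0 : 0 ≤ (l : ℝ) ^ (-1 / 2 : ℝ) := Real.rpow_nonneg l.cast_nonneg _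
    have hbound := happrox k l (Finset.mem_Icc.1 hk).1 hlt
    norm_num at hbound hm hl0 ⊢
    linarith

lemma exists_corrFour_corrSq_le (hyp : SelfSimilarHyp β lam (3 / 2) ν φ ψ)
    (hpos : ∀ k, 0 < covΔ β φ k k) {x : ℝ} (hx : 0 < x) :
    ∃ K₄ K₂, 0 ≤ K₄ ∧ 0 < K₂ ∧ ∀ d : ℝ, 1 ≤ d →
      (∀ k ∈ Finset.Icc 1 ⌊d * x⌋₊, ∀ l ∈ Finset.Icc 1 ⌊d * x⌋₊, |covδ β φ k l| ≤ 1) →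
        corrFour (fun k l : Finset.Icc 1 ⌊d * x⌋₊ => covδ β φ k l) ≤ K₄ * d ^ 2 ∧
        |corrSq (fun k l : Finset.Icc 1 ⌊d * x⌋₊ => covδ β φ k l) -
          9 * x / 32 * (d * Real.log d)| ≤ K₂ * d := by
  obtain ⟨C, hC, hdecay⟩ := hyp.exists_hasCriticalDecay hpos
  refine ⟨216 * (1 + 2 * (3 / 8 + 2 * C)) ^ 4 * x ^ 2,
    (1 + 16 * C * (3 / 8 + C) + 4 * (3 / 8) ^ 2) * x +
      2 * (3 / 8) ^ 2 * (1 + x * (1 + |Real.log x|)), by positivity, by positivity,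
    fun d hd hone =>
      ⟨(hdecay _ hone).corrFour_floor_le (by norm_num) hC hx.le (by linarith), ?_⟩⟩
  have hsq := (hdecay _ hone).abs_corrSq_floor_sub_le (by norm_num) hC hx hd
  rwa [show 2 * (3 / 8 : ℝ) ^ 2 * x = 9 * x / 32 by ring] at hsq

end SelfSimilarHyp

lemma sqrt_wishart_error_le {n : ℕ} (hn : 1 ≤ n) {d L r T₄ T₂ K₄ K₂ : ℝ} (hd : 0 < d)
    (hL : 0 < L) (hr : 0 < r) (hK₄ : 0 ≤ K₄) (hT₄ : T₄ ≤ K₄ * d ^ 2)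
    (hT₂ : |T₂ - r * (d * L)| ≤ K₂ * d) :
    √(r * (n + 1) * (((√(d * L))⁻¹ ^ 2 * r⁻¹) ^ 2 * (n * (n + 1) * T₄) +
      n * ((√(d * L))⁻¹ ^ 2 * r⁻¹ * T₂ - 1) ^ 2)) ≤
        √(2 * (2 * K₄ + K₂ ^ 2) / r) * (n : ℝ) ^ (3 / 2 : ℝ) / L := by
  have hn1 : (1 : ℝ) ≤ n := by exact_mod_cast hn
  have hscale : (√(d * L))⁻¹ ^ 2 * r⁻¹ = (r * (d * L))⁻¹ := by
    rw [inv_pow, Real.sq_sqrt (by positivity), mul_inv r, mul_comm]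
  have hfour : ((r * (d * L))⁻¹) ^ 2 * T₄ ≤ K₄ / (r * L) ^ 2 := by
    calc ((r * (d * L))⁻¹) ^ 2 * T₄ ≤ ((r * (d * L))⁻¹) ^ 2 * (K₄ * d ^ 2) := by gcongr
      _ = K₄ / (r * L) ^ 2 := by field_simp
  have htwo : ((r * (d * L))⁻¹ * T₂ - 1) ^ 2 ≤ K₂ ^ 2 / (r * L) ^ 2 := by
    have heq : (r * (d * L))⁻¹ * T₂ - 1 = (T₂ - r * (d * L)) / (r * (d * L)) := by field_simp
    rw [heq, div_pow, ← sq_abs]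
    calc |T₂ - r * (d * L)| ^ 2 / (r * (d * L)) ^ 2 ≤ (K₂ * d) ^ 2 / (r * (d * L)) ^ 2 := by gcongr
      _ = K₂ ^ 2 / (r * L) ^ 2 := by field_simp
  have hpow : ((n : ℝ) ^ (3 / 2 : ℝ)) ^ 2 = (n : ℝ) ^ 3 := by
    rw [← Real.rpow_mul_natCast (by positivity), ← Real.rpow_natCast]; norm_num
  refine Real.sqrt_le_iff.2 ⟨by positivity, ?_⟩
  rw [hscale]
  calc r * (n + 1) * (((r * (d * L))⁻¹) ^ 2 * (n * (n + 1) * T₄) +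
        n * ((r * (d * L))⁻¹ * T₂ - 1) ^ 2)
      = r * (n + 1) * (n * (n + 1) * (((r * (d * L))⁻¹) ^ 2 * T₄) +
        n * ((r * (d * L))⁻¹ * T₂ - 1) ^ 2) := by ring
    _ ≤ r * (n + 1) * (n * (n + 1) * (K₄ / (r * L) ^ 2) + n * (K₂ ^ 2 / (r * L) ^ 2)) := by
      gcongr
    _ ≤ r * (n + n) * (n * (n + n) * (K₄ / (r * L) ^ 2) + n * n * (K₂ ^ 2 / (r * L) ^ 2)) := by
      gcongr
      nlinarith
    _ = 2 * (2 * K₄ + K₂ ^ 2) / r * (n : ℝ) ^ 3 / L ^ 2 := by field_simp; ring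
    _ = (√(2 * (2 * K₄ + K₂ ^ 2) / r) * (n : ℝ) ^ (3 / 2 : ℝ) / L) ^ 2 := by
      rw [div_pow, mul_pow, hpow, Real.sq_sqrt (by positivity)]

/-- for `α = 3/2` (so `β ∈ [3/4,1)`) there is a constant `C > 0`,
depending only on `φ, ψ, β, λ, a, b, x` (not on `n` or `d`), such that for all
`n ≥ 1`, `d ≥ 3`, `d_W(W̃_{n,⌊dx⌋}, Z̃_n) ≤ C n^{3/2} / ln d`, where `W̃` has
entries `(d ln d)^{−1/2} Σ_{k=1}^{⌊dx⌋}(Y^i_k Y^j_k − 1_{i=j})` and `Z̃_n` is the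
GOE matrix with entry variances `ρ² = 9x/32` (resp. `2ρ²` on the diagonal). -/
theorem wishart_central_convergence_threehalf (β lam α ν : ℝ) (φ ψ : ℝ → ℝ)
    (hyp : SelfSimilarHyp β lam α ν φ ψ)
    (hΔpos : ∀ k : ℕ, 0 < covΔ β φ k k)
    (hα : α = 3 / 2)
    (a b x : ℝ) (ha : 0 < a) (hab : a < b) (hx : x ∈ Set.Icc a b) :
    ∃ C : ℝ, 0 < C ∧
      ∀ (n d : ℕ), 1 ≤ n → 3 ≤ d →
      ∀ (Ω₁ Ω₂ : Type) (_ : MeasurableSpace Ω₁) (_ : MeasurableSpace Ω₂)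
        (P₁ : Measure Ω₁) (P₂ : Measure Ω₂),
        IsProbabilityMeasure P₁ → IsProbabilityMeasure P₂ →
      -- the underlying Gaussian entries `Y^i_k`
      ∀ Y : Fin n → ℕ → Ω₁ → ℝ,
        (∀ (i : Fin n) (k : ℕ), Measurable (Y i k)) →
        IsCenteredGaussianFamily P₁ (fun p : Fin n × ℕ => Y p.1 p.2) →
        (∀ (i j : Fin n) (k l : ℕ),
          k ∈ Finset.Icc 1 ⌊(d : ℝ) * x⌋₊ → l ∈ Finset.Icc 1 ⌊(d : ℝ) * x⌋₊ →
          ∫ ω, Y i k ω * Y j l ω ∂P₁ = if i = j then covδ β φ k l else 0) →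
      -- a GOE matrix `Z̃_n` with entry variances `ρ² = 9x/32` (resp. `2ρ²`)
      ∀ Z : Ω₂ → Matrix (Fin n) (Fin n) ℝ,
        (∀ i j : Fin n, Measurable fun ω => Z ω i j) →
        (∀ (ω : Ω₂) (i j : Fin n), Z ω i j = Z ω j i) →
        (∀ i : Fin n, P₂.map (fun ω => Z ω i i)
          = gaussianReal 0 (Real.toNNReal (2 * (9 * x / 32)))) →
        (∀ i j : Fin n, i ≠ j → P₂.map (fun ω => Z ω i j)
          = gaussianReal 0 (Real.toNNReal (9 * x / 32))) →
        iIndepFun (m := fun _ => (inferInstance : MeasurableSpace ℝ))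
          (fun (p : {p : Fin n × Fin n // p.1 ≤ p.2}) ω => Z ω p.1.1 p.1.2) P₂ →
        wassersteinDist P₁ P₂
          (fun ω => Matrix.of fun i j : Fin n =>
            (Real.sqrt ((d : ℝ) * Real.log d))⁻¹ * ∑ k ∈ Finset.Icc 1 ⌊(d : ℝ) * x⌋₊,
              (Y i k ω * Y j k ω - if i = j then 1 else 0))
          Z
        ≤ C * (n : ℝ) ^ ((3 : ℝ) / 2) / Real.log d := by
  subst hα
  have hx0 : 0 < x := ha.trans_le hx.1
  have hr : 0 < 9 * x / 32 := by positivity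
  obtain ⟨K₄, K₂, hK₄, hK₂, hsums⟩ := hyp.exists_corrFour_corrSq_le hΔpos hx0
  refine ⟨Real.pi / 2 * √(2 * (2 * K₄ + K₂ ^ 2) / (9 * x / 32)), by positivity, ?_⟩
  intro n d hn hd Ω₁ Ω₂ _ _ P₁ P₂ _ _ Y hYmeas hY hcov Z hZmeas hZsymm hZdiag hZoff hZindep
  have hd1 : (1 : ℝ) < d := by exact_mod_cast (by omega : 1 < d)
  have hrow : ∀ k ∈ Finset.Icc 1 ⌊(d : ℝ) * x⌋₊, ∀ l ∈ Finset.Icc 1 ⌊(d : ℝ) * x⌋₊,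
      ∫ ω, Y ⟨0, hn⟩ k ω * Y ⟨0, hn⟩ l ω ∂P₁ = covδ β φ k l := fun k hk l hl => by
    rw [hcov _ _ k l hk hl, if_pos rfl]
  obtain ⟨hfour, hsq⟩ := hsums d hd1.le fun k hk l hl => hrow k hk l hl ▸
    abs_integral_mul_le_one ((hrow k hk k hk).trans (covδ_self (hΔpos k)))
      ((hrow l hl l hl).trans (covδ_self (hΔpos l)))
  have hgoe := isCenteredGaussian_goe hr.le hZmeas hZsymm hZdiag hZoff hZindep
  have hwishart := wassersteinDist_wishart_le (fun k => covδ_self (hΔpos k)) covδ_comm hYmeas hY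
    (fun i j k hk l hl => hcov i j k l hk hl) hr hgoe (√(d * Real.log d))⁻¹
  rw [Fintype.card_fin] at hwishart
  have herror := sqrt_wishart_error_le hn (by linarith) (Real.log_pos hd1) hr hK₄ hfour hsq
  rw [mul_assoc, mul_div_assoc]
  exact hwishart.trans (by gcongr)
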